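/- arXiv:0902.4723 — 2 statements merged into one kernel-verified Lean document; each statement's English description precedes it below -/
import Mathlib

section
/- The set of codes of finite term rewriting systems R (over finite signatures) such that R is weakly normalizing on every term is Π⁰₂-complete. -/
/-!
Membership in `Π⁰₂`. The relations `→`, `→*` and being well-formed are given by finitely many
inductive clauses, and a predicate inductively defined by recursively enumerable clauses is
recursively enumerable, a derivation being a finite certificate (`WNUniform.RE.der`). Being a normal
form and being ill-formed are treated in the same way; the point is that failure of matching is
witnessed by a clash of symbols or by two different values for one variable
(`WNUniform.not_match_iff`). Hence `WN` on a single term is recursively enumerable, and `WN` on all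
terms is a universal quantifier over it, terms being in bijection with `ℕ`.

Hardness. A `Π⁰₂` set can be written `{n | ∀ x, ∃ k, f (n, x, k) = 0}` with `f` primitive recursive
(`WNUniform.Pi02.exists_primrec`). Rewriting rules for an applicative language of programs compute
every primitive recursive function (`WNUniform.exists_computes`), and a program is consumed as it
runs, so these rules normalize all terms, including the ill-formed ones (`WNUniform.wnon_ap`). With a
program `c` for `f` they are extended by a search loop

* `chk (s y) x → chk y x` and `chk 0 x → srch x 0`,
* `srch x k → srch x (s k)` and `srch x k → tst (c (n, x, k)) x`,
* `tst 0 x → 0` and `tst z x → chk x x`.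

No term `srch x k` or `tst z x` is a normal form, so for a numeral `x` the term `chk x x` has a
normal form iff some `k` satisfies `f (n, x, k) = 0`. Failure is proved with a semantics of terms
that is invariant under rewriting (`WNUniform.sem_rewrite`): candidates keep denoting numerals, hence
tests never denote zero. If all searches succeed, then an innermost strategy normalizes every term: a
search begun with an arbitrary candidate is restarted as `chk x x`, and if `x` is not a numeral,
that term gets stuck after the successors of its first argument have been removed
(`WNUniform.wnon_of_total`). Thus the restarts, together with the check that `x` is a numeral,
prevent junk terms from spoiling uniform weak normalization.
-/

/-- First-order terms over the fixed countably infinite set of variables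
(named by naturals): a term is a variable or a function symbol (named by a
natural number) applied to a list of argument terms. -/
inductive Term : Type
  | var : ℕ → Term
  | app : ℕ → List Term → Term

namespace Term

/-- Homomorphic application of a substitution (a map from variables to terms). -/
def subst (σ : ℕ → Term) : Term → Term
  | var n => σ n
  | app f ts => app f (ts.attach.map (fun x => subst σ x.1))
decreasing_by
  have := List.sizeOf_lt_of_mem x.2
  simp only [Term.app.sizeOf_spec]; omega

/-- An injective encoding of terms into the natural numbers. -/
def encode : Term → ℕ
  | var n => Nat.pair 0 n
  | app f ts => Nat.pair (f + 1) (Encodable.encode (ts.attach.map (fun x => encode x.1)))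
decreasing_by
  have := List.sizeOf_lt_of_mem x.2
  simp only [Term.app.sizeOf_spec]; omega

end Term

/-- `IsVarOf n t` holds iff the variable `n` occurs in the term `t`. -/
inductive IsVarOf (n : ℕ) : Term → Prop
  | var : IsVarOf n (.var n)
  | app {f : ℕ} {ts : List Term} {t : Term} : t ∈ ts → IsVarOf n t → IsVarOf n (.app f ts)

/-- A term is ground if no variable occurs in it. -/
def Ground (t : Term) : Prop := ∀ n : ℕ, ¬ IsVarOf n t

/-- A (finite) signature is presented by a finite list of pairs
(function symbol, arity); `WFSig` states that each symbol has a unique arity. -/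
def WFSig (sig : List (ℕ × ℕ)) : Prop :=
  ∀ p ∈ sig, ∀ q ∈ sig, p.1 = q.1 → p.2 = q.2

/-- `WFTerm sig t`: `t` is a term over the signature `sig`, i.e. every function
symbol occurring in `t` belongs to `sig` and is applied to the correct number
of arguments. -/
inductive WFTerm (sig : List (ℕ × ℕ)) : Term → Prop
  | var (n : ℕ) : WFTerm sig (.var n)
  | app {f : ℕ} {ts : List Term} : (f, ts.length) ∈ sig →
      (∀ t ∈ ts, WFTerm sig t) → WFTerm sig (.app f ts)

/-- `WFTRS sig R`: the finite list of rules `R` is a term rewriting system over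
the signature `sig`: `sig` assigns unique arities, both sides of every rule are
terms over `sig`, no left-hand side is a variable, and every variable occurring
in a right-hand side occurs in the corresponding left-hand side. -/
def WFTRS (sig : List (ℕ × ℕ)) (R : List (Term × Term)) : Prop :=
  WFSig sig ∧ ∀ p ∈ R, WFTerm sig p.1 ∧ WFTerm sig p.2 ∧
    (∀ n : ℕ, p.1 ≠ .var n) ∧ (∀ n : ℕ, IsVarOf n p.2 → IsVarOf n p.1)

/-- The one-step rewrite relation `→_R` of a TRS `R`: application of a rule
under a substitution, closed under arbitrary one-hole contexts (i.e. embedded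
at any argument position at any depth). -/
inductive Rewrite (R : List (Term × Term)) : Term → Term → Prop
  | rule (l r : Term) (σ : ℕ → Term) (h : (l, r) ∈ R) :
      Rewrite R (l.subst σ) (r.subst σ)
  | congr (f : ℕ) (ts₁ ts₂ : List Term) (t t' : Term) (h : Rewrite R t t') :
      Rewrite R (.app f (ts₁ ++ t :: ts₂)) (.app f (ts₁ ++ t' :: ts₂))

/-- Many-step rewriting `→*_R` (reflexive-transitive closure of `→_R`). -/
def Reduces (R : List (Term × Term)) : Term → Term → Prop :=
  Relation.ReflTransGen (Rewrite R)

/-- `t` is a normal form of `R` (admits no `→_R`-step). -/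
def NormalForm (R : List (Term × Term)) (t : Term) : Prop := ∀ u : Term, ¬ Rewrite R t u

/-- `R` is strongly normalizing (terminating) on `t`:
no infinite rewrite sequence starts at `t`. -/
def SNon (R : List (Term × Term)) (t : Term) : Prop :=
  ¬ ∃ f : ℕ → Term, f 0 = t ∧ ∀ n : ℕ, Rewrite R (f n) (f (n + 1))

/-- `R` is weakly normalizing on `t`: some reduction from `t` ends in a normal form. -/
def WNon (R : List (Term × Term)) (t : Term) : Prop :=
  ∃ s : Term, Reduces R t s ∧ NormalForm R s

/-- `R` is confluent (Church-Rosser) on `t`. -/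
def CRon (R : List (Term × Term)) (t : Term) : Prop :=
  ∀ t₁ t₂ : Term, Reduces R t t₁ → Reduces R t t₂ →
    ∃ d : Term, Reduces R t₁ d ∧ Reduces R t₂ d

/-- `R` is weakly confluent (weakly Church-Rosser) on `t`. -/
def WCRon (R : List (Term × Term)) (t : Term) : Prop :=
  ∀ t₁ t₂ : Term, Rewrite R t t₁ → Rewrite R t t₂ →
    ∃ d : Term, Reduces R t₁ d ∧ Reduces R t₂ d

/-- A root step `s →_{R,ε} t`: `s = ℓσ` and `t = rσ` for some rule `ℓ → r` of `R`. -/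
def RootStep (R : List (Term × Term)) (s t : Term) : Prop :=
  ∃ (l r : Term) (σ : ℕ → Term), (l, r) ∈ R ∧ s = l.subst σ ∧ t = r.subst σ

/-- Code of a rewrite rule. -/
def encodeRule (p : Term × Term) : ℕ := Nat.pair p.1.encode p.2.encode

/-- Code of a finite TRS. -/
def encodeTRS (R : List (Term × Term)) : ℕ := Encodable.encode (R.map encodeRule)

/-- Code of a finite signature. -/
def encodeSig (sig : List (ℕ × ℕ)) : ℕ := Encodable.encode sig

/-- A set `A ⊆ ℕ` is Σ⁰₁ (recursively enumerable) if it is the domain of a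
partial computable function. -/
def Sigma01 (A : Set ℕ) : Prop :=
  ∃ f : ℕ →. ℕ, Nat.Partrec f ∧ ∀ n : ℕ, n ∈ A ↔ (f n).Dom

/-- `B` is many-one reducible to `A`: there is a total computable `g` with
`n ∈ B ↔ g n ∈ A` for all `n`. -/
def ManyOneRed (B A : Set ℕ) : Prop :=
  ∃ g : ℕ → ℕ, Computable g ∧ ∀ n : ℕ, n ∈ B ↔ g n ∈ A

/-- `A` is Σ⁰₁-complete. -/
def Sigma01Complete (A : Set ℕ) : Prop :=
  Sigma01 A ∧ ∀ B : Set ℕ, Sigma01 B → ManyOneRed B A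

/-- A set `A ⊆ ℕ` is Π⁰₂ if there is a decidable (computable) predicate
`P ⊆ ℕ³` with `n ∈ A ↔ ∀ x ∃ y, P n x y`. -/
def Pi02 (A : Set ℕ) : Prop :=
  ∃ p : ℕ → ℕ → ℕ → Bool,
    Computable (fun x : ℕ × ℕ × ℕ => p x.1 x.2.1 x.2.2) ∧
    ∀ n : ℕ, n ∈ A ↔ ∀ x : ℕ, ∃ y : ℕ, p n x y = true

/-- `A` is Π⁰₂-complete. -/
def Pi02Complete (A : Set ℕ) : Prop :=
  Pi02 A ∧ ∀ B : Set ℕ, Pi02 B → ManyOneRed B A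

/-- A set `A ⊆ ℕ` is Π¹₁ if there is a decidable (computable) predicate
`P ⊆ ℕ²` such that `n ∈ A` iff for every function `α : ℕ → ℕ` there exists
`k` with `P n ⟨α 0, …, α (k-1)⟩`, where `⟨·⟩` is the (computable) coding of
finite sequences of naturals. -/
def Pi11 (A : Set ℕ) : Prop :=
  ∃ p : ℕ → ℕ → Bool,
    Computable (fun x : ℕ × ℕ => p x.1 x.2) ∧
    ∀ n : ℕ, n ∈ A ↔ ∀ α : ℕ → ℕ, ∃ k : ℕ,
      p n (Encodable.encode (List.ofFn (fun i : Fin k => α i))) = true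

/-- `A` is Π¹₁-complete. -/
def Pi11Complete (A : Set ℕ) : Prop :=
  Pi11 A ∧ ∀ B : Set ℕ, Pi11 B → ManyOneRed B A

namespace WNUniform

open Primrec

/-! ### The coding of terms -/

theorem subst_app (σ : ℕ → Term) (f : ℕ) (ts : List Term) :
    (Term.app f ts).subst σ = .app f (ts.map (Term.subst σ)) := by
  rw [Term.subst]
  congr 1
  simp

theorem subst_var (σ : ℕ → Term) (n : ℕ) : (Term.var n).subst σ = σ n := by
  rw [Term.subst]

/-- Structural induction on terms, with the induction hypothesis for every argument. -/
theorem term_induction {P : Term → Prop} (var : ∀ n, P (.var n))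
    (app : ∀ f ts, (∀ t ∈ ts, P t) → P (.app f ts)) : ∀ t, P t
  | .var n => var n
  | .app f ts => app f ts fun t _ => term_induction var app t
decreasing_by
  have := List.sizeOf_lt_of_mem ‹_›
  simp only [Term.app.sizeOf_spec]; omega

theorem encode_var (n : ℕ) : (Term.var n).encode = Nat.pair 0 n := by
  rw [Term.encode]

theorem encode_app (f : ℕ) (ts : List Term) :
    (Term.app f ts).encode = Nat.pair (f + 1) (Encodable.encode (ts.map Term.encode)) := by
  rw [Term.encode]
  congr 2
  simp

theorem encode_injective : Function.Injective Term.encode := by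
  intro s
  induction s using term_induction with
  | var n =>
    rintro (m | ⟨g, us⟩) h
    · simpa [encode_var] using h
    · simp [encode_var, encode_app] at h
  | app f ts ih =>
    rintro (m | ⟨g, us⟩) h
    · simp [encode_var, encode_app] at h
    · simp only [encode_app, Nat.pair_eq_pair, add_left_inj, Encodable.encode_inj] at h
      obtain ⟨rfl, h⟩ := h
      congr 1
      induction ts generalizing us with
      | nil => simpa using h.symm
      | cons t ts iht =>
        cases us with
        | nil => simp at h
        | cons u us =>
          simp only [List.map_cons, List.cons.injEq] at h
          rw [ih t (by simp) h.1, iht (fun t ht => ih t (by simp [ht])) us h.2]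

/-- The entries of a list are smaller than its code, so that decoding can proceed recursively. -/
theorem encode_surjective : Function.Surjective Term.encode := by
  intro n
  induction n using Nat.strong_induction_on with
  | _ n ih =>
    obtain ⟨a, b, rfl⟩ : ∃ a b, n = Nat.pair a b := ⟨_, _, (Nat.pair_unpair n).symm⟩
    cases a with
    | zero => exact ⟨.var b, encode_var b⟩
    | succ f =>
      obtain ⟨l, rfl⟩ : ∃ l : List ℕ, Encodable.encode l = b :=
        ⟨Denumerable.ofNat _ b, Denumerable.encode_ofNat b⟩
      have key : ∀ l : List ℕ, (∀ m ∈ l, ∃ t : Term, t.encode = m) →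
          ∃ ts : List Term, ts.map Term.encode = l := by
        intro l
        induction l with
        | nil => exact fun _ => ⟨[], rfl⟩
        | cons m l ihl =>
          intro h
          obtain ⟨t, ht⟩ := h m (by simp)
          obtain ⟨ts, hts⟩ := ihl fun m hm => h m (by simp [hm])
          exact ⟨t :: ts, by simp [ht, hts]⟩
      have mem_le : ∀ l : List ℕ, ∀ m ∈ l, m < Encodable.encode l := by
        intro l
        induction l with
        | nil => simp
        | cons a l ihl =>
          intro m hm
          rw [Encodable.encode_list_cons]
          have h1 := Nat.left_le_pair (Encodable.encode a) (Encodable.encode l)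
          have h2 := Nat.right_le_pair (Encodable.encode a) (Encodable.encode l)
          simp only [Encodable.encode_nat] at h1 h2 ⊢
          rcases List.mem_cons.1 hm with rfl | hm
          · omega
          · have := ihl m hm
            omega
      obtain ⟨ts, hts⟩ := key l fun m hm =>
        ih m ((mem_le l m hm).trans_le (Nat.right_le_pair _ _))
      exact ⟨.app f ts, by rw [encode_app, hts]⟩

/-- The coding of terms is a bijection with `ℕ`. -/
noncomputable def termEquiv : Term ≃ ℕ :=
  Equiv.ofBijective Term.encode ⟨encode_injective, encode_surjective⟩

/-- Computability of functions on terms is understood through the given coding `Term.encode`. -/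
noncomputable instance : Primcodable Term := Primcodable.ofEquiv ℕ termEquiv

theorem encode_term (t : Term) : Encodable.encode t = t.encode := rfl

theorem encode_list_eq_map {α : Type*} [Encodable α] (l : List α) :
    Encodable.encode l = Encodable.encode (l.map Encodable.encode) := by
  induction l with
  | nil => rfl
  | cons a l ih => simp [ih]

theorem encodeTRS_eq (R : List (Term × Term)) : encodeTRS R = Encodable.encode R :=
  (encode_list_eq_map R).symm

theorem primrec_var : Primrec Term.var := by
  refine Primrec.encode_iff.1 ?_
  simp only [encode_term, encode_var]
  exact Primrec₂.natPair.comp (.const 0) .id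

theorem primrec_app {α : Type*} [Primcodable α] {f : α → ℕ} {ts : α → List Term}
    (hf : Primrec f) (hts : Primrec ts) : Primrec fun a => Term.app (f a) (ts a) := by
  refine Primrec.encode_iff.1 ?_
  have : ∀ l : List Term, Encodable.encode (l.map Term.encode) = Encodable.encode l :=
    fun l => (encode_list_eq_map l).symm
  simp only [encode_term, encode_app, this]
  exact Primrec₂.natPair.comp (Primrec.succ.comp hf) (Primrec.encode.comp hts)

/-! ### Closure properties of recursively enumerable predicates -/

/-- `RE p`: the predicate `p` is recursively enumerable, in the normal form
that asks for a natural number satisfying a primitive recursive condition. -/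
def RE {α : Type*} [Primcodable α] (p : α → Prop) : Prop :=
  ∃ q : α × ℕ → Prop, PrimrecPred q ∧ ∀ a, p a ↔ ∃ k, q (a, k)

section Closure

variable {α β : Type*} [Primcodable α] [Primcodable β]

theorem RE.of_primrec {p : α → Prop} (h : PrimrecPred p) : RE p :=
  ⟨fun x => p x.1, h.comp .fst, fun a => by simp⟩

theorem RE.of_iff {p q : α → Prop} (h : RE p) (hpq : ∀ a, q a ↔ p a) : RE q := by
  rwa [show q = p from funext fun a => propext (hpq a)]

theorem RE.comp {p : β → Prop} {f : α → β} (h : RE p) (hf : Primrec f) :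
    RE fun a => p (f a) := by
  obtain ⟨q, hq, h⟩ := h
  exact ⟨fun x => q (f x.1, x.2), hq.comp ((hf.comp .fst).pair .snd), fun a => h _⟩

theorem RE.comp₂ {γ : Type*} [Primcodable γ] {p : β → γ → Prop} {f : α → β} {g : α → γ}
    (h : RE fun x : β × γ => p x.1 x.2) (hf : Primrec f) (hg : Primrec g) :
    RE fun a => p (f a) (g a) :=
  RE.comp (f := fun a => (f a, g a)) h (hf.pair hg)

theorem RE.and {p q : α → Prop} (hp : RE p) (hq : RE q) : RE fun a => p a ∧ q a := by
  obtain ⟨p', hp', hp⟩ := hp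
  obtain ⟨q', hq', hq⟩ := hq
  refine ⟨fun x => p' (x.1, x.2.unpair.1) ∧ q' (x.1, x.2.unpair.2), ?_, fun a => ?_⟩
  · have h := Primrec.unpair.comp (Primrec.snd (α := α) (β := ℕ))
    exact (hp'.comp (Primrec.fst.pair (Primrec.fst.comp h))).and
      (hq'.comp (Primrec.fst.pair (Primrec.snd.comp h)))
  · beta_reduce
    rw [hp, hq]
    constructor
    · rintro ⟨⟨i, hi⟩, j, hj⟩
      exact ⟨Nat.pair i j, by simpa using ⟨hi, hj⟩⟩
    · rintro ⟨k, h1, h2⟩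
      exact ⟨⟨_, h1⟩, _, h2⟩

theorem RE.or {p q : α → Prop} (hp : RE p) (hq : RE q) : RE fun a => p a ∨ q a := by
  obtain ⟨p', hp', hp⟩ := hp
  obtain ⟨q', hq', hq⟩ := hq
  exact ⟨fun x => p' x ∨ q' x, hp'.or hq', fun a => by beta_reduce; rw [hp, hq, exists_or]⟩

theorem RE.ex {p : α → β → Prop} (h : RE fun x : α × β => p x.1 x.2) :
    RE fun a => ∃ b, p a b := by
  obtain ⟨q, hq, h⟩ := h
  refine ⟨fun x => ∃ b ∈ (Encodable.decode (α := β) x.2.unpair.1).toList,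
    q ((x.1, b), x.2.unpair.2), ?_, fun a => ?_⟩
  · have h := Primrec.unpair.comp (Primrec.snd (α := α) (β := ℕ))
    have hR : PrimrecRel fun (b : β) (x : α × ℕ) => q ((x.1, b), x.2) :=
      hq.comp (((Primrec.fst.comp .snd).pair .fst).pair (Primrec.snd.comp .snd))
    have hL : Primrec fun x : α × ℕ => (Encodable.decode (α := β) x.2.unpair.1).toList := by
      have : Primrec fun o : Option β => o.toList := by
        refine (Primrec.option_casesOn .id (.const []) (g := fun _ b => [b])
          (Primrec.list_cons.comp .snd (.const [])).to₂).of_eq fun o => ?_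
        cases o <;> rfl
      exact this.comp (Primrec.decode.comp (Primrec.fst.comp h))
    exact hR.exists_mem_list.comp hL (Primrec.fst.pair (Primrec.snd.comp h))
  · constructor
    · rintro ⟨b, hb⟩
      obtain ⟨k, hk⟩ := (h (a, b)).1 hb
      exact ⟨Nat.pair (Encodable.encode b) k, b, by simp, by simpa using hk⟩
    · rintro ⟨k, b, -, hb⟩
      exact ⟨b, (h (a, b)).2 ⟨_, hb⟩⟩

/-- Bounded universal quantification: finitely many witnesses have a common bound. -/
theorem RE.all_mem {p : α → β → Prop} {L : α → List β} (hL : Primrec L)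
    (h : RE fun x : α × β => p x.1 x.2) : RE fun a => ∀ b ∈ L a, p a b := by
  obtain ⟨q, hq, h⟩ := h
  refine ⟨fun x => ∀ b ∈ L x.1, ∃ j ∈ List.range x.2, q ((x.1, b), j), ?_, fun a => ?_⟩
  · have h1 : PrimrecRel fun (j : ℕ) (y : β × α) => q ((y.2, y.1), j) :=
      hq.comp (((Primrec.snd.comp .snd).pair (Primrec.fst.comp .snd)).pair .fst)
    have h2 : PrimrecRel fun (b : β) (x : α × ℕ) => ∃ j ∈ List.range x.2, q ((x.1, b), j) :=
      PrimrecPred.comp (f := fun y : β × α × ℕ => (List.range y.2.2, y.1, y.2.1)) h1.exists_mem_list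
        ((Primrec.list_range.comp (Primrec.snd.comp .snd)).pair
          (Primrec.fst.pair (Primrec.fst.comp .snd)))
    exact h2.forall_mem_list.comp (hL.comp .fst) .id
  · simp only [List.mem_range]
    have : ∀ l : List β, (∀ b ∈ l, p a b) ↔ ∃ k, ∀ b ∈ l, ∃ j < k, q ((a, b), j) := by
      intro l
      constructor
      · intro hl
        induction l with
        | nil => exact ⟨0, by simp⟩
        | cons b l ih =>
          obtain ⟨k, hk⟩ := ih fun b hb => hl b (by simp [hb])
          obtain ⟨j, hj⟩ := (h (a, b)).1 (hl b (by simp))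
          refine ⟨max k (j + 1), fun b' hb' => ?_⟩
          rcases List.mem_cons.1 hb' with rfl | hb'
          · exact ⟨j, by omega, hj⟩
          · obtain ⟨i, hi, hi'⟩ := hk b' hb'
            exact ⟨i, by omega, hi'⟩
      · rintro ⟨k, hk⟩ b hb
        obtain ⟨j, -, hj⟩ := hk b hb
        exact (h (a, b)).2 ⟨j, hj⟩
    exact this (L a)

theorem RE.eq {f g : α → β} (hf : Primrec f) (hg : Primrec g) : RE fun a => f a = g a :=
  .of_primrec (Primrec.eq.comp hf hg)

theorem RE.ne {f g : α → β} (hf : Primrec f) (hg : Primrec g) : RE fun a => f a ≠ g a :=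
  .of_primrec (Primrec.eq.comp hf hg).not

theorem RE.lt {f g : α → ℕ} (hf : Primrec f) (hg : Primrec g) : RE fun a => f a < g a :=
  .of_primrec (Primrec.nat_lt.comp hf hg)

theorem primrecPred_mem {f : α → β} {L : α → List β} (hf : Primrec f) (hL : Primrec L) :
    PrimrecPred fun a => f a ∈ L a :=
  ((PrimrecRel.exists_mem_list (R := fun b b' : β => b = b') Primrec.eq).comp hL hf).of_eq
    fun a => by simp

theorem RE.mem {f : α → β} {L : α → List β} (hf : Primrec f) (hL : Primrec L) :
    RE fun a => f a ∈ L a := .of_primrec (primrecPred_mem hf hL)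

theorem RE.notMem {f : α → β} {L : α → List β} (hf : Primrec f) (hL : Primrec L) :
    RE fun a => f a ∉ L a := .of_primrec (primrecPred_mem hf hL).not

end Closure

/-! ### Inductively defined predicates -/

/-- The predicate inductively defined by a family of clauses: whenever `J a L`, the conclusion `a`
holds as soon as all members of `L` do. -/
inductive Der {α : Type*} (J : α → List α → Prop) : α → Prop
  | mk (a : α) (L : List α) : J a L → (∀ b ∈ L, Der J b) → Der J a

/-- A certificate: a list of ranked elements in which each entry is the conclusion of a clause
whose premises occur in the list with smaller rank. -/
def Cert {α : Type*} (J : α → List α → Prop) (M : List (ℕ × α)) : Prop :=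
  ∀ x ∈ M, ∃ L, J x.2 L ∧ ∀ b ∈ L, ∃ j, j < x.1 ∧ (j, b) ∈ M

theorem Cert.append {α : Type*} {J : α → List α → Prop} {M N : List (ℕ × α)}
    (hM : Cert J M) (hN : Cert J N) : Cert J (M ++ N) := by
  intro x hx
  rcases List.mem_append.1 hx with hx | hx
  · obtain ⟨L, h1, h2⟩ := hM x hx
    refine ⟨L, h1, fun b hb => ?_⟩
    obtain ⟨j, h3, h4⟩ := h2 b hb
    exact ⟨j, h3, by simp [h4]⟩
  · obtain ⟨L, h1, h2⟩ := hN x hx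
    refine ⟨L, h1, fun b hb => ?_⟩
    obtain ⟨j, h3, h4⟩ := h2 b hb
    exact ⟨j, h3, by simp [h4]⟩

/-- Certificates are finite objects, and the rank condition makes a circular justification
impossible. -/
theorem der_iff_cert {α : Type*} (J : α → List α → Prop) (a : α) :
    Der J a ↔ ∃ M k, Cert J M ∧ (k, a) ∈ M := by
  constructor
  · intro h
    induction h with
    | mk a L hJ _ ih =>
      have key : ∀ L' : List α, (∀ b ∈ L', b ∈ L) →
          ∃ M k, Cert J M ∧ ∀ b ∈ L', ∃ j, j < k ∧ (j, b) ∈ M := by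
        intro L'
        induction L' with
        | nil => exact fun _ => ⟨[], 0, by simp [Cert], by simp⟩
        | cons b L' ihL =>
          intro hL
          obtain ⟨M, k, h1, h2⟩ := ihL fun b hb => hL b (by simp [hb])
          obtain ⟨N, l, h3, h4⟩ := ih b (hL b (by simp))
          refine ⟨N ++ M, max k (l + 1), h3.append h1, fun c hc => ?_⟩
          rcases List.mem_cons.1 hc with rfl | hc
          · exact ⟨l, by omega, by simp [h4]⟩
          · obtain ⟨j, h5, h6⟩ := h2 c hc
            exact ⟨j, by omega, by simp [h6]⟩
      obtain ⟨M, k, h1, h2⟩ := key L fun _ h => h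
      refine ⟨(k, a) :: M, k, ?_, by simp⟩
      intro x hx
      rcases List.mem_cons.1 hx with rfl | hx
      · refine ⟨L, hJ, fun b hb => ?_⟩
        obtain ⟨j, h3, h4⟩ := h2 b hb
        exact ⟨j, h3, by simp [h4]⟩
      · obtain ⟨L, h3, h4⟩ := h1 x hx
        refine ⟨L, h3, fun b hb => ?_⟩
        obtain ⟨j, h5, h6⟩ := h4 b hb
        exact ⟨j, h5, by simp [h6]⟩
  · rintro ⟨M, k, hM, hk⟩
    induction k using Nat.strong_induction_on generalizing a with
    | _ k ih =>
      obtain ⟨L, hJ, hL⟩ := hM _ hk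
      refine .mk a L hJ fun b hb => ?_
      obtain ⟨j, hj, hj'⟩ := hL b hb
      exact ih j hj b hj'

attribute [fun_prop] Primrec

section PrimrecLemmas

variable {α β γ : Type*} [Primcodable α] [Primcodable β] [Primcodable γ]

@[fun_prop] theorem p_id : Primrec fun a : α => a := Primrec.id

@[fun_prop] theorem p_const (b : β) : Primrec fun _ : α => b := Primrec.const b

@[fun_prop] theorem p_comp {g : β → γ} {f : α → β} (hg : Primrec g) (hf : Primrec f) :
    Primrec fun a => g (f a) := hg.comp hf

@[fun_prop] theorem p_fst {f : α → β × γ} (hf : Primrec f) : Primrec fun a => (f a).1 :=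
  Primrec.fst.comp hf

@[fun_prop] theorem p_snd {f : α → β × γ} (hf : Primrec f) : Primrec fun a => (f a).2 :=
  Primrec.snd.comp hf

@[fun_prop] theorem p_pair {f : α → β} {g : α → γ} (hf : Primrec f) (hg : Primrec g) :
    Primrec fun a => (f a, g a) := hf.pair hg

@[fun_prop] theorem p_cons {f : α → β} {g : α → List β} (hf : Primrec f) (hg : Primrec g) :
    Primrec fun a => f a :: g a := Primrec.list_cons.comp hf hg

@[fun_prop] theorem p_append {f g : α → List β} (hf : Primrec f) (hg : Primrec g) :
    Primrec fun a => f a ++ g a := Primrec.list_append.comp hf hg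

@[fun_prop] theorem p_length {f : α → List β} (hf : Primrec f) :
    Primrec fun a => (f a).length := Primrec.list_length.comp hf

@[fun_prop] theorem p_some {f : α → β} (hf : Primrec f) :
    Primrec fun a => some (f a) := Primrec.option_some.comp hf

@[fun_prop] theorem p_getElem? {f : α → List β} {g : α → ℕ} (hf : Primrec f) (hg : Primrec g) :
    Primrec fun a => (f a)[g a]? := Primrec.list_getElem?.comp hf hg

@[fun_prop] theorem p_map_fst {f : α → List (β × γ)} (hf : Primrec f) :
    Primrec fun a => (f a).map Prod.fst := Primrec.list_map hf (Primrec.fst.comp .snd).to₂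

@[fun_prop] theorem p_map_snd {f : α → List (β × γ)} (hf : Primrec f) :
    Primrec fun a => (f a).map Prod.snd := Primrec.list_map hf (Primrec.snd.comp .snd).to₂

@[fun_prop] theorem p_encode {f : α → β} (hf : Primrec f) :
    Primrec fun a => Encodable.encode (f a) := Primrec.encode.comp hf

@[fun_prop] theorem p_natPair {f g : α → ℕ} (hf : Primrec f) (hg : Primrec g) :
    Primrec fun a => Nat.pair (f a) (g a) := Primrec₂.natPair.comp hf hg

@[fun_prop] theorem p_var {f : α → ℕ} (hf : Primrec f) :
    Primrec fun a => Term.var (f a) := primrec_var.comp hf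

@[fun_prop] theorem p_app {f : α → ℕ} {g : α → List Term} (hf : Primrec f) (hg : Primrec g) :
    Primrec fun a => Term.app (f a) (g a) := primrec_app hf hg

end PrimrecLemmas

/-- A predicate inductively defined by a recursively enumerable family of clauses is recursively
enumerable. -/
theorem RE.der {α γ δ : Type*} [Primcodable α] [Primcodable γ] [Primcodable δ]
    {J : γ → α → List α → Prop} (h : RE fun x : (γ × α) × List α => J x.1.1 x.1.2 x.2)
    {f : δ → γ} {g : δ → α} (hf : Primrec f) (hg : Primrec g) :
    RE fun d => Der (J (f d)) (g d) := by
  suffices H : RE fun x : γ × α => Der (J x.1) x.2 from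
    RE.comp₂ (p := fun c a => Der (J c) a) H hf hg
  refine RE.of_iff ?_ fun a => der_iff_cert _ _
  refine .ex (.ex (.and (.all_mem (by fun_prop) (.ex (.and ?_ (.all_mem (by fun_prop)
    (.ex (.and (.lt (by fun_prop) (by fun_prop)) (.mem (by fun_prop) (by fun_prop))))))))
    (.mem (by fun_prop) (by fun_prop))))
  exact RE.comp (f := fun x : ((((γ × α) × List (ℕ × α)) × ℕ) × (ℕ × α)) × List α =>
    ((x.1.1.1.1.1, x.1.2.2), x.2)) h (by fun_prop)

/-! ### Term rewriting is recursively enumerable -/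

theorem re_isVarOf {δ : Type*} [Primcodable δ] {f : δ → ℕ} {g : δ → Term}
    (hf : Primrec f) (hg : Primrec g) : RE fun d => IsVarOf (f d) (g d) := by
  let J : ℕ → Term → List Term → Prop := fun n t L =>
    t = .var n ∨ ∃ f ts u, t = .app f ts ∧ u ∈ ts ∧ L = [u]
  have hJ : RE fun x : (ℕ × Term) × List Term => J x.1.1 x.1.2 x.2 := by
    refine .or (.eq (by fun_prop) (by fun_prop)) (.ex (.ex (.ex (.and (.eq ?_ ?_)
      (.and (.mem ?_ ?_) (.eq ?_ ?_)))))) <;> fun_prop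
  refine RE.of_iff (RE.der hJ hf hg) fun d => ?_
  generalize f d = c, g d = t
  refine ⟨fun h => ?_, fun h => ?_⟩
  · induction h with
    | var => exact .mk _ [] (.inl rfl) (by simp)
    | @app f ts t ht _ ih => exact .mk _ [t] (.inr ⟨f, ts, t, rfl, ht, rfl⟩) (by simpa using ih)
  · induction h with
    | mk a L hJ _ ih =>
      rcases hJ with rfl | ⟨f, ts, u, rfl, hu, rfl⟩
      · exact .var
      · exact .app hu (ih u (by simp))

/-- The variable condition on rewrite rules. -/
theorem re_varCond {δ : Type*} [Primcodable δ] {f g : δ → Term}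
    (hf : Primrec f) (hg : Primrec g) :
    RE fun d => ∀ n, IsVarOf n (g d) → IsVarOf n (f d) := by
  let J : Term → Term → List Term → Prop := fun l t L =>
    (∃ n, t = .var n ∧ IsVarOf n l) ∨ ∃ f, t = .app f L
  have hJ : RE fun x : (Term × Term) × List Term => J x.1.1 x.1.2 x.2 := by
    refine .or (.ex (.and (.eq ?_ ?_) (re_isVarOf ?_ ?_))) (.ex (.eq ?_ ?_)) <;> fun_prop
  refine RE.of_iff (RE.der hJ hf hg) fun d => ?_
  generalize f d = c, g d = t
  refine ⟨fun h => ?_, fun h => ?_⟩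
  · induction t using term_induction with
    | var n => exact .mk _ [] (.inl ⟨n, rfl, h n .var⟩) (by simp)
    | app k ts ih =>
      exact .mk _ ts (.inr ⟨k, rfl⟩) fun t ht => ih t ht fun n hn => h n (.app ht hn)
  · induction h with
    | mk a L hJ _ ih =>
      rcases hJ with ⟨n, rfl, hn⟩ | ⟨k, rfl⟩
      · intro m hm
        cases hm
        exact hn
      · intro m hm
        cases hm with
        | app ht hm => exact ih _ ht m hm

theorem re_wfTerm {δ : Type*} [Primcodable δ] {f : δ → List (ℕ × ℕ)} {g : δ → Term}
    (hf : Primrec f) (hg : Primrec g) : RE fun d => WFTerm (f d) (g d) := by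
  let J : List (ℕ × ℕ) → Term → List Term → Prop := fun sig t L =>
    (∃ n, t = .var n) ∨ ∃ f, t = .app f L ∧ (f, L.length) ∈ sig
  have hJ : RE fun x : (List (ℕ × ℕ) × Term) × List Term => J x.1.1 x.1.2 x.2 := by
    refine .or (.ex (.eq ?_ ?_)) (.ex (.and (.eq ?_ ?_) (.mem ?_ ?_))) <;> fun_prop
  refine RE.of_iff (RE.der hJ hf hg) fun d => ?_
  generalize f d = c, g d = t
  refine ⟨fun h => ?_, fun h => ?_⟩
  · induction h with
    | var n => exact .mk _ [] (.inl ⟨n, rfl⟩) (by simp)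
    | @app f ts hf _ ih => exact .mk _ ts (.inr ⟨f, rfl, hf⟩) ih
  · induction h with
    | mk a L hJ _ ih =>
      rcases hJ with ⟨n, rfl⟩ | ⟨k, rfl, hk⟩
      · exact .var n
      · exact .app hk ih

theorem re_not_wfTerm {δ : Type*} [Primcodable δ] {f : δ → List (ℕ × ℕ)} {g : δ → Term}
    (hf : Primrec f) (hg : Primrec g) : RE fun d => ¬ WFTerm (f d) (g d) := by
  let J : List (ℕ × ℕ) → Term → List Term → Prop := fun sig t L =>
    ∃ f ts, t = .app f ts ∧ ((f, ts.length) ∉ sig ∨ ∃ u, u ∈ ts ∧ L = [u])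
  have hJ : RE fun x : (List (ℕ × ℕ) × Term) × List Term => J x.1.1 x.1.2 x.2 := by
    refine .ex (.ex (.and (.eq ?_ ?_) (.or (.notMem ?_ ?_) (.ex (.and (.mem ?_ ?_)
      (.eq ?_ ?_)))))) <;> fun_prop
  refine RE.of_iff (RE.der hJ hf hg) fun d => ?_
  generalize f d = c, g d = t
  refine ⟨fun h => ?_, fun h => ?_⟩
  · induction t using term_induction with
    | var n => exact absurd (.var n) h
    | app k ts ih =>
      by_cases hk : (k, ts.length) ∈ c
      · obtain ⟨u, hu, hu'⟩ : ∃ u ∈ ts, ¬ WFTerm c u := by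
          by_contra! hc
          exact h (.app hk hc)
        exact .mk _ [u] ⟨k, ts, rfl, .inr ⟨u, hu, rfl⟩⟩ (by simpa using ih u hu hu')
      · exact .mk _ [] ⟨k, ts, rfl, .inl hk⟩ (by simp)
  · induction h with
    | mk a L hJ _ ih =>
      obtain ⟨k, ts, rfl, hk | ⟨u, hu, rfl⟩⟩ := hJ
      · rintro (_ | ⟨hk', -⟩)
        exact hk hk'
      · rintro (_ | ⟨-, hts⟩)
        exact ih u (by simp) (hts u hu)

/-- Clauses defining the pairs `p` such that `p.1` instantiated by the finite substitution `s`
equals `p.2`, where `s` lists the values at the variables `0, 1, …`. -/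
def SubstClause (s : List Term) (p : Term × Term) (L : List (Term × Term)) : Prop :=
  (∃ v, p.1 = .var v ∧ s[v]? = some p.2) ∨
    ∃ f, p.1 = .app f (L.map Prod.fst) ∧ p.2 = .app f (L.map Prod.snd)

theorem re_subst {δ : Type*} [Primcodable δ] {f : δ → List Term} {g : δ → Term × Term}
    (hf : Primrec f) (hg : Primrec g) : RE fun d => Der (SubstClause (f d)) (g d) := by
  refine RE.der ?_ hf hg
  refine .or (.ex (.and (.eq ?_ ?_) (.eq ?_ ?_))) (.ex (.and (.eq ?_ ?_) (.eq ?_ ?_))) <;> fun_prop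

theorem substClause_sound {s : List Term} {p : Term × Term} (h : Der (SubstClause s) p) :
    p.1.subst (fun v => (s[v]?).getD (.var 0)) = p.2 := by
  induction h with
  | mk p L hJ _ ih =>
    rcases hJ with ⟨v, h1, h2⟩ | ⟨f, h1, h2⟩
    · rw [h1, subst_var, h2]
      rfl
    · rw [h1, h2, subst_app, List.map_map]
      congr 1
      exact List.map_congr_left ih

/-- Only finitely many values of a substitution matter for a given term. -/
theorem substClause_complete (σ : ℕ → Term) (t : Term) : ∃ N, ∀ n ≥ N,
    Der (SubstClause ((List.range n).map σ)) (t, t.subst σ) := by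
  induction t using term_induction with
  | var v =>
    refine ⟨v + 1, fun n hn => .mk _ [] (.inl ⟨v, rfl, ?_⟩) (by simp)⟩
    have : v < n := hn
    simp [this, subst_var]
  | app f ts ih =>
    choose! N hN using ih
    refine ⟨(ts.map N).sum, fun n hn =>
      .mk _ (ts.map fun t => (t, t.subst σ)) (.inr ⟨f, ?_, ?_⟩) ?_⟩
    · simp [Function.comp_def]
    · simp [Function.comp_def, subst_app]
    · simp only [List.mem_map, forall_exists_index, and_imp]
      rintro _ t ht rfl
      refine hN t ht n (le_trans ?_ hn)
      exact List.single_le_sum (by simp) _ (List.mem_map_of_mem ht)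

theorem re_rewrite {δ : Type*} [Primcodable δ] {f : δ → List (Term × Term)} {g h : δ → Term}
    (hf : Primrec f) (hg : Primrec g) (hh : Primrec h) :
    RE fun d => Rewrite (f d) (g d) (h d) := by
  let J : List (Term × Term) → Term × Term → List (Term × Term) → Prop := fun R p L =>
    (∃ l r s, (l, r) ∈ R ∧ Der (SubstClause s) (l, p.1) ∧ Der (SubstClause s) (r, p.2)) ∨
    ∃ f ts₁ ts₂ u u', p.1 = .app f (ts₁ ++ u :: ts₂) ∧ p.2 = .app f (ts₁ ++ u' :: ts₂) ∧
      L = [(u, u')]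
  have hJ : RE fun x : (List (Term × Term) × (Term × Term)) × List (Term × Term) =>
      J x.1.1 x.1.2 x.2 := by
    refine .or (.ex (.ex (.ex (.and (.mem ?_ ?_) (.and (re_subst ?_ ?_) (re_subst ?_ ?_))))))
      (.ex (.ex (.ex (.ex (.ex (.and (.eq ?_ ?_) (.and (.eq ?_ ?_) (.eq ?_ ?_)))))))) <;> fun_prop
  refine RE.of_iff (RE.der hJ hf (hg.pair hh)) fun d => ?_
  generalize f d = c, g d = t, h d = t'
  refine ⟨fun h => ?_, fun h => ?_⟩
  · induction h with
    | rule l r σ hlr =>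
      obtain ⟨N, hN⟩ := substClause_complete σ l
      obtain ⟨M, hM⟩ := substClause_complete σ r
      exact .mk _ [] (.inl ⟨l, r, (List.range (max N M)).map σ, hlr,
        hN _ (le_max_left _ _), hM _ (le_max_right _ _)⟩) (by simp)
    | congr f ts₁ ts₂ t t' _ ih =>
      exact .mk _ [(t, t')] (.inr ⟨f, ts₁, ts₂, t, t', rfl, rfl, rfl⟩) (by simpa using ih)
  · have key : ∀ p, Der (J c) p → Rewrite c p.1 p.2 := by
      intro p hp
      induction hp with
      | mk p L hJ _ ih =>
        rcases hJ with ⟨l, r, s, hlr, h1, h2⟩ | ⟨k, ts₁, ts₂, u, u', h1, h2, rfl⟩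
        · have := Rewrite.rule l r (fun v => (s[v]?).getD (.var 0)) hlr
          rwa [substClause_sound h1, substClause_sound h2] at this
        · rw [h1, h2]
          exact .congr _ _ _ _ _ (ih (u, u') (by simp))
    exact key _ h

theorem re_reduces {δ : Type*} [Primcodable δ] {f : δ → List (Term × Term)} {g h : δ → Term}
    (hf : Primrec f) (hg : Primrec g) (hh : Primrec h) :
    RE fun d => Reduces (f d) (g d) (h d) := by
  let J : List (Term × Term) → Term × Term → List (Term × Term) → Prop := fun R p L =>
    p.1 = p.2 ∨ ∃ u, Rewrite R p.1 u ∧ L = [(u, p.2)]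
  have hJ : RE fun x : (List (Term × Term) × (Term × Term)) × List (Term × Term) =>
      J x.1.1 x.1.2 x.2 := by
    refine .or (.eq ?_ ?_) (.ex (.and (re_rewrite ?_ ?_ ?_) (.eq ?_ ?_))) <;> fun_prop
  refine RE.of_iff (RE.der hJ hf (hg.pair hh)) fun d => ?_
  generalize f d = c, g d = t, h d = t'
  refine ⟨fun h => ?_, fun h => ?_⟩
  · induction h using Relation.ReflTransGen.head_induction_on with
    | refl => exact .mk _ [] (.inl rfl) (by simp)
    | @head a c hac _ ih => exact .mk _ [(c, _)] (.inr ⟨c, hac, rfl⟩) (by simpa using ih)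
  · have key : ∀ p, Der (J c) p → Reduces c p.1 p.2 := by
      intro p hp
      induction hp with
      | mk p L hJ _ ih =>
        rcases hJ with h | ⟨u, hu, rfl⟩
        · rw [h]
          exact .refl
        · exact .head hu (ih (u, p.2) (by simp))
    exact key _ h

/-- Clauses defining the pairs `x` such that `x.1` and `x.2` occur at the same position in `p.1`
and `p.2`, all symbols above that position agreeing in the two terms. -/
def CorrClause (p x : Term × Term) (L : List (Term × Term)) : Prop :=
  x = p ∨ ∃ (f : ℕ) (ts us : List Term) (i : ℕ), ts.length = us.length ∧
    ts[i]? = some x.1 ∧ us[i]? = some x.2 ∧ L = [(Term.app f ts, Term.app f us)]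

theorem re_corr {δ : Type*} [Primcodable δ] {f g : δ → Term × Term}
    (hf : Primrec f) (hg : Primrec g) : RE fun d => Der (CorrClause (f d)) (g d) := by
  refine RE.der ?_ hf hg
  refine .or (.eq ?_ ?_) (.ex (.ex (.ex (.ex (.and (.eq ?_ ?_) (.and (.eq ?_ ?_)
    (.and (.eq ?_ ?_) (.eq ?_ ?_)))))))) <;> fun_prop

theorem corr_subst {σ : ℕ → Term} {l u : Term} (h : l.subst σ = u) {x : Term × Term}
    (hx : Der (CorrClause (l, u)) x) : x.1.subst σ = x.2 := by
  induction hx with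
  | mk x L hJ _ ih =>
    rcases hJ with rfl | ⟨f, ts, us, i, -, h1, h2, rfl⟩
    · exact h
    · have := ih _ (List.mem_singleton_self _)
      simp only [subst_app, Term.app.injEq, true_and] at this
      subst this
      simpa [h1] using h2

/-- Failure of matching: a clash of symbols, or two occurrences of a variable of the pattern
facing different subterms. -/
theorem not_match_iff (l u : Term) : (¬ ∃ σ, l.subst σ = u) ↔
    (∃ f ts b, Der (CorrClause (l, u)) (.app f ts, b) ∧ ((∃ v, b = .var v) ∨
      ∃ g us, b = .app g us ∧ (f ≠ g ∨ ts.length ≠ us.length))) ∨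
    ∃ v b b', Der (CorrClause (l, u)) (.var v, b) ∧ Der (CorrClause (l, u)) (.var v, b') ∧
      b ≠ b' := by
  constructor
  · contrapose!
    rintro ⟨h1, h2⟩
    classical
    let σ : ℕ → Term := fun v =>
      if h : ∃ b, Der (CorrClause (l, u)) (.var v, b) then h.choose else .var 0
    suffices ∀ a b, Der (CorrClause (l, u)) (a, b) → a.subst σ = b from
      ⟨σ, this l u (.mk _ [] (.inl rfl) (by simp))⟩
    intro a
    induction a using term_induction with
    | var v =>
      intro b hb
      have h : ∃ b, Der (CorrClause (l, u)) (.var v, b) := ⟨b, hb⟩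
      rw [subst_var]
      simp only [σ, dif_pos h]
      exact h2 v _ _ h.choose_spec hb
    | app f ts ih =>
      intro b hb
      obtain ⟨h3, h4⟩ := h1 f ts b hb
      rcases b with v | ⟨g, us⟩
      · exact absurd rfl (h3 v)
      · obtain ⟨rfl, hlen⟩ := h4 g us rfl
        rw [subst_app]
        congr 1
        refine List.ext_getElem (by simpa using hlen) fun i hi hi' => ?_
        rw [List.getElem_map]
        rw [List.length_map] at hi
        refine ih _ (List.getElem_mem hi) _ (.mk _ [(.app f ts, .app f us)]
          (.inr ⟨f, ts, us, i, hlen, ?_, ?_, rfl⟩) (by simpa using hb))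
        · simp [hi]
        · simp [hi']
  · rintro (⟨f, ts, b, hb, hc⟩ | ⟨v, b, b', h1, h2, hne⟩) ⟨σ, hσ⟩
    · have := corr_subst hσ hb
      rw [subst_app] at this
      rcases hc with ⟨v, rfl⟩ | ⟨g, us, rfl, hc⟩
      · simp at this
      · simp only [Term.app.injEq] at this
        obtain ⟨rfl, rfl⟩ := this
        simp at hc
    · exact hne ((corr_subst hσ h1).symm.trans (corr_subst hσ h2))

theorem re_not_match {δ : Type*} [Primcodable δ] {f g : δ → Term}
    (hf : Primrec f) (hg : Primrec g) : RE fun d => ¬ ∃ σ, (f d).subst σ = g d := by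
  refine RE.of_iff ?_ fun d => not_match_iff (f d) (g d)
  refine .or (.ex (.ex (.ex (.and (re_corr ?_ ?_) (.or (.ex (.eq ?_ ?_)) (.ex (.ex (.and
    (.eq ?_ ?_) (.or (.ne ?_ ?_) (.ne ?_ ?_)))))))))) (.ex (.ex (.ex (.and (re_corr ?_ ?_)
    (.and (re_corr ?_ ?_) (.ne ?_ ?_)))))) <;> fun_prop

/-- A term is normal iff no left-hand side matches it and all its arguments are normal; the former
is a semidecidable condition because failure of matching is. -/
theorem re_normalForm {δ : Type*} [Primcodable δ] {f : δ → List (Term × Term)} {g : δ → Term}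
    (hf : Primrec f) (hg : Primrec g) : RE fun d => NormalForm (f d) (g d) := by
  let J : List (Term × Term) → Term → List Term → Prop := fun R t L =>
    ((∃ v, t = .var v) ∨ ∃ f, t = .app f L) ∧ ∀ p ∈ R, ¬ ∃ σ, p.1.subst σ = t
  have hJ : RE fun x : (List (Term × Term) × Term) × List Term => J x.1.1 x.1.2 x.2 := by
    refine .and (.or (.ex (.eq ?_ ?_)) (.ex (.eq ?_ ?_))) (.all_mem ?_ (re_not_match ?_ ?_)) <;>
      fun_prop
  refine RE.of_iff (RE.der hJ hf hg) fun d => ?_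
  generalize f d = c, g d = t
  refine ⟨fun h => ?_, fun h => ?_⟩
  · have root : ∀ p ∈ c, ¬ ∃ σ, p.1.subst σ = t := by
      rintro ⟨l, r⟩ hp ⟨σ, rfl⟩
      exact h _ (.rule l r σ hp)
    induction t using term_induction with
    | var v => exact .mk _ [] ⟨.inl ⟨v, rfl⟩, root⟩ (by simp)
    | app k ts ih =>
      refine .mk _ ts ⟨.inr ⟨k, rfl⟩, root⟩ fun t ht => ?_
      have hnf : NormalForm c t := by
        intro u hu
        obtain ⟨ts₁, ts₂, rfl⟩ := List.append_of_mem ht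
        exact h _ (.congr k ts₁ ts₂ t u hu)
      refine ih t ht hnf ?_
      rintro ⟨l, r⟩ hp ⟨σ, rfl⟩
      exact hnf _ (.rule l r σ hp)
  · induction h with
    | mk a L hJ _ ih =>
      obtain ⟨h1, h2⟩ := hJ
      intro u hu
      cases hu with
      | rule l r σ hlr => exact h2 _ hlr ⟨σ, rfl⟩
      | congr k ts₁ ts₂ t t' h =>
        rcases h1 with ⟨v, hv⟩ | ⟨k', hk⟩
        · cases hv
        · cases hk
          exact ih t (by simp) _ h

theorem re_wfTRS {δ : Type*} [Primcodable δ] {f : δ → List (ℕ × ℕ)}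
    {g : δ → List (Term × Term)} (hf : Primrec f) (hg : Primrec g) :
    RE fun d => WFTRS (f d) (g d) := by
  have h : ∀ sig R, WFTRS sig R ↔ (∀ p ∈ sig, ∀ q ∈ sig, p.1 ≠ q.1 ∨ p.2 = q.2) ∧
      ∀ p ∈ R, WFTerm sig p.1 ∧ WFTerm sig p.2 ∧ (∃ k ts, p.1 = .app k ts) ∧
        ∀ n, IsVarOf n p.2 → IsVarOf n p.1 := by
    intro sig R
    have : ∀ t : Term, (∀ n, t ≠ .var n) ↔ ∃ k ts, t = .app k ts := by
      rintro (n | ⟨k, ts⟩) <;> simp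
    simp only [WFTRS, WFSig, this, imp_iff_not_or, ne_eq]
  refine RE.of_iff ?_ fun d => h _ _
  refine .and (.all_mem ?_ (.all_mem ?_ (.or (.ne ?_ ?_) (.eq ?_ ?_)))) (.all_mem ?_
    (.and (re_wfTerm ?_ ?_) (.and (re_wfTerm ?_ ?_) (.and (.ex (.ex (.eq ?_ ?_)))
    (re_varCond ?_ ?_))))) <;> fun_prop

/-- Membership of `n` says that for every term `t` some pair `(sig, R)` coded by `n` is a rewriting
system for which `t` is either ill-formed or has a normal form; by injectivity of the coding the
pair does not depend on `t`. -/
theorem pi02_wn : Pi02 { n : ℕ | ∃ (sig : List (ℕ × ℕ)) (R : List (Term × Term)),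
    WFTRS sig R ∧ n = Nat.pair (encodeSig sig) (encodeTRS R) ∧
    ∀ t : Term, WFTerm sig t → WNon R t } := by
  let Q : ℕ → Term → Prop := fun n t => ∃ sig R, WFTRS sig R ∧
    n = Nat.pair (Encodable.encode sig) (Encodable.encode R) ∧
    (¬ WFTerm sig t ∨ ∃ s, Reduces R t s ∧ NormalForm R s)
  have hQ : RE fun x : ℕ × Term => Q x.1 x.2 := by
    refine .ex (.ex (.and (re_wfTRS ?_ ?_) (.and (.eq ?_ ?_) (.or (re_not_wfTerm ?_ ?_)
      (.ex (.and (re_reduces ?_ ?_ ?_) (re_normalForm ?_ ?_))))))) <;> fun_prop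
  obtain ⟨q, ⟨_, hq⟩, hQ⟩ := RE.comp (f := fun x : ℕ × ℕ => (x.1, termEquiv.symm x.2)) hQ
    (by have : Primrec termEquiv.symm := Primrec.of_equiv_symm
        fun_prop)
  refine ⟨fun n x y => decide (q ((n, x), y)), ?_, fun n => ?_⟩
  · exact Primrec.to_comp (hq.comp (g := fun x : ℕ × ℕ × ℕ => ((x.1, x.2.1), x.2.2)) (by fun_prop))
  · have : ∀ x, (∃ y, decide (q ((n, x), y)) = true) ↔ Q n (termEquiv.symm x) := by
      intro x
      simp [hQ (n, x)]
    simp only [this, Set.mem_ofPred_eq]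
    rw [termEquiv.symm.surjective.forall.symm]
    constructor
    · rintro ⟨sig, R, h1, h2, h3⟩ t
      exact ⟨sig, R, h1, by rw [h2, encodeTRS_eq]; rfl, imp_iff_not_or.1 (h3 t)⟩
    · intro h
      obtain ⟨sig, R, h1, h2, -⟩ := h (.var 0)
      refine ⟨sig, R, h1, by rw [h2, encodeTRS_eq]; rfl, fun t => ?_⟩
      obtain ⟨sig', R', -, h2', h⟩ := h t
      rw [h2, Nat.pair_eq_pair, Encodable.encode_inj, Encodable.encode_inj] at h2'
      obtain ⟨rfl, rfl⟩ := h2'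
      exact imp_iff_not_or.2 h

/-! ### A rewriting interpreter for primitive recursive functions -/

/-- The numeral constant `0`; it also serves as the empty list. -/
abbrev zeroT : Term := .app 0 []
/-- Successor. -/
abbrev sT (a : Term) : Term := .app 1 [a]
/-- Pairing. -/
abbrev pT (a b : Term) : Term := .app 2 [a, b]
/-- Program: constant zero. -/
abbrev cZ : Term := .app 3 []
/-- Program: successor. -/
abbrev cS : Term := .app 4 []
/-- Program: first projection. -/
abbrev cL : Term := .app 5 []
/-- Program: second projection. -/
abbrev cR : Term := .app 6 []
/-- Program: pairing of two programs. -/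
abbrev cPr (f g : Term) : Term := .app 7 [f, g]
/-- Program: composition. -/
abbrev cCm (f g : Term) : Term := .app 8 [f, g]
/-- Program: primitive recursion on the first component of the argument. -/
abbrev cPc (f g : Term) : Term := .app 9 [f, g]
/-- Application of a program to an argument. -/
abbrev ap (c x : Term) : Term := .app 10 [c, x]
/-- `chk y x` consumes `y`, verifying that it is a numeral, and then starts a search at `x`. -/
abbrev chk (y x : Term) : Term := .app 11 [y, x]
/-- `srch x k` searches for a witness at input `x`, the current candidate being `k`. -/
abbrev srch (x k : Term) : Term := .app 12 [x, k]
/-- `tst z x` may stop when `z` is zero, and may always restart the search at `x`. -/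
abbrev tst (z x : Term) : Term := .app 13 [z, x]

/-- The numeral of `n`. -/
def num : ℕ → Term
  | 0 => zeroT
  | n + 1 => sT (num n)

/-- A list of numbers as nested pairs of numerals. -/
def lst : List ℕ → Term
  | [] => zeroT
  | a :: l => pT (num a) (lst l)

/-- The common signature of all systems produced by the reduction. -/
def sig : List (ℕ × ℕ) :=
  [(0, 0), (1, 1), (2, 2), (3, 0), (4, 0), (5, 0), (6, 0), (7, 2), (8, 2), (9, 2), (10, 2),
    (11, 2), (12, 2), (13, 2)]

/-- The rule depending on the program `c` and the parameter `n`: test the current candidate. -/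
def testRule (c : Term) (n : ℕ) : Term × Term :=
  (srch (.var 0) (.var 1),
    tst (ap c (pT (num n) (pT (.var 0) (pT (.var 1) zeroT)))) (.var 0))

/-- The rules of the interpreter and of the search loop that do not depend on the input. -/
def fixedRules : List (Term × Term) :=
  [(ap cZ (.var 0), zeroT),
   (ap cS (.var 0), sT (.var 0)),
   (ap cL (pT (.var 0) (.var 1)), .var 0),
   (ap cR (pT (.var 0) (.var 1)), .var 1),
   (ap (cPr (.var 0) (.var 1)) (.var 2), pT (ap (.var 0) (.var 2)) (ap (.var 1) (.var 2))),
   (ap (cCm (.var 0) (.var 1)) (.var 2), ap (.var 0) (ap (.var 1) (.var 2))),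
   (ap (cPc (.var 0) (.var 1)) (pT zeroT (.var 2)), ap (.var 0) (.var 2)),
   (ap (cPc (.var 0) (.var 1)) (pT (sT (.var 2)) (.var 3)),
    ap (.var 1) (pT (.var 2) (pT (ap (cPc (.var 0) (.var 1)) (pT (.var 2) (.var 3))) (.var 3)))),
   (chk (sT (.var 0)) (.var 1), chk (.var 0) (.var 1)),
   (chk zeroT (.var 0), srch (.var 0) zeroT),
   (srch (.var 0) (.var 1), srch (.var 0) (sT (.var 1))),
   (tst zeroT (.var 0), zeroT),
   (tst (.var 0) (.var 1), chk (.var 1) (.var 1))]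

/-- The rewriting system attached to the program `c` and the parameter `n`. -/
def rules (c : Term) (n : ℕ) : List (Term × Term) := testRule c n :: fixedRules

/-- The root steps of `rules c n`, written out for a closed program `c`. -/
inductive Root (c : Term) (n : ℕ) : Term → Term → Prop
  | test (x k) : Root c n (srch x k) (tst (ap c (pT (num n) (pT x (pT k zeroT)))) x)
  | z (x) : Root c n (ap cZ x) zeroT
  | s (x) : Root c n (ap cS x) (sT x)
  | l (a b) : Root c n (ap cL (pT a b)) a
  | r (a b) : Root c n (ap cR (pT a b)) b
  | pr (f g x) : Root c n (ap (cPr f g) x) (pT (ap f x) (ap g x))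
  | cm (f g x) : Root c n (ap (cCm f g) x) (ap f (ap g x))
  | pcZero (f g a) : Root c n (ap (cPc f g) (pT zeroT a)) (ap f a)
  | pcSucc (f g y a) : Root c n (ap (cPc f g) (pT (sT y) a))
      (ap g (pT y (pT (ap (cPc f g) (pT y a)) a)))
  | chkSucc (y x) : Root c n (chk (sT y) x) (chk y x)
  | chkZero (x) : Root c n (chk zeroT x) (srch x zeroT)
  | next (x k) : Root c n (srch x k) (srch x (sT k))
  | halt (x) : Root c n (tst zeroT x) zeroT
  | restart (z x) : Root c n (tst z x) (chk x x)

theorem isVarOf_app_iff {n f : ℕ} {ts : List Term} :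
    IsVarOf n (.app f ts) ↔ ∃ t ∈ ts, IsVarOf n t :=
  ⟨fun h => by cases h with | app h1 h2 => exact ⟨_, h1, h2⟩, fun ⟨_, h1, h2⟩ => .app h1 h2⟩

theorem isVarOf_var_iff {n m : ℕ} : IsVarOf n (.var m) ↔ m = n :=
  ⟨fun h => by cases h; rfl, fun h => h ▸ .var⟩

theorem wfTerm_app_iff {S : List (ℕ × ℕ)} {f : ℕ} {ts : List Term} :
    WFTerm S (.app f ts) ↔ (f, ts.length) ∈ S ∧ ∀ t ∈ ts, WFTerm S t :=
  ⟨fun h => by cases h with | app h1 h2 => exact ⟨h1, h2⟩, fun ⟨h1, h2⟩ => .app h1 h2⟩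

theorem ground_app {f : ℕ} {ts : List Term} (h : ∀ t ∈ ts, Ground t) : Ground (.app f ts) := by
  intro n hn
  obtain ⟨t, ht, hn⟩ := isVarOf_app_iff.1 hn
  exact h t ht n hn

theorem ground_subst {t : Term} (h : Ground t) (σ : ℕ → Term) : t.subst σ = t := by
  induction t using term_induction with
  | var n => exact absurd .var (h n)
  | app f ts ih =>
    rw [subst_app]
    congr 1
    exact (List.map_congr_left fun t ht => ih t ht fun n hn => h n (.app ht hn)).trans
      (List.map_id' ts)

theorem ground_num (n : ℕ) : Ground (num n) := by
  induction n with
  | zero => exact ground_app (by simp)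
  | succ n ih => exact ground_app (by simpa using ih)

theorem wf_num (n : ℕ) : WFTerm sig (num n) := by
  induction n with
  | zero => simp [num, wfTerm_app_iff, sig]
  | succ n ih => simpa [num, wfTerm_app_iff, sig] using ih

theorem rootStep_iff {c : Term} (hc : Ground c) {n : ℕ} {s t : Term} :
    RootStep (rules c n) s t ↔ Root c n s t := by
  constructor
  · rintro ⟨l, r, σ, h, rfl, rfl⟩
    simp only [rules, testRule, fixedRules, List.mem_cons, List.not_mem_nil, or_false,
      Prod.mk.injEq] at h
    rcases h with ⟨rfl, rfl⟩ | ⟨rfl, rfl⟩ | ⟨rfl, rfl⟩ | ⟨rfl, rfl⟩ | ⟨rfl, rfl⟩ | ⟨rfl, rfl⟩ |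
      ⟨rfl, rfl⟩ | ⟨rfl, rfl⟩ | ⟨rfl, rfl⟩ | ⟨rfl, rfl⟩ | ⟨rfl, rfl⟩ | ⟨rfl, rfl⟩ | ⟨rfl, rfl⟩ |
      ⟨rfl, rfl⟩ <;>
    simp only [subst_app, subst_var, List.map_cons, List.map_nil, ground_subst hc,
      ground_subst (ground_num n)] <;> constructor
  · -- The substitution assigning the entries of a list to the variables `0`, `1`, ….
    let τ : List Term → ℕ → Term := fun a v => a[v]?.getD zeroT
    intro h
    cases h with
    | test x k => exact ⟨_, _, τ [x, k], .head _, by simp [subst_app, subst_var, τ],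
        by simp [subst_app, subst_var, τ, ground_subst hc, ground_subst (ground_num n)]⟩
    | z x => exact ⟨_, _, τ [x], .tail _ (List.mem_of_getElem? (i := 0) rfl),
        by simp [subst_app, subst_var, τ], by simp [subst_app]⟩
    | s x => exact ⟨_, _, τ [x], .tail _ (List.mem_of_getElem? (i := 1) rfl),
        by simp [subst_app, subst_var, τ], by simp [subst_app, subst_var, τ]⟩
    | l _ b => exact ⟨_, _, τ [t, b], .tail _ (List.mem_of_getElem? (i := 2) rfl),
        by simp [subst_app, subst_var, τ], by simp [subst_var, τ]⟩
    | r a _ => exact ⟨_, _, τ [a, t], .tail _ (List.mem_of_getElem? (i := 3) rfl),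
        by simp [subst_app, subst_var, τ], by simp [subst_var, τ]⟩
    | pr f g x => exact ⟨_, _, τ [f, g, x], .tail _ (List.mem_of_getElem? (i := 4) rfl),
        by simp [subst_app, subst_var, τ], by simp [subst_app, subst_var, τ]⟩
    | cm f g x => exact ⟨_, _, τ [f, g, x], .tail _ (List.mem_of_getElem? (i := 5) rfl),
        by simp [subst_app, subst_var, τ], by simp [subst_app, subst_var, τ]⟩
    | pcZero f g a => exact ⟨_, _, τ [f, g, a], .tail _ (List.mem_of_getElem? (i := 6) rfl),
        by simp [subst_app, subst_var, τ], by simp [subst_app, subst_var, τ]⟩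
    | pcSucc f g y a => exact ⟨_, _, τ [f, g, y, a], .tail _ (List.mem_of_getElem? (i := 7) rfl),
        by simp [subst_app, subst_var, τ], by simp [subst_app, subst_var, τ]⟩
    | chkSucc y x => exact ⟨_, _, τ [y, x], .tail _ (List.mem_of_getElem? (i := 8) rfl),
        by simp [subst_app, subst_var, τ], by simp [subst_app, subst_var, τ]⟩
    | chkZero x => exact ⟨_, _, τ [x], .tail _ (List.mem_of_getElem? (i := 9) rfl),
        by simp [subst_app, subst_var, τ], by simp [subst_app, subst_var, τ]⟩
    | next x k => exact ⟨_, _, τ [x, k], .tail _ (List.mem_of_getElem? (i := 10) rfl),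
        by simp [subst_app, subst_var, τ], by simp [subst_app, subst_var, τ]⟩
    | halt x => exact ⟨_, _, τ [x], .tail _ (List.mem_of_getElem? (i := 11) rfl),
        by simp [subst_app, subst_var, τ], by simp [subst_app]⟩
    | restart z x => exact ⟨_, _, τ [z, x], .tail _ (List.mem_of_getElem? (i := 12) rfl),
        by simp [subst_app, subst_var, τ], by simp [subst_app, subst_var, τ]⟩

theorem wfTRS_rules {c : Term} (hc : Ground c) (hwf : WFTerm sig c) (n : ℕ) :
    WFTRS sig (rules c n) := by
  refine ⟨by unfold WFSig; decide, ?_⟩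
  have hn := ground_num n
  simp only [rules, testRule, fixedRules, List.forall_mem_cons, wfTerm_app_iff, isVarOf_app_iff,
    isVarOf_var_iff, List.exists_mem_cons_iff]
  simp [sig, WFTerm.var]
  have hw := wf_num n
  simp only [sig] at hwf hw
  refine ⟨⟨⟨hwf, hw⟩, fun m => ?_⟩, ?_⟩
  · simp only [hc m, hn m, false_or]
    tauto
  · refine ⟨?_, ?_, ?_, ?_⟩ <;> intro m <;> tauto

/-! ### Rewriting lemmas -/

section Rewriting

variable {R : List (Term × Term)}

theorem Reduces.arg {a a' : Term} (f : ℕ) (ts₁ ts₂ : List Term) (h : Reduces R a a') :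
    Reduces R (.app f (ts₁ ++ a :: ts₂)) (.app f (ts₁ ++ a' :: ts₂)) := by
  induction h with
  | refl => exact .refl
  | tail _ h ih => exact ih.tail (.congr f ts₁ ts₂ _ _ h)

theorem Reduces.arg₁ {a a' : Term} (f : ℕ) (b : Term) (h : Reduces R a a') :
    Reduces R (.app f [a, b]) (.app f [a', b]) := Reduces.arg f [] [b] h

theorem Reduces.arg₂ {b b' : Term} (f : ℕ) (a : Term) (h : Reduces R b b') :
    Reduces R (.app f [a, b]) (.app f [a, b']) := Reduces.arg f [a] [] h

theorem WNon.of_reduces {s t : Term} (h : Reduces R s t) (ht : WNon R t) : WNon R s :=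
  let ⟨u, h1, h2⟩ := ht
  ⟨u, h.trans h1, h2⟩

theorem NormalForm.arg {f : ℕ} {ts : List Term} (h : NormalForm R (.app f ts)) {t : Term}
    (ht : t ∈ ts) : NormalForm R t := by
  intro u hu
  obtain ⟨ts₁, ts₂, rfl⟩ := List.append_of_mem ht
  exact h _ (.congr f ts₁ ts₂ t u hu)

theorem rewrite_cases {t u : Term} (h : Rewrite R t u) : RootStep R t u ∨
    ∃ f ts₁ ts₂ a a', t = .app f (ts₁ ++ a :: ts₂) ∧ u = .app f (ts₁ ++ a' :: ts₂) ∧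
      Rewrite R a a' := by
  cases h with
  | rule l r σ h => exact .inl ⟨l, r, σ, h, rfl, rfl⟩
  | congr f ts₁ ts₂ a a' h => exact .inr ⟨f, ts₁, ts₂, a, a', rfl, rfl, h⟩

theorem rewrite_cases₂ {f : ℕ} {a b u : Term} (h : Rewrite R (.app f [a, b]) u) :
    RootStep R (.app f [a, b]) u ∨ (∃ a', Rewrite R a a' ∧ u = .app f [a', b]) ∨
      ∃ b', Rewrite R b b' ∧ u = .app f [a, b'] := by
  rcases rewrite_cases h with h | ⟨g, ts₁, ts₂, x, x', h1, rfl, h2⟩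
  · exact .inl h
  · right
    simp only [Term.app.injEq] at h1
    obtain ⟨rfl, h1⟩ := h1
    rcases ts₁ with _ | ⟨y, _ | ⟨z, ts₁⟩⟩
    · simp only [List.nil_append, List.cons.injEq] at h1
      obtain ⟨rfl, rfl⟩ := h1
      exact .inl ⟨x', h2, rfl⟩
    · simp only [List.cons_append, List.nil_append, List.cons.injEq] at h1
      obtain ⟨rfl, rfl, rfl⟩ := h1
      exact .inr ⟨x', h2, rfl⟩
    · simp at h1

/-- A term with normal arguments either is normal or admits a root step. -/
theorem normal_or_root {f : ℕ} {ts : List Term} (h : ∀ t ∈ ts, NormalForm R t) :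
    NormalForm R (.app f ts) ∨ ∃ u, RootStep R (.app f ts) u := by
  by_contra! hc
  obtain ⟨h1, h2⟩ := hc
  refine h1 fun u hu => ?_
  rcases rewrite_cases hu with hu | ⟨g, ts₁, ts₂, a, a', h3, -, h4⟩
  · exact h2 u hu
  · cases h3
    exact h a (by simp) _ h4

/-- Innermost strategy: to normalize a term, normalize its arguments first. -/
theorem WNon.app {f : ℕ} {ts : List Term} (h : ∀ t ∈ ts, WNon R t)
    (H : ∀ ss : List Term, (∀ s ∈ ss, NormalForm R s) → WNon R (.app f ss)) :
    WNon R (.app f ts) := by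
  suffices ∀ ss : List Term, (∀ s ∈ ss, NormalForm R s) → WNon R (.app f (ss ++ ts)) from
    this [] (by simp)
  induction ts with
  | nil => simpa using H
  | cons t ts ih =>
    intro ss hss
    obtain ⟨s, h1, h2⟩ := h t (by simp)
    refine WNon.of_reduces (Reduces.arg f ss ts h1) ?_
    have := ih (fun t ht => h t (by simp [ht])) (ss ++ [s]) (by
      intro u hu
      rcases List.mem_append.1 hu with hu | hu
      · exact hss u hu
      · rw [List.mem_singleton.1 hu]
        exact h2)
    simpa using this

theorem WNon.app₂ {f : ℕ} {a b : Term} (ha : WNon R a) (hb : WNon R b)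
    (H : ∀ a' b', NormalForm R a' → NormalForm R b' → WNon R (.app f [a', b'])) :
    WNon R (.app f [a, b]) := by
  obtain ⟨a', h1, h2⟩ := ha
  obtain ⟨b', h3, h4⟩ := hb
  exact WNon.of_reduces ((Reduces.arg₁ f b h1).trans (Reduces.arg₂ f a' h3)) (H a' b' h2 h4)

theorem NormalForm.wnon {t : Term} (h : NormalForm R t) : WNon R t := ⟨t, .refl, h⟩

end Rewriting

/-! ### Programs for primitive recursive functions -/

section Systems

variable {c : Term} {n : ℕ}

theorem Root.rewrite (hc : Ground c) {s t : Term} (h : Root c n s t) : Rewrite (rules c n) s t := by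
  obtain ⟨l, r, σ, hlr, rfl, rfl⟩ := (rootStep_iff hc).2 h
  exact .rule l r σ hlr

theorem Root.reduces (hc : Ground c) {s t : Term} (h : Root c n s t) : Reduces (rules c n) s t :=
  .single (h.rewrite hc)

/-- The closed program `C` over `sig` computes `f`, in every system `rules c n`. -/
def Computes {m : ℕ} (C : Term) (f : List.Vector ℕ m → ℕ) : Prop :=
  Ground C ∧ WFTerm sig C ∧ ∀ (c : Term) (n : ℕ), Ground c → ∀ v : List.Vector ℕ m,
    Reduces (rules c n) (ap C (lst v.toList)) (num (f v))

/-- The program extracting the `i`-th entry of a list. -/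
def proj : ℕ → Term
  | 0 => cL
  | i + 1 => cCm (proj i) cR

/-- The program collecting the results of a list of programs. -/
def tup : List Term → Term
  | [] => cZ
  | C :: l => cPr C (tup l)

theorem ground_app₂ {f : ℕ} {a b : Term} (ha : Ground a) (hb : Ground b) :
    Ground (.app f [a, b]) := ground_app (by simp [ha, hb])

theorem proj_reduces (hc : Ground c) : ∀ (l : List ℕ) (i : ℕ) (hi : i < l.length),
    Reduces (rules c n) (ap (proj i) (lst l)) (num l[i])
  | a :: l, 0, _ => (Root.l _ _).reduces hc
  | a :: l, i + 1, hi => by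
    refine .trans ((Root.cm _ _ _).reduces hc)
      (.trans (Reduces.arg₂ 10 _ ((Root.r _ _).reduces hc)) ?_)
    exact proj_reduces hc l i (by simpa using hi)

theorem tup_reduces (hc : Ground c) {x : Term} : ∀ {Cs : List Term} {l : List ℕ},
    List.Forall₂ (fun C a => Reduces (rules c n) (ap C x) (num a)) Cs l →
      Reduces (rules c n) (ap (tup Cs) x) (lst l)
  | _, _, .nil => (Root.z _).reduces hc
  | _, _, .cons h hs => .trans ((Root.pr _ _ _).reduces hc)
      (.trans (Reduces.arg₁ 2 _ h) (Reduces.arg₂ 2 _ (tup_reduces hc hs)))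

/-- Every primitive recursive function is computed by a closed program. -/
theorem exists_computes {m : ℕ} {f : List.Vector ℕ m → ℕ} (hf : Nat.Primrec' f) :
    ∃ C, Computes C f := by
  induction hf with
  | zero =>
    exact ⟨cZ, ground_app (by simp), by simp [wfTerm_app_iff, sig],
      fun c n hc v => (Root.z _).reduces hc⟩
  | succ =>
    refine ⟨cCm cS cL, ground_app₂ (ground_app (by simp)) (ground_app (by simp)),
      by simp [wfTerm_app_iff, sig], fun c n hc v => ?_⟩
    obtain ⟨a, v, rfl⟩ := v.exists_eq_cons
    exact .trans ((Root.cm _ _ _).reduces hc)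
      (.trans (Reduces.arg₂ 10 _ ((Root.l _ _).reduces hc)) ((Root.s _).reduces hc))
  | get i =>
    refine ⟨proj i, ?_, ?_, fun c n hc v => ?_⟩
    · generalize i.1 = j
      induction j with
      | zero => exact ground_app (by simp)
      | succ j ih => exact ground_app₂ ih (ground_app (by simp))
    · generalize i.1 = j
      induction j with
      | zero => simp [proj, wfTerm_app_iff, sig]
      | succ j ih =>
        simp only [sig] at ih
        simpa [proj, wfTerm_app_iff, sig] using ih
    · have := proj_reduces (n := n) hc v.toList i (by simp)
      simpa [List.Vector.get_eq_get_toList] using this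
  | @comp m k f g hf hg ihf ihg =>
    obtain ⟨Cf, hf1, hf2, hf3⟩ := ihf
    choose Cg hg1 hg2 hg3 using ihg
    refine ⟨cCm Cf (tup (List.ofFn Cg)), ground_app₂ hf1 ?_, ?_, fun c n hc v => ?_⟩
    · have : ∀ C ∈ List.ofFn Cg, Ground C := by simpa [List.mem_ofFn] using hg1
      generalize List.ofFn Cg = L at this
      induction L with
      | nil => exact ground_app (by simp)
      | cons C L ih => exact ground_app₂ (this C (by simp)) (ih fun C hC => this C (by simp [hC]))
    · have : WFTerm sig (tup (List.ofFn Cg)) := by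
        have : ∀ C ∈ List.ofFn Cg, WFTerm sig C := by simpa [List.mem_ofFn] using hg2
        generalize List.ofFn Cg = L at this
        induction L with
        | nil => simp [tup, wfTerm_app_iff, sig]
        | cons C L ih =>
          rw [tup, wfTerm_app_iff]
          refine ⟨by simp [sig], ?_⟩
          simp [this C, ih fun C hC => this C (by simp [hC])]
      rw [wfTerm_app_iff]
      exact ⟨by simp [sig], by simp [hf2, this]⟩
    · refine .trans ((Root.cm _ _ _).reduces hc)
        (.trans (Reduces.arg₂ 10 _ (tup_reduces hc (l := List.ofFn fun i => g i v) ?_)) ?_)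
      · rw [List.forall₂_iff_get]
        simp only [List.length_ofFn, true_and]
        intro i h1 h2
        simpa using hg3 _ c n hc v
      · have := hf3 c n hc (List.Vector.ofFn fun i => g i v)
        rwa [List.Vector.toList_ofFn] at this
  | @prec m f g hf hg ihf ihg =>
    obtain ⟨Cf, hf1, hf2, hf3⟩ := ihf
    obtain ⟨Cg, hg1, hg2, hg3⟩ := ihg
    refine ⟨cPc Cf Cg, ground_app₂ hf1 hg1, ?_, fun c n hc v => ?_⟩
    · rw [wfTerm_app_iff]
      exact ⟨by simp [sig], by simp [hf2, hg2]⟩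
    · obtain ⟨y, v, rfl⟩ := v.exists_eq_cons
      simp only [List.Vector.head_cons, List.Vector.tail_cons, List.Vector.toList_cons]
      induction y with
      | zero => exact .trans ((Root.pcZero _ _ _).reduces hc) (hf3 c n hc v)
      | succ y ih =>
        refine .trans ((Root.pcSucc _ _ _ _).reduces hc) (.trans
          (Reduces.arg₂ 10 _ (Reduces.arg₂ 2 _ (Reduces.arg₁ 2 _ ih))) ?_)
        exact hg3 c n hc (y ::ᵥ _ ::ᵥ v)

/-! ### Weak normalization when every search succeeds -/

/-- With normal arguments, only the root steps have to be examined. -/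
theorem wnon_of_root {ts : List Term} {f : ℕ} (hc : Ground c)
    (h : ∀ t ∈ ts, NormalForm (rules c n) t)
    (H : ∀ u, Root c n (.app f ts) u → WNon (rules c n) u) : WNon (rules c n) (.app f ts) := by
  rcases normal_or_root h with h | ⟨u, hu⟩
  · exact NormalForm.wnon h
  · rw [rootStep_iff hc] at hu
    exact WNon.of_reduces (hu.reduces hc) (H u hu)

theorem wnon_of_root₂ {a b : Term} {f : ℕ} (hc : Ground c) (ha : NormalForm (rules c n) a)
    (hb : NormalForm (rules c n) b)
    (H : ∀ u, Root c n (.app f [a, b]) u → WNon (rules c n) u) :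
    WNon (rules c n) (.app f [a, b]) :=
  wnon_of_root hc (by simp [ha, hb]) H

theorem normalForm_pT {a b : Term} (hc : Ground c) (ha : NormalForm (rules c n) a)
    (hb : NormalForm (rules c n) b) : NormalForm (rules c n) (pT a b) := by
  rcases normal_or_root (R := rules c n) (f := 2) (ts := [a, b])
    (by simp [ha, hb]) with h | ⟨u, hu⟩
  · exact h
  · rw [rootStep_iff hc] at hu
    cases hu

theorem wnon_pT {a b : Term} (hc : Ground c) (ha : WNon (rules c n) a)
    (hb : WNon (rules c n) b) : WNon (rules c n) (pT a b) :=
  WNon.app₂ ha hb fun _ _ h1 h2 => NormalForm.wnon (normalForm_pT hc h1 h2)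

theorem WNon.arg₂ {R : List (Term × Term)} {f : ℕ} {a b : Term} (hb : WNon R b)
    (H : ∀ b', NormalForm R b' → WNon R (.app f [a, b'])) : WNon R (.app f [a, b]) :=
  let ⟨b', h1, h2⟩ := hb
  WNon.of_reduces (Reduces.arg₂ f a h1) (H b' h2)

/-- Termination of a recursion on `y`, given termination of the two programs involved. -/
theorem wnon_prec {f g : Term} (hc : Ground c) (hfg : NormalForm (rules c n) (cPc f g))
    (hf : ∀ x, NormalForm (rules c n) x → WNon (rules c n) (ap f x))
    (hg : ∀ x, NormalForm (rules c n) x → WNon (rules c n) (ap g x)) {a : Term}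
    (ha : NormalForm (rules c n) a) (y : Term) :
    NormalForm (rules c n) y → WNon (rules c n) (ap (cPc f g) (pT y a)) := by
  induction y using term_induction with
  | var m =>
    intro hy
    exact wnon_of_root₂ hc hfg (normalForm_pT hc hy ha) fun u hu => by cases hu
  | app k ts ih =>
    intro hy
    refine wnon_of_root₂ hc hfg (normalForm_pT hc hy ha) fun u hu => ?_
    cases hu with
    | pcZero => exact hf a ha
    | pcSucc _ _ y =>
      have hy' := NormalForm.arg hy (t := y) (by simp)
      exact WNon.arg₂ (wnon_pT hc (NormalForm.wnon hy')
        (wnon_pT hc (ih y (by simp) hy') (NormalForm.wnon ha))) hg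

/-- The interpreter always terminates, since a program is consumed as it runs. -/
theorem wnon_ap (hc : Ground c) (a : Term) : NormalForm (rules c n) a →
    ∀ x, NormalForm (rules c n) x → WNon (rules c n) (ap a x) := by
  induction a using term_induction with
  | var m => exact fun ha x hx => wnon_of_root₂ hc ha hx fun u hu => by cases hu
  | app k ts ih =>
    intro ha x hx
    refine wnon_of_root₂ hc ha hx fun u hu => ?_
    cases hu with
    | z => exact wnon_of_root hc (by simp) fun u hu => by cases hu
    | s => exact wnon_of_root hc (by simpa using hx) fun u hu => by cases hu
    | l => exact NormalForm.wnon (NormalForm.arg hx (by simp))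
    | r => exact NormalForm.wnon (NormalForm.arg hx (by simp))
    | pr f g =>
      exact wnon_pT hc (ih f (by simp) (NormalForm.arg ha (by simp)) x hx)
        (ih g (by simp) (NormalForm.arg ha (by simp)) x hx)
    | cm f g =>
      exact WNon.arg₂ (ih g (by simp) (NormalForm.arg ha (by simp)) x hx) (ih f (by simp) (NormalForm.arg ha (by simp)))
    | pcZero f g b => exact ih f (by simp) (NormalForm.arg ha (by simp)) b (NormalForm.arg hx (by simp))
    | pcSucc f g y b =>
      have hg := ih g (by simp) (NormalForm.arg ha (by simp))
      have hy : NormalForm (rules c n) y := NormalForm.arg (NormalForm.arg hx (t := sT y) (by simp)) (by simp)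
      have hb : NormalForm (rules c n) b := NormalForm.arg hx (by simp)
      exact WNon.arg₂ (wnon_pT hc (NormalForm.wnon hy) (wnon_pT hc
        (wnon_prec hc ha (ih f (by simp) (NormalForm.arg ha (by simp))) hg hb y hy)
        (NormalForm.wnon hb))) hg

/-- On a normal form that is not a numeral, `chk` gets stuck. -/
theorem wnon_chk_of_ne_num (hc : Ground c) {x : Term} (hx : NormalForm (rules c n) x) (y : Term) :
    NormalForm (rules c n) y → (∀ k, y ≠ num k) → WNon (rules c n) (chk y x) := by
  induction y using term_induction with
  | var m => exact fun hy _ => wnon_of_root₂ hc hy hx fun u hu => by cases hu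
  | app k ts ih =>
    intro hy hk
    refine wnon_of_root₂ hc hy hx fun u hu => ?_
    cases hu with
    | chkSucc y =>
      refine ih y (by simp) (NormalForm.arg hy (by simp)) ?_
      rintro j rfl
      exact hk (j + 1) rfl
    | chkZero => exact absurd rfl (hk 0)

theorem chk_num_reduces (hc : Ground c) (x : Term) :
    ∀ k, Reduces (rules c n) (chk (num k) x) (srch x zeroT)
  | 0 => (Root.chkZero _).reduces hc
  | k + 1 => .trans ((Root.chkSucc _ _).reduces hc) (chk_num_reduces hc x k)

theorem srch_num_reduces (hc : Ground c) (x : Term) :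
    ∀ k, Reduces (rules c n) (srch x zeroT) (srch x (num k))
  | 0 => .refl
  | k + 1 => .trans (srch_num_reduces hc x k) ((Root.next _ _).reduces hc)

/-- The program `c` finds a zero for each input. -/
def Total (c : Term) (n : ℕ) : Prop :=
  ∀ x, ∃ k, Reduces (rules c n) (ap c (lst [n, x, k])) zeroT

theorem wnon_chk_self (hc : Ground c) (ht : Total c n) {x : Term}
    (hx : NormalForm (rules c n) x) : WNon (rules c n) (chk x x) := by
  by_cases h : ∃ k, x = num k
  · obtain ⟨m, rfl⟩ := h
    obtain ⟨k, hk⟩ := ht m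
    refine WNon.of_reduces (t := zeroT) ?_ (wnon_of_root hc (by simp) fun u hu => by cases hu)
    refine .trans (chk_num_reduces hc _ m) (.trans (srch_num_reduces hc _ k) ?_)
    exact .trans ((Root.test _ _).reduces hc)
      (.trans (Reduces.arg₁ 13 _ hk) ((Root.halt _).reduces hc))
  · push Not at h
    exact wnon_chk_of_ne_num hc hx x hx h

/-- A search with a bad candidate can be abandoned through a restart. -/
theorem wnon_srch (hc : Ground c) (ht : Total c n) {x : Term}
    (hx : NormalForm (rules c n) x) (b : Term) : WNon (rules c n) (srch x b) :=
  WNon.of_reduces (.trans ((Root.test _ _).reduces hc) ((Root.restart _ _).reduces hc))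
    (wnon_chk_self hc ht hx)

theorem wnon_chk (hc : Ground c) (ht : Total c n) {x y : Term}
    (hy : NormalForm (rules c n) y) (hx : NormalForm (rules c n) x) :
    WNon (rules c n) (chk y x) := by
  by_cases h : ∃ k, y = num k
  · obtain ⟨m, rfl⟩ := h
    exact WNon.of_reduces (chk_num_reduces hc _ m) (wnon_srch hc ht hx _)
  · push Not at h
    exact wnon_chk_of_ne_num hc hx y hy h

theorem wnon_of_total (hc : Ground c) (ht : Total c n) (t : Term) : WNon (rules c n) t := by
  induction t using term_induction with
  | var m =>
    refine NormalForm.wnon fun u hu => ?_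
    rcases rewrite_cases hu with hu | ⟨_, _, _, _, _, h, -⟩
    · rw [rootStep_iff hc] at hu
      cases hu
    · cases h
  | app f ts ih =>
    refine WNon.app ih fun ss hss => ?_
    rcases normal_or_root hss with h | ⟨u, hu⟩
    · exact NormalForm.wnon h
    rw [rootStep_iff hc] at hu
    cases hu
    case test x k => exact wnon_srch hc ht (hss x (by simp)) k
    case next x k => exact wnon_srch hc ht (hss x (by simp)) k
    case chkSucc y x => exact wnon_chk hc ht (hss _ (by simp)) (hss _ (by simp))
    case chkZero x => exact wnon_chk hc ht (hss _ (by simp)) (hss _ (by simp))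
    case halt x =>
      exact WNon.of_reduces ((Root.restart _ _).reduces hc)
        (wnon_chk_self hc ht (hss x (by simp)))
    case restart z x =>
      exact WNon.of_reduces ((Root.restart _ _).reduces hc)
        (wnon_chk_self hc ht (hss x (by simp)))
    all_goals exact wnon_ap hc _ (hss _ (by simp)) _ (hss _ (by simp))

/-! ### A failing search has no normal form -/

/-- Values denoted by terms: numbers, pairs and programs. -/
inductive Val : Type
  | zero : Val
  | succ : Val → Val
  | pair : Val → Val → Val
  | cz : Val
  | cs : Val
  | cl : Val
  | cr : Val
  | cpr : Val → Val → Val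
  | ccm : Val → Val → Val
  | cpc : Val → Val → Val

namespace Val

/-- Primitive recursion over a value; anything other than `zero` and `succ` yields `zero`. -/
def precAux (F G : Val → Val) (a : Val) : Val → Val
  | zero => F a
  | succ y => G (pair y (pair (precAux F G a y) a))
  | _ => zero

/-- The result of running a program on an argument, `zero` in all ill-formed cases. -/
def run : Val → Val → Val
  | cs, x => succ x
  | cl, pair a _ => a
  | cr, pair _ b => b
  | cpr f g, x => pair (run f x) (run g x)
  | ccm f g, x => run f (run g x)
  | cpc f g, pair y a => precAux (run f) (run g) a y
  | _, _ => zero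

/-- The interpretation of the function symbols, `zero` for the symbols of the search loop. -/
def op : ℕ → List Val → Val
  | 1, [a] => succ a
  | 2, [a, b] => pair a b
  | 3, [] => cz
  | 4, [] => cs
  | 5, [] => cl
  | 6, [] => cr
  | 7, [a, b] => cpr a b
  | 8, [a, b] => ccm a b
  | 9, [a, b] => cpc a b
  | 10, [a, b] => run a b
  | _, _ => zero

end Val

/-- The value denoted by a term, variables being interpreted by `zero`. -/
def sem : Term → Val
  | .var _ => .zero
  | .app f ts => Val.op f (ts.attach.map (fun x => sem x.1))
decreasing_by
  have := List.sizeOf_lt_of_mem x.2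
  simp only [Term.app.sizeOf_spec]; omega

theorem sem_app (f : ℕ) (ts : List Term) : sem (.app f ts) = Val.op f (ts.map sem) := by
  rw [sem]
  simp

/-- Denotation is invariant under rewriting. -/
theorem sem_rewrite (hc : Ground c) {s t : Term} (h : Rewrite (rules c n) s t) :
    sem s = sem t := by
  induction h with
  | rule l r σ h =>
    have := (rootStep_iff hc).1 ⟨l, r, σ, h, rfl, rfl⟩
    generalize l.subst σ = s at this
    generalize r.subst σ = t at this
    cases this <;> simp [sem_app, Val.op, Val.run, Val.precAux]
  | congr f ts₁ ts₂ a a' _ ih => simp [sem_app, ih]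

theorem sem_reduces (hc : Ground c) {s t : Term} (h : Reduces (rules c n) s t) :
    sem s = sem t := by
  induction h with
  | refl => rfl
  | tail _ h ih => exact ih.trans (sem_rewrite hc h)

theorem sem_num_eq_zero {k : ℕ} : sem (num k) = .zero ↔ k = 0 := by
  cases k <;> simp [num, sem_app, Val.op]

theorem normalForm_num (hc : Ground c) (k : ℕ) : NormalForm (rules c n) (num k) := by
  induction k with
  | zero =>
    rcases normal_or_root (R := rules c n) (f := 0) (ts := []) (by simp) with h | ⟨u, hu⟩
    · exact h
    · rw [rootStep_iff hc] at hu
      cases hu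
  | succ k ih =>
    rcases normal_or_root (R := rules c n) (f := 1) (ts := [num k]) (by simpa using ih)
      with h | ⟨u, hu⟩
    · exact h
    · rw [rootStep_iff hc] at hu
      cases hu

/-- The terms reachable from `chk (num x) (num x)` when the search at `x` fails. -/
inductive Live (x : ℕ) : Term → Prop
  | chk (y : ℕ) : Live x (chk (num y) (num x))
  | srch (b : Term) (k : ℕ) (h : sem b = sem (num k)) : Live x (srch (num x) b)
  | tst (z : Term) (h : sem z ≠ .zero) : Live x (tst z (num x))

/-- Rewriting inside a candidate or a pending test does not change its value, so a failing test
can never reach the numeral `0`. -/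
theorem Live.step (hc : Ground c) {x : ℕ} (H : ∀ k, sem (ap c (lst [n, x, k])) ≠ .zero)
    {t u : Term} (ht : Live x t) (h : Rewrite (rules c n) t u) : Live x u := by
  cases ht with
  | chk y =>
    rcases rewrite_cases₂ h with h | ⟨a', h, -⟩ | ⟨b', h, -⟩
    · rw [rootStep_iff hc] at h
      rcases y with _ | y
      · cases h
        exact .srch _ 0 rfl
      · cases h
        exact .chk y
    · exact absurd h (normalForm_num hc _ _)
    · exact absurd h (normalForm_num hc _ _)
  | srch b k hb =>
    rcases rewrite_cases₂ h with h | ⟨a', h, -⟩ | ⟨b', hb', rfl⟩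
    · rw [rootStep_iff hc] at h
      cases h
      · refine .tst _ ?_
        have := H k
        simp only [lst, sem_app, List.map_cons, List.map_nil, hb] at this ⊢
        exact this
      · exact .srch _ (k + 1) (by simp [num, sem_app, hb])
    · exact absurd h (normalForm_num hc _ _)
    · exact .srch _ k ((sem_rewrite hc hb').symm.trans hb)
  | tst z hz =>
    rcases rewrite_cases₂ h with h | ⟨z', hz', rfl⟩ | ⟨b', h, -⟩
    · rw [rootStep_iff hc] at h
      cases h
      · exact absurd (by simp [sem_app, Val.op]) hz
      · exact .chk x
    · exact .tst _ (sem_rewrite hc hz' ▸ hz)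
    · exact absurd h (normalForm_num hc _ _)

theorem Live.not_normal (hc : Ground c) {x : ℕ} {t : Term} (ht : Live x t) :
    ¬ NormalForm (rules c n) t := by
  intro h
  cases ht with
  | chk y =>
    rcases y with _ | y
    · exact h _ ((Root.chkZero _).rewrite hc)
    · exact h _ ((Root.chkSucc _ _).rewrite hc)
  | srch b => exact h _ ((Root.next _ _).rewrite hc)
  | tst z => exact h _ ((Root.restart _ _).rewrite hc)

theorem not_wnon_of_fails (hc : Ground c) {x : ℕ}
    (H : ∀ k, sem (ap c (lst [n, x, k])) ≠ .zero) :
    ¬ WNon (rules c n) (chk (num x) (num x)) := by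
  rintro ⟨s, h1, h2⟩
  refine Live.not_normal hc (x := x) ?_ h2
  clear h2
  induction h1 with
  | refl => exact .chk x
  | tail _ h ih => exact Live.step hc H ih h

end Systems

/-! ### The reduction -/

/-- Correctness of the construction: the system is weakly normalizing iff every search succeeds. -/
theorem wn_rules_iff {C : Term} {f : List.Vector ℕ 3 → ℕ} (hC : Computes C f) (n : ℕ) :
    (∀ t, WFTerm sig t → WNon (rules C n) t) ↔
      ∀ x, ∃ k, f (n ::ᵥ x ::ᵥ k ::ᵥ .nil) = 0 := by
  obtain ⟨hc, hwf, hr⟩ := hC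
  have hr' : ∀ x k, Reduces (rules C n) (ap C (lst [n, x, k]))
      (num (f (n ::ᵥ x ::ᵥ k ::ᵥ .nil))) := fun x k => hr C n hc (n ::ᵥ x ::ᵥ k ::ᵥ .nil)
  constructor
  · intro h x
    by_contra! hx
    refine not_wnon_of_fails hc (n := n) (x := x) (fun k hk => ?_)
      (h _ (.app (by simp [sig]) (by simp [wf_num])))
    rw [sem_reduces hc (hr' x k), sem_num_eq_zero] at hk
    exact hx k hk
  · intro h t _
    refine wnon_of_total hc (fun x => ?_) t
    obtain ⟨k, hk⟩ := h x
    exact ⟨k, by simpa only [hk, num] using hr' x k⟩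

theorem primrec_num : Primrec num := by
  have : Primrec fun n : ℕ => Nat.rec (motive := fun _ => Term) zeroT (fun _ t => sT t) n :=
    Primrec.nat_rec₁ zeroT (by fun_prop : Primrec fun p : ℕ × Term => sT p.2)
  refine this.of_eq fun n => ?_
  induction n with
  | zero => rfl
  | succ n ih => exact congrArg sT ih

theorem primrec_code (C : Term) :
    Primrec fun n => Nat.pair (encodeSig sig) (encodeTRS (rules C n)) := by
  have hn : Primrec fun n : ℕ => num n := primrec_num
  simp only [encodeTRS_eq, rules, testRule]
  fun_prop

/-- Every `Π⁰₂` set is of the form `{n | ∀ x, ∃ k, f (n, x, k) = 0}` with `f` primitive recursive: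
the witness `k` also bounds the running time of an unbounded search. -/
theorem Pi02.exists_primrec {B : Set ℕ} (hB : Pi02 B) : ∃ f : List.Vector ℕ 3 → ℕ,
    Nat.Primrec' f ∧ ∀ n, n ∈ B ↔ ∀ x, ∃ k, f (n ::ᵥ x ::ᵥ k ::ᵥ .nil) = 0 := by
  obtain ⟨p, hp, hB⟩ := hB
  have hs : Partrec fun m : ℕ =>
      Nat.rfind (PFun.lift fun y => p m.unpair.1 m.unpair.2 y) := by
    have h1 : Primrec fun a : ℕ × ℕ => a.1.unpair := Primrec.unpair.comp .fst
    have h2 : Primrec fun a : ℕ × ℕ => (a.1.unpair.1, a.1.unpair.2, a.2) :=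
      (Primrec.fst.comp h1).pair ((Primrec.snd.comp h1).pair .snd)
    have h3 : Computable fun a : ℕ × ℕ => p a.1.unpair.1 a.1.unpair.2 a.2 :=
      Computable.comp (f := fun x : ℕ × ℕ × ℕ => p x.1 x.2.1 x.2.2)
        (g := fun a : ℕ × ℕ => (a.1.unpair.1, a.1.unpair.2, a.2)) hp h2.to_comp
    have h4 : Computable₂ fun m y : ℕ => p m.unpair.1 m.unpair.2 y := h3
    exact Partrec.rfind h4.partrec₂
  obtain ⟨e, he⟩ := Nat.Partrec.Code.exists_code.1 (Partrec.nat_iff.1 hs)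
  let g (v : List.Vector ℕ 3) : Option ℕ :=
    e.evaln (v.get 2) (Nat.pair (v.get 0) (v.get 1))
  refine ⟨fun v => bif (g v).isSome then 0 else 1, Nat.Primrec'.of_prim ?_, fun n => ?_⟩
  · have hget (i : Fin 3) : Primrec fun v : List.Vector ℕ 3 => v.get i :=
      Primrec.vector_get.comp .id (.const i)
    have hg : Primrec g := Nat.Partrec.Code.primrec_evaln.comp
      (((hget 2).pair (.const e)).pair (Primrec₂.natPair.comp (hget 0) (hget 1)))
    exact Primrec.cond (Primrec.option_isSome.comp hg) (.const 0) (.const 1)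
  · rw [hB]
    refine forall_congr' fun x => ?_
    have h1 : (∃ y, p n x y = true) ↔ (e.eval (Nat.pair n x)).Dom := by
      rw [he]
      refine Iff.trans ?_ Nat.rfind_dom'.symm
      simp
    have h2 (k : ℕ) : g (n ::ᵥ x ::ᵥ k ::ᵥ .nil) = e.evaln k (Nat.pair n x) := rfl
    rw [h1, Part.dom_iff_mem]
    simp only [h2, Nat.Partrec.Code.evaln_complete, Bool.cond_eq_ite, ite_eq_left_iff,
      Option.isSome_iff_exists, Option.mem_def]
    rw [exists_comm]
    simp

theorem manyOneRed_wn {B : Set ℕ} (hB : Pi02 B) :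
    ManyOneRed B { n : ℕ | ∃ (sig : List (ℕ × ℕ)) (R : List (Term × Term)),
      WFTRS sig R ∧ n = Nat.pair (encodeSig sig) (encodeTRS R) ∧
      ∀ t : Term, WFTerm sig t → WNon R t } := by
  obtain ⟨f, hf, hB⟩ := Pi02.exists_primrec hB
  obtain ⟨C, hC⟩ := exists_computes hf
  refine ⟨_, (primrec_code C).to_comp, fun n => ?_⟩
  rw [hB, ← wn_rules_iff hC]
  constructor
  · exact fun h => ⟨sig, rules C n, wfTRS_rules hC.1 hC.2.1 n, rfl, h⟩
  · rintro ⟨S, R, -, h1, h2⟩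
    rw [Nat.pair_eq_pair, encodeTRS_eq, encodeTRS_eq] at h1
    obtain rfl : sig = S := Encodable.encode_injective h1.1
    obtain rfl : rules C n = R := Encodable.encode_injective h1.2
    exact h2

end WNUniform

/-- Uniform weak normalization (on every term over the signature) of a
finite TRS is Π⁰₂-complete. -/
theorem wn_uniform_Pi02Complete :
    Pi02Complete { n : ℕ | ∃ (sig : List (ℕ × ℕ)) (R : List (Term × Term)),
      WFTRS sig R ∧ n = Nat.pair (encodeSig sig) (encodeTRS R) ∧
      ∀ t : Term, WFTerm sig t → WNon R t } :=
  ⟨WNUniform.pi02_wn, fun _ hB => WNUniform.manyOneRed_wn hB⟩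
end

section
/- The set of codes of finite term rewriting systems R (over finite signatures) such that R is confluent on every term is Π⁰₂-complete. -/
/-! ### Terms as a primitive recursive data type -/

namespace Term

theorem ind {motive : Term → Prop} (hvar : ∀ n, motive (.var n))
    (happ : ∀ f ts, (∀ t ∈ ts, motive t) → motive (.app f ts)) : ∀ t, motive t
  | .var n => hvar n
  | .app f ts => happ f ts fun t ht =>
      have := List.sizeOf_lt_of_mem ht
      ind hvar happ t
termination_by t => t

@[simp] theorem subst_var (σ : ℕ → Term) (n : ℕ) : (Term.var n).subst σ = σ n := by
  simp [subst]

@[simp] theorem subst_app (σ : ℕ → Term) (f : ℕ) (ts : List Term) :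
    (Term.app f ts).subst σ = .app f (ts.map (subst σ)) := by
  rw [subst]; simp

@[simp] theorem encode_var (n : ℕ) : (Term.var n).encode = Nat.pair 0 n := by
  simp [encode]

@[simp] theorem encode_app (f : ℕ) (ts : List Term) :
    (Term.app f ts).encode = Nat.pair (f + 1) (Encodable.encode (ts.map encode)) := by
  rw [encode]; simp

theorem encode_inj : Function.Injective encode := by
  intro s
  induction s using ind with
  | hvar n => intro t h; cases t <;> simp_all
  | happ f ts ih =>
    intro t h
    cases t with
    | var n => simp at h
    | app g us =>
      simp only [encode_app, Nat.pair_eq_pair, Encodable.encode_inj, add_left_inj] at h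
      obtain ⟨rfl, h⟩ := h
      congr 1
      induction ts generalizing us with
      | nil => simp_all
      | cons a ts iht =>
        cases us with
        | nil => simp at h
        | cons b us =>
          simp only [List.map_cons, List.cons.injEq] at h
          rw [ih a (by simp) h.1, iht (fun t ht => ih t (by simp [ht])) us h.2]

theorem mem_lt_encode {l : List ℕ} {m : ℕ} (h : m ∈ l) : m < Encodable.encode l := by
  induction l with
  | nil => simp at h
  | cons a l ih =>
    rw [Encodable.encode_list_cons]
    rcases List.mem_cons.1 h with rfl | h
    · exact Nat.lt_succ_of_le (Nat.left_le_pair _ _)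
    · exact Nat.lt_succ_of_le ((ih h).le.trans (Nat.right_le_pair _ _))

theorem encode_surj : Function.Surjective encode := by
  intro n
  induction n using Nat.strong_induction_on with
  | _ n ih =>
    rcases h : n.unpair.1 with _ | f
    · exact ⟨.var n.unpair.2, by rw [encode_var, ← h, Nat.pair_unpair]⟩
    · have hl : ∀ m ∈ Denumerable.ofNat (List ℕ) n.unpair.2, ∃ t : Term, t.encode = m := by
        intro m hm
        have := mem_lt_encode hm
        rw [Denumerable.encode_ofNat] at this
        exact ih m (this.trans_le (Nat.unpair_right_le n))
      have : ∀ l : List ℕ, (∀ m ∈ l, ∃ t : Term, t.encode = m) →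
          ∃ ts : List Term, ts.map encode = l := by
        intro l
        induction l with
        | nil => exact fun _ => ⟨[], rfl⟩
        | cons a l ihl =>
          intro h
          obtain ⟨t, ht⟩ := h a (by simp)
          obtain ⟨ts, hts⟩ := ihl fun m hm => h m (by simp [hm])
          exact ⟨t :: ts, by simp [ht, hts]⟩
      obtain ⟨ts, hts⟩ := this _ hl
      refine ⟨.app f ts, ?_⟩
      rw [encode_app, hts, Denumerable.encode_ofNat, ← h, Nat.pair_unpair]

/-- The coding of terms is a bijection, so it presents `Term` as a copy of `ℕ`. -/
noncomputable def equivNat : Term ≃ ℕ := Equiv.ofBijective encode ⟨encode_inj, encode_surj⟩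

noncomputable instance : Denumerable Term := Denumerable.mk' equivNat

noncomputable instance : Primcodable Term := Primcodable.ofDenumerable Term

instance : Inhabited Term := ⟨.var 0⟩

theorem encode_eq (t : Term) : Encodable.encode t = t.encode := rfl

theorem encode_list_eq (ts : List Term) :
    Encodable.encode (ts.map encode) = Encodable.encode ts := by
  induction ts with
  | nil => rfl
  | cons a l ih => simp [ih, encode_eq]

theorem primrec_var : Primrec Term.var :=
  Primrec.encode_iff.1 <| (Primrec₂.natPair.comp (.const 0) .id).of_eq fun n => by
    simp [encode_eq]

theorem primrec_app : Primrec₂ Term.app :=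
  Primrec₂.encode_iff.1 <|
    (Primrec₂.natPair.comp (Primrec.succ.comp .fst) (Primrec.encode.comp .snd)).of_eq fun x => by
      simp [encode_eq, encode_list_eq]

/-- `0` for a variable, `f + 1` for an application of the symbol `f`. -/
def tag : Term → ℕ
  | .var _ => 0
  | .app f _ => f + 1

theorem primrec_tag : Primrec tag :=
  (Primrec.fst.comp (Primrec.unpair.comp Primrec.encode)).of_eq fun t => by
    cases t <;> simp [encode_eq, tag]

/-- Structural recursion over terms, with parameter `a`. -/
def fold {α σ : Type} (V : α → ℕ → σ) (H : α → ℕ → List σ → σ) (a : α) : Term → σ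
  | .var n => V a n
  | .app f ts => H a f (ts.attach.map fun x => fold V H a x.1)
decreasing_by
  have := List.sizeOf_lt_of_mem x.2
  simp only [Term.app.sizeOf_spec]; omega

section
variable {α σ : Type} (V : α → ℕ → σ) (H : α → ℕ → List σ → σ) (a : α)

@[simp] theorem fold_var (n : ℕ) : fold V H a (.var n) = V a n := by simp [fold]

@[simp] theorem fold_app (f : ℕ) (ts : List Term) :
    fold V H a (.app f ts) = H a f (ts.map (fold V H a)) := by
  rw [fold]; simp

end

/-- Structural recursion over terms is course-of-values recursion over their codes, since every
argument of a term has a smaller code than the term itself. -/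
theorem primrec_fold {α σ : Type} [Primcodable α] [Primcodable σ] [Inhabited σ]
    {V : α → ℕ → σ} {H : α → ℕ → List σ → σ}
    (hV : Primrec₂ V) (hH : Primrec fun x : α × ℕ × List σ => H x.1 x.2.1 x.2.2) :
    Primrec₂ (fold V H) := by
  let g : α → List σ → Option σ := fun a l =>
    if l.length.unpair.1 = 0 then some (V a l.length.unpair.2)
    else some (H a l.length.unpair.1.pred
      ((Denumerable.ofNat (List ℕ) l.length.unpair.2).map fun m => l.getD m default))
  have hlen : Primrec fun x : α × List σ => x.2.length.unpair :=
    Primrec.unpair.comp (Primrec.list_length.comp .snd)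
  have hg : Primrec₂ g := by
    refine Primrec.ite (Primrec.eq.comp (Primrec.fst.comp hlen) (.const 0))
      (Primrec.option_some.comp (hV.comp .fst (Primrec.snd.comp hlen)))
      (Primrec.option_some.comp (hH.comp (Primrec.pair .fst (Primrec.pair
        (Primrec.pred.comp (Primrec.fst.comp hlen)) ?_))))
    refine Primrec.list_map ((Primrec.ofNat (List ℕ)).comp (Primrec.snd.comp hlen)) ?_
    exact (Primrec.list_getD default).comp (Primrec.snd.comp .fst) .snd
  have := Primrec.nat_strong_rec (fun a n => fold V H a (equivNat.symm n)) hg ?_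
  · refine (this.comp .fst (Primrec.encode.comp .snd)).of_eq fun x => ?_
    congr 1
    exact equivNat.symm_apply_apply x.2
  · intro a n
    obtain ⟨t, rfl⟩ := equivNat.surjective n
    have het : equivNat t = t.encode := rfl
    simp only [g, List.length_map, List.length_range, Equiv.symm_apply_apply]
    cases t with
    | var m => simp [het]
    | app f ts =>
      have hmem : ∀ t ∈ ts, t.encode < equivNat (.app f ts) := by
        intro t ht
        rw [het, encode_app]
        exact (mem_lt_encode (List.mem_map_of_mem ht)).trans_le (Nat.right_le_pair _ _)
      rw [if_neg (by simp [het])]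
      simp only [fold_app, Option.some.injEq]
      congr 1
      · simp [het]
      · have : (equivNat (.app f ts)).unpair.2 = Encodable.encode (ts.map encode) := by simp [het]
        rw [this, Denumerable.ofNat_encode, List.map_map]
        refine List.map_congr_left fun t ht => ?_
        have h1 := hmem t ht
        simp only [Function.comp, List.getD_eq_getElem?_getD, List.getElem?_map,
          List.getElem?_range h1, Option.map_some, Option.getD_some]
        congr 1
        exact equivNat.symm_apply_apply t

end Term

/-! ### Confluence is a `Π⁰₂` property -/

theorem isVarOf_var {n m : ℕ} : IsVarOf n (.var m) ↔ n = m := by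
  constructor
  · rintro ⟨⟩; rfl
  · rintro rfl; exact .var

theorem isVarOf_app {n f : ℕ} {ts : List Term} :
    IsVarOf n (.app f ts) ↔ ∃ t ∈ ts, IsVarOf n t := by
  constructor
  · rintro ⟨⟩; exact ⟨_, ‹_›, ‹_›⟩
  · rintro ⟨t, h, h'⟩; exact .app h h'

theorem wfTerm_app {sig : List (ℕ × ℕ)} {f : ℕ} {ts : List Term} :
    WFTerm sig (.app f ts) ↔ (f, ts.length) ∈ sig ∧ ∀ t ∈ ts, WFTerm sig t := by
  constructor
  · rintro ⟨⟩; exact ⟨‹_›, ‹_›⟩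
  · rintro ⟨h, h'⟩; exact .app h h'

namespace Term

/-- The list of variables occurring in a term. -/
def vars : Term → List ℕ :=
  fold (fun (_ : Unit) n => [n]) (fun _ _ ls => ls.flatten) ()

theorem mem_vars {n : ℕ} {t : Term} : n ∈ t.vars ↔ IsVarOf n t := by
  induction t using ind with
  | hvar m => simp [vars, isVarOf_var]
  | happ f ts ih =>
    simp only [vars, fold_app, List.mem_flatten, List.mem_map, isVarOf_app] at ih ⊢
    constructor
    · rintro ⟨_, ⟨t, ht, rfl⟩, h⟩; exact ⟨t, ht, (ih t ht).1 h⟩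
    · rintro ⟨t, ht, h⟩; exact ⟨_, ⟨t, ht, rfl⟩, (ih t ht).2 h⟩

theorem primrec_vars : Primrec vars :=
  (primrec_fold (α := Unit) (V := fun _ n => [n]) (H := fun _ _ ls => ls.flatten)
    (Primrec.list_cons.comp .snd (.const []))
    (Primrec.list_flatten.comp (Primrec.snd.comp .snd))).comp (.const ()) .id

/-- Decision procedure for `WFTerm`. -/
def wfb : List (ℕ × ℕ) → Term → Bool :=
  fold (fun _ _ => true) fun sig f bs => decide ((f, bs.length) ∈ sig ∧ ∀ b ∈ bs, b = true)

theorem wfb_iff {sig : List (ℕ × ℕ)} {t : Term} : wfb sig t = true ↔ WFTerm sig t := by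
  induction t using ind with
  | hvar m => simp [wfb, WFTerm.var]
  | happ f ts ih =>
    simp only [wfb, fold_app, List.length_map, List.mem_map, forall_exists_index, and_imp,
      forall_apply_eq_imp_iff₂, decide_eq_true_eq, wfTerm_app] at ih ⊢
    exact and_congr_right fun _ => forall₂_congr ih

theorem primrec_mem {α : Type} [Primcodable α] : PrimrecRel fun (a : α) (l : List α) => a ∈ l :=
  ((PrimrecRel.exists_mem_list (R := fun b a : α => b = a) Primrec.eq).swap).of_eq
    fun _ _ => by simp

theorem primrec_wfb : Primrec₂ wfb := by
  refine primrec_fold (.const true) (PrimrecPred.decide (.and ?_ ?_))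
  · exact primrec_mem.comp (Primrec.pair (Primrec.fst.comp .snd)
      (Primrec.list_length.comp (Primrec.snd.comp .snd))) Primrec.fst
  · exact (PrimrecPred.forall_mem_list (p := fun b => b = true)
      (Primrec.eq.comp .id (.const true))).comp (Primrec.snd.comp .snd)

/-- The substitution given by a finite list of terms. -/
def listSubst (L : List Term) (t : Term) : Term := t.subst fun n => L.getD n (.var 0)

theorem primrec_listSubst : Primrec₂ listSubst := by
  refine (primrec_fold (α := List Term) (σ := Term) (V := fun L n => L.getD n (.var 0))
    (H := fun _ f ts => .app f ts) (Primrec.list_getD _)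
    (primrec_app.comp (Primrec.fst.comp .snd) (Primrec.snd.comp .snd))).of_eq fun L t => ?_
  induction t using ind with
  | hvar m => simp [listSubst]
  | happ f ts ih =>
    simp only [listSubst, fold_app, subst_app] at ih ⊢
    rw [List.map_congr_left ih]

theorem subst_congr {σ τ : ℕ → Term} {t : Term} (h : ∀ n, IsVarOf n t → σ n = τ n) :
    t.subst σ = t.subst τ := by
  induction t using ind with
  | hvar m => simpa using h m .var
  | happ f ts ih =>
    simp only [subst_app]
    rw [List.map_congr_left fun t ht => ih t ht fun n hn => h n (.app ht hn)]

theorem exists_listSubst (σ : ℕ → Term) (N : ℕ) (t : Term) (h : ∀ n, IsVarOf n t → n < N) :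
    listSubst ((List.range N).map σ) t = t.subst σ := by
  refine subst_congr fun n hn => ?_
  simp [List.getElem?_range (h n hn)]

/-- Put a term into the hole of a context, given as the list of its layers from the outside in:
a layer is a symbol together with the arguments to the left and to the right of the hole. -/
def plug (C : List (ℕ × List Term × List Term)) (t : Term) : Term :=
  C.foldr (fun c t => .app c.1 (c.2.1 ++ t :: c.2.2)) t

theorem primrec_plug : Primrec₂ plug := by
  refine Primrec.to₂ <| Primrec.list_foldr
    (f := fun a : List (ℕ × List Term × List Term) × Term => a.1) (g := fun a => a.2)
    (h := fun (_ : List (ℕ × List Term × List Term) × Term)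
      (x : (ℕ × List Term × List Term) × Term) =>
        Term.app x.1.1 (x.1.2.1 ++ x.2 :: x.1.2.2))
    Primrec.fst Primrec.snd ?_
  have hc : Primrec fun y : (List (ℕ × List Term × List Term) × Term) ×
      ((ℕ × List Term × List Term) × Term) => y.2.1 := Primrec.fst.comp .snd
  exact primrec_app.comp (Primrec.fst.comp hc) (Primrec.list_append.comp
    (Primrec.fst.comp (Primrec.snd.comp hc)) (Primrec.list_cons.comp (Primrec.snd.comp .snd)
    (Primrec.snd.comp (Primrec.snd.comp hc))))

end Term

theorem Rewrite.plug {R : List (Term × Term)} {s t : Term} (h : Rewrite R s t)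
    (C : List (ℕ × List Term × List Term)) : Rewrite R (Term.plug C s) (Term.plug C t) := by
  induction C with
  | nil => exact h
  | cons c C ih => exact .congr _ _ _ _ _ ih

/-- Data describing a rewrite step: the context, the rule, and the substitution. -/
abbrev StepData := List (ℕ × List Term × List Term) × (Term × Term) × List Term

open Classical in
/-- Perform the described rewrite step on `s` if it is one, and do nothing otherwise. -/
noncomputable def applyStep (R : List (Term × Term)) (s : Term) (d : StepData) : Term :=
  if d.2.1 ∈ R ∧ Term.plug d.1 (Term.listSubst d.2.2 d.2.1.1) = s then
    Term.plug d.1 (Term.listSubst d.2.2 d.2.1.2)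
  else s

theorem primrec_applyStep : Primrec fun x : List (Term × Term) × Term × StepData =>
    applyStep x.1 x.2.1 x.2.2 := by
  classical
  have hd : Primrec fun x : List (Term × Term) × Term × StepData => x.2.2 :=
    Primrec.snd.comp .snd
  have hr := Primrec.fst.comp (Primrec.snd.comp hd)
  have hL := Primrec.snd.comp (Primrec.snd.comp hd)
  have hC := Primrec.fst.comp hd
  exact Primrec.ite
    ((Term.primrec_mem.comp hr .fst).and (Primrec.eq.comp (Term.primrec_plug.comp hC
      (Term.primrec_listSubst.comp hL (Primrec.fst.comp hr))) (Primrec.fst.comp .snd)))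
    (Term.primrec_plug.comp hC (Term.primrec_listSubst.comp hL (Primrec.snd.comp hr)))
    (Primrec.fst.comp .snd)

theorem Rewrite.exists_applyStep {R : List (Term × Term)} {s t : Term} (h : Rewrite R s t) :
    ∃ d, applyStep R s d = t := by
  have : ∃ C r L, r ∈ R ∧ Term.plug C (Term.listSubst L r.1) = s ∧
      Term.plug C (Term.listSubst L r.2) = t := by
    induction h with
    | rule l r σ h =>
      obtain ⟨N, hN⟩ : ∃ N, ∀ n ∈ l.vars ++ r.vars, n < N :=
        ⟨(l.vars ++ r.vars).sum + 1, fun n hn => Nat.lt_succ_of_le (List.le_sum_of_mem hn)⟩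
      refine ⟨[], (l, r), (List.range N).map σ, h, ?_, ?_⟩ <;>
        refine Term.exists_listSubst σ N _ fun n hn => hN n ?_ <;>
        simp [Term.mem_vars, hn]
    | congr f ts₁ ts₂ t t' _ ih =>
      obtain ⟨C, r, L, hr, h1, h2⟩ := ih
      exact ⟨(f, ts₁, ts₂) :: C, r, L, hr, congrArg (fun u => Term.app f (ts₁ ++ u :: ts₂)) h1,
        congrArg (fun u => Term.app f (ts₁ ++ u :: ts₂)) h2⟩
  obtain ⟨C, r, L, hr, h1, h2⟩ := this
  exact ⟨(C, r, L), by rw [applyStep, if_pos ⟨hr, h1⟩]; exact h2⟩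

theorem applyStep_reduces (R : List (Term × Term)) (s : Term) (d : StepData) :
    Reduces R s (applyStep R s d) := by
  unfold applyStep
  split_ifs with h
  · rw [← h.2]
    exact .single (Rewrite.plug (.rule _ _ _ h.1) _)
  · exact .refl

/-- Perform a sequence of described steps. -/
noncomputable def applySteps (R : List (Term × Term)) (s : Term) (ds : List StepData) : Term :=
  ds.foldl (applyStep R) s

theorem reduces_iff {R : List (Term × Term)} {s t : Term} :
    Reduces R s t ↔ ∃ ds, applySteps R s ds = t := by
  constructor
  · intro h
    induction h with
    | refl => exact ⟨[], rfl⟩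
    | tail _ h ih =>
      obtain ⟨ds, rfl⟩ := ih
      obtain ⟨d, rfl⟩ := h.exists_applyStep
      exact ⟨ds ++ [d], by simp [applySteps]⟩
  · rintro ⟨ds, rfl⟩
    induction ds generalizing s with
    | nil => exact .refl
    | cons d ds ih => exact (applyStep_reduces R s d).trans ih

theorem primrec_applySteps : Primrec fun x : List (Term × Term) × Term × List StepData =>
    applySteps x.1 x.2.1 x.2.2 := by
  refine Primrec.list_foldl (h := fun x y => applyStep x.1 y.1 y.2) (Primrec.snd.comp .snd)
    (Primrec.fst.comp .snd) ?_
  exact primrec_applyStep.comp (Primrec.pair (Primrec.fst.comp .fst) Primrec.snd)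

theorem primrec_wftrs :
    PrimrecPred fun x : List (ℕ × ℕ) × List (Term × Term) => WFTRS x.1 x.2 := by
  have h1 : PrimrecPred fun x : List (ℕ × ℕ) × List (Term × Term) => WFSig x.1 := by
    have e : PrimrecRel fun q p : ℕ × ℕ => p.1 = q.1 → p.2 = q.2 :=
      ((Primrec.eq.comp (Primrec.fst.comp .snd) (Primrec.fst.comp .fst)).not.or
        (Primrec.eq.comp (Primrec.snd.comp .snd) (Primrec.snd.comp .fst))).of_eq
        fun _ => imp_iff_not_or.symm
    have e2 := e.forall_mem_list.swap.forall_mem_list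
    exact e2.comp .fst .fst
  have hv : PrimrecPred fun x : Term × Term => ∀ n, IsVarOf n x.2 → IsVarOf n x.1 := by
    have e := (Term.primrec_mem (α := ℕ)).forall_mem_list
    exact (e.comp (Term.primrec_vars.comp .snd) (Term.primrec_vars.comp .fst)).of_eq
      fun x => by simp [Term.mem_vars]
  have hw : PrimrecRel fun (p : Term × Term) (sig : List (ℕ × ℕ)) =>
      WFTerm sig p.1 ∧ WFTerm sig p.2 ∧ (∀ n : ℕ, p.1 ≠ .var n) ∧
        (∀ n : ℕ, IsVarOf n p.2 → IsVarOf n p.1) := by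
    have e1 : PrimrecRel fun (t : Term) (sig : List (ℕ × ℕ)) => WFTerm sig t :=
      (Primrec.eq.comp (Term.primrec_wfb.comp .snd .fst) (.const true)).of_eq
        fun x => Term.wfb_iff
    have e2 : PrimrecPred fun t : Term => ∀ n : ℕ, t ≠ .var n :=
      ((Primrec.eq.comp Term.primrec_tag (.const 0)).not).of_eq fun t => by
        cases t <;> simp [Term.tag]
    exact (e1.comp (Primrec.fst.comp .fst) .snd).and <|
      (e1.comp (Primrec.snd.comp .fst) .snd).and <|
      (e2.comp (Primrec.fst.comp .fst)).and (hv.comp .fst)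
  exact h1.and (hw.forall_mem_list.comp .snd .fst)

theorem encodeTRS_eq (R : List (Term × Term)) : encodeTRS R = Encodable.encode R := by
  unfold encodeTRS
  induction R with
  | nil => rfl
  | cons a l ih => simp [ih, encodeRule]; rfl

/-- A property of codes of the form `∀ c, ∃ d, q n c d`, with the quantifiers ranging over
arbitrary primitively coded types, is `Π⁰₂`. -/
theorem pi02_of_primrec {γ δ : Type} [Primcodable γ] [Primcodable δ] [Inhabited γ] [Inhabited δ]
    {A : Set ℕ} (q : ℕ → γ → δ → Prop) (hq : PrimrecPred fun x : ℕ × γ × δ => q x.1 x.2.1 x.2.2)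
    (hA : ∀ n, n ∈ A ↔ ∀ c, ∃ d, q n c d) : Pi02 A := by
  classical
  refine ⟨fun n x y => decide (q n ((Encodable.decode x : Option γ).getD default)
    ((Encodable.decode y : Option δ).getD default)), ?_, fun n => ?_⟩
  · refine Primrec.to_comp (PrimrecPred.decide (hq.comp (Primrec.pair .fst (Primrec.pair ?_ ?_))))
    · exact Primrec.option_getD_default.comp (Primrec.decode.comp (Primrec.fst.comp .snd))
    · exact Primrec.option_getD_default.comp (Primrec.decode.comp (Primrec.snd.comp .snd))
  · simp only [hA, decide_eq_true_eq]
    constructor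
    · intro h x
      obtain ⟨d, hd⟩ := h ((Encodable.decode x : Option γ).getD default)
      exact ⟨Encodable.encode d, by simpa using hd⟩
    · intro h c
      obtain ⟨y, hy⟩ := h (Encodable.encode c)
      exact ⟨_, by simpa using hy⟩

/-- The set of codes of confluent systems. -/
def CRSet : Set ℕ := { n : ℕ | ∃ (sig : List (ℕ × ℕ)) (R : List (Term × Term)),
      WFTRS sig R ∧ n = Nat.pair (encodeSig sig) (encodeTRS R) ∧
      ∀ t : Term, WFTerm sig t → CRon R t }

theorem code_eq (x : List (ℕ × ℕ) × List (Term × Term)) :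
    Nat.pair (encodeSig x.1) (encodeTRS x.2) = Encodable.encode x := by
  rw [encodeTRS_eq]; rfl

/-- Confluence of a system, with reductions represented by lists of step data. -/
theorem pi02_CRSet : Pi02 CRSet := by
  let dec : ℕ → List (ℕ × ℕ) × List (Term × Term) := fun n => (Encodable.decode n).getD default
  have hdec : Primrec dec := Primrec.option_getD_default.comp Primrec.decode
  have hdec' : ∀ x, dec (Encodable.encode x) = x := fun x => by
    simp only [dec, Encodable.encodek, Option.getD_some]
  refine pi02_of_primrec (γ := Term × List StepData × List StepData)
    (δ := List StepData × List StepData)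
    (fun n c d => (Encodable.encode (dec n) = n ∧ WFTRS (dec n).1 (dec n).2) ∧
      (WFTerm (dec n).1 c.1 →
        applySteps (dec n).2 (applySteps (dec n).2 c.1 c.2.1) d.1 =
        applySteps (dec n).2 (applySteps (dec n).2 c.1 c.2.2) d.2)) ?_ fun n => ?_
  · have hn : Primrec fun x : ℕ × (Term × List StepData × List StepData) ×
      (List StepData × List StepData) => dec x.1 := hdec.comp .fst
    have ht : Primrec fun x : ℕ × (Term × List StepData × List StepData) ×
      (List StepData × List StepData) => x.2.1.1 := Primrec.fst.comp (Primrec.fst.comp .snd)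
    have hc : Primrec fun x : ℕ × (Term × List StepData × List StepData) ×
      (List StepData × List StepData) => x.2.1.2 := Primrec.snd.comp (Primrec.fst.comp .snd)
    have hd : Primrec fun x : ℕ × (Term × List StepData × List StepData) ×
      (List StepData × List StepData) => x.2.2 := Primrec.snd.comp .snd
    have hR := Primrec.snd.comp hn
    have app := @primrec_applySteps
    refine .and (.and (Primrec.eq.comp (Primrec.encode.comp hn) .fst) (primrec_wftrs.comp hn)) ?_
    refine PrimrecPred.of_eq (.or (.not (Primrec.eq.comp
      (Term.primrec_wfb.comp (Primrec.fst.comp hn) ht) (.const true))) (Primrec.eq.comp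
      (app.comp (hR.pair ((app.comp (hR.pair (ht.pair (Primrec.fst.comp hc)))).pair
        (Primrec.fst.comp hd))))
      (app.comp (hR.pair ((app.comp (hR.pair (ht.pair (Primrec.snd.comp hc)))).pair
        (Primrec.snd.comp hd)))))) fun x => ?_
    rw [Term.wfb_iff, imp_iff_not_or]
  · constructor
    · rintro ⟨sig, R, hwf, rfl, hcr⟩ ⟨t, ds₁, ds₂⟩
      rw [code_eq (sig, R), hdec']
      by_cases ht : WFTerm sig t
      · obtain ⟨d, h1, h2⟩ := hcr t ht _ _ (reduces_iff.2 ⟨ds₁, rfl⟩) (reduces_iff.2 ⟨ds₂, rfl⟩)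
        obtain ⟨e₁, h1⟩ := reduces_iff.1 h1
        obtain ⟨e₂, h2⟩ := reduces_iff.1 h2
        exact ⟨(e₁, e₂), ⟨rfl, hwf⟩, fun _ => h1.trans h2.symm⟩
      · exact ⟨default, ⟨rfl, hwf⟩, fun h => absurd h ht⟩
    · intro h
      obtain ⟨-, ⟨hn, hwf⟩, -⟩ := h default
      refine ⟨(dec n).1, (dec n).2, hwf, by rw [code_eq, hn], fun t ht t₁ t₂ h1 h2 => ?_⟩
      obtain ⟨ds₁, rfl⟩ := reduces_iff.1 h1
      obtain ⟨ds₂, rfl⟩ := reduces_iff.1 h2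
      obtain ⟨e, -, he⟩ := h (t, ds₁, ds₂)
      exact ⟨_, reduces_iff.2 ⟨e.1, rfl⟩, reduces_iff.2 ⟨e.2, (he ht).symm⟩⟩

/-! ### The term language of the reduction -/

namespace Hard

/-- The binary symbols: list constructor `p`, evaluator `ev` of programs, eraser `del`, the two
auxiliary symbols `cs` and `fx` of the evaluator, and the walking symbol `b`. -/
inductive Op
  | p | ev | del | cs | fx | b

/-- Terms over the signature of the reduction. Besides the binary symbols there are the constants
`bot`, `z`, `nil` and the unary symbols `s` and `h`. -/
inductive T
  | var (n : ℕ) | bot | z | nil | s (x : T) | h (x : T) | bin (k : Op) (x y : T)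

/-- The function symbol naming a binary operation. -/
def Op.id : Op → ℕ
  | p => 4 | ev => 5 | del => 6 | cs => 7 | fx => 8 | b => 10

/-- The signature of the reduction. -/
def sig : List (ℕ × ℕ) :=
  [(0, 0), (1, 0), (2, 0), (3, 1), (9, 1), (4, 2), (5, 2), (6, 2), (7, 2), (8, 2), (10, 2)]

instance : Inhabited T := ⟨.bot⟩

namespace T

/-- The first-order term denoted by an element of `T`. -/
def emb : T → Term
  | var n => .var n
  | bot => .app 0 []
  | z => .app 1 []
  | nil => .app 2 []
  | s x => .app 3 [emb x]
  | h x => .app 9 [emb x]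
  | bin k x y => .app k.id [emb x, emb y]

/-- Substitution on `T`. -/
def subst (σ : ℕ → T) : T → T
  | var n => σ n
  | bot => bot
  | z => z
  | nil => nil
  | s x => s (subst σ x)
  | h x => h (subst σ x)
  | bin k x y => bin k (subst σ x) (subst σ y)

/-- The variables of an element of `T`. -/
def vars : T → List ℕ
  | var n => [n]
  | bot => []
  | z => []
  | nil => []
  | s x => vars x
  | h x => vars x
  | bin _ x y => vars x ++ vars y

/-- Is the term a variable? -/
def isVar : T → Bool
  | var _ => true
  | _ => false

theorem emb_inj : Function.Injective emb := by
  intro x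
  induction x with
  | bin k x y ihx ihy =>
    intro t; cases t with
    | bin k' x' y' =>
      simp only [emb, Term.app.injEq, List.cons.injEq, and_true, bin.injEq]
      rintro ⟨hk, hx, hy⟩
      exact ⟨by cases k <;> cases k' <;> simp_all [Op.id], ihx hx, ihy hy⟩
    | _ => simp [emb]
  | s x ih => intro t; cases t <;> simp [emb]; exact fun h => ih h
  | h x ih => intro t; cases t <;> simp [emb]; exact fun h => ih h
  | _ => intro t; cases t <;> simp [emb]

theorem wf_emb (t : T) : WFTerm sig t.emb := by
  induction t with
  | var n => exact .var n
  | bin k x y ihx ihy =>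
    exact wfTerm_app.2 ⟨by cases k <;> simp [sig, Op.id], by simp [ihx, ihy]⟩
  | _ => exact wfTerm_app.2 (by simp_all [sig])

theorem exists_emb {t : Term} (ht : WFTerm sig t) : ∃ x : T, x.emb = t := by
  induction ht with
  | var n => exact ⟨.var n, rfl⟩
  | @app f ts hf _ ih =>
    have key : ∀ k : Op, f = k.id → ts.length = 2 → ∃ x : T, x.emb = .app f ts := by
      rintro k rfl h2
      obtain ⟨x, y, rfl⟩ := List.length_eq_two.1 h2
      obtain ⟨x, rfl⟩ := ih x (by simp)
      obtain ⟨y, rfl⟩ := ih y (by simp)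
      exact ⟨.bin k x y, rfl⟩
    simp only [sig, List.mem_cons, Prod.mk.injEq, List.length_eq_zero_iff, List.not_mem_nil,
      or_false, List.length_eq_one_iff] at hf
    rcases hf with ⟨rfl, rfl⟩ | ⟨rfl, rfl⟩ | ⟨rfl, rfl⟩ | ⟨rfl, x, rfl⟩ | ⟨rfl, x, rfl⟩ | h | h |
      h | h | h | h
    · exact ⟨.bot, rfl⟩
    · exact ⟨.z, rfl⟩
    · exact ⟨.nil, rfl⟩
    · obtain ⟨x, rfl⟩ := ih x (by simp)
      exact ⟨.s x, rfl⟩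
    · obtain ⟨x, rfl⟩ := ih x (by simp)
      exact ⟨.h x, rfl⟩
    · exact key .p h.1 h.2
    · exact key .ev h.1 h.2
    · exact key .del h.1 h.2
    · exact key .cs h.1 h.2
    · exact key .fx h.1 h.2
    · exact key .b h.1 h.2

theorem emb_subst {σ : ℕ → T} {τ : ℕ → Term} {t : T} (h : ∀ n ∈ t.vars, (σ n).emb = τ n) :
    (t.subst σ).emb = t.emb.subst τ := by
  induction t with
  | var n => simpa [subst, emb, vars] using h
  | _ => simp_all [subst, emb, vars]

theorem exists_of_subst_eq {τ : ℕ → Term} {l t : T} (h : l.emb.subst τ = t.emb) :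
    ∀ n ∈ l.vars, ∃ u : T, u.emb = τ n := by
  induction l generalizing t with
  | var n => simp only [vars, List.mem_singleton, forall_eq]; exact ⟨t, by simpa [emb] using h.symm⟩
  | bin k x y ihx ihy =>
    cases t with
    | bin k' x' y' =>
      simp only [emb, Term.subst_app, List.map_cons, List.map_nil, Term.app.injEq, List.cons.injEq,
        and_true] at h
      intro n hn
      rcases List.mem_append.1 hn with hn | hn
      exacts [ihx h.2.1 n hn, ihy h.2.2 n hn]
    | _ => simp [emb] at h
  | s x ih => cases t <;> simp [emb] at h; exact ih h
  | h x ih => cases t <;> simp [emb] at h; exact ih h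
  | _ => simp [vars]

theorem isVarOf_emb {n : ℕ} {t : T} : IsVarOf n t.emb ↔ n ∈ t.vars := by
  induction t with
  | var m => simp [emb, vars, isVarOf_var]
  | _ => simp_all [emb, vars, isVarOf_app]

theorem subst_congr {σ τ : ℕ → T} {t : T} (h : ∀ n ∈ t.vars, σ n = τ n) :
    t.subst σ = t.subst τ := by
  induction t with
  | var n => simpa [subst, vars] using h
  | _ => simp_all [subst, vars]

end T

/-- One-step rewriting on `T`. -/
inductive Step (L : List (T × T)) : T → T → Prop
  | rule (l r : T) (σ : ℕ → T) : (l, r) ∈ L → Step L (l.subst σ) (r.subst σ)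
  | s {x x' : T} : Step L x x' → Step L (.s x) (.s x')
  | h {x x' : T} : Step L x x' → Step L (.h x) (.h x')
  | binL (k : Op) {x x' : T} (y : T) : Step L x x' → Step L (.bin k x y) (.bin k x' y)
  | binR (k : Op) (x : T) {y y' : T} : Step L y y' → Step L (.bin k x y) (.bin k x y')

/-- Many-step rewriting on `T`. -/
abbrev Red (L : List (T × T)) : T → T → Prop := Relation.ReflTransGen (Step L)

/-- The conditions on rewrite rules. -/
def Good (L : List (T × T)) : Prop := ∀ p ∈ L, p.1.isVar = false ∧ ∀ n ∈ p.2.vars, n ∈ p.1.vars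

/-- The first-order rewriting system denoted by a list of rules over `T`. -/
def embRules (L : List (T × T)) : List (Term × Term) := L.map fun p => (p.1.emb, p.2.emb)

theorem wftrs_embRules {L : List (T × T)} (hL : Good L) : WFTRS sig (embRules L) := by
  refine ⟨by unfold WFSig sig; decide, fun q hq => ?_⟩
  obtain ⟨p, hp, rfl⟩ := List.mem_map.1 hq
  refine ⟨p.1.wf_emb, p.2.wf_emb, fun n h => ?_, fun n => ?_⟩
  · have := (hL p hp).1
    generalize p.1 = t at this h
    cases t <;> simp_all [T.emb, T.isVar]
  · rw [T.isVarOf_emb, T.isVarOf_emb]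
    exact (hL p hp).2 n

theorem Step.rewrite {L : List (T × T)} {x y : T} (h : Step L x y) :
    Rewrite (embRules L) x.emb y.emb := by
  induction h with
  | rule l r σ h =>
    rw [T.emb_subst fun _ _ => rfl, T.emb_subst fun _ _ => rfl]
    exact .rule _ _ (fun n => (σ n).emb) (List.mem_map.2 ⟨_, h, rfl⟩)
  | s _ ih => exact .congr _ [] [] _ _ ih
  | h _ ih => exact .congr _ [] [] _ _ ih
  | binL k y _ ih => exact .congr _ [] [y.emb] _ _ ih
  | binR k x _ ih => exact .congr _ [x.emb] [] _ _ ih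

theorem exists_step {L : List (T × T)} (hL : Good L) {u v : Term} (h : Rewrite (embRules L) u v) :
    ∀ x : T, x.emb = u → ∃ y : T, y.emb = v ∧ Step L x y := by
  induction h with
  | rule l r τ h =>
    obtain ⟨⟨l, r⟩, hlr, he⟩ := List.mem_map.1 h
    obtain ⟨rfl, rfl⟩ := Prod.mk.inj he
    intro x hx
    have h1 := T.exists_of_subst_eq hx.symm
    choose! σ hσ using h1
    refine ⟨r.subst σ, T.emb_subst fun n hn => hσ n ((hL _ hlr).2 n hn), ?_⟩
    rw [show x = l.subst σ from T.emb_inj (hx.trans (T.emb_subst hσ).symm)]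
    exact .rule _ _ _ hlr
  | congr f ts₁ ts₂ t t' _ ih =>
    intro x hx
    cases x with
    | var n => simp [T.emb] at hx
    | s x =>
      simp only [T.emb, Term.app.injEq] at hx
      obtain ⟨rfl, hx⟩ := hx
      rcases ts₁ with _ | ⟨_, ts₁⟩ <;> simp at hx
      obtain ⟨y, rfl, hy⟩ := ih x hx.1
      exact ⟨.s y, by simp [T.emb, hx.2], .s hy⟩
    | h x =>
      simp only [T.emb, Term.app.injEq] at hx
      obtain ⟨rfl, hx⟩ := hx
      rcases ts₁ with _ | ⟨_, ts₁⟩ <;> simp at hx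
      obtain ⟨y, rfl, hy⟩ := ih x hx.1
      exact ⟨.h y, by simp [T.emb, hx.2], .h hy⟩
    | bin k x₁ x₂ =>
      simp only [T.emb, Term.app.injEq] at hx
      obtain ⟨rfl, hx⟩ := hx
      rcases ts₁ with _ | ⟨_, _ | ⟨_, ts₁⟩⟩ <;> simp at hx
      · obtain ⟨y, rfl, hy⟩ := ih x₁ hx.1
        exact ⟨.bin k y x₂, by simp [T.emb, hx.2], .binL k _ hy⟩
      · obtain ⟨y, rfl, hy⟩ := ih x₂ hx.2.1
        exact ⟨.bin k x₁ y, by simp [T.emb, hx.1, hx.2.2], .binR k _ hy⟩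
    | _ => simp [T.emb] at hx

theorem Red.reduces {L : List (T × T)} {x y : T} (h : Red L x y) :
    Reduces (embRules L) x.emb y.emb := h.lift T.emb fun _ _ => Step.rewrite

theorem exists_red {L : List (T × T)} (hL : Good L) {x : T} {v : Term}
    (h : Reduces (embRules L) x.emb v) : ∃ y : T, y.emb = v ∧ Red L x y := by
  induction h with
  | refl => exact ⟨x, rfl, .refl⟩
  | tail _ h ih =>
    obtain ⟨y, rfl, hy⟩ := ih
    obtain ⟨w, rfl, hw⟩ := exists_step hL h y rfl
    exact ⟨w, rfl, hy.tail hw⟩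

/-- Confluence may be tested on `T`. -/
theorem cr_iff {L : List (T × T)} (hL : Good L) :
    (∀ t, WFTerm sig t → CRon (embRules L) t) ↔
      ∀ x y y' : T, Red L x y → Red L x y' → ∃ d, Red L y d ∧ Red L y' d := by
  constructor
  · intro h x y y' hy hy'
    obtain ⟨d, h1, h2⟩ := h _ x.wf_emb _ _ (Red.reduces hy) (Red.reduces hy')
    obtain ⟨d1, rfl, g1⟩ := exists_red hL h1
    obtain ⟨d2, he, g2⟩ := exists_red hL h2
    exact ⟨d1, g1, T.emb_inj he ▸ g2⟩
  · intro h t ht t₁ t₂ h1 h2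
    obtain ⟨x, rfl⟩ := T.exists_emb ht
    obtain ⟨y, rfl, g1⟩ := exists_red hL h1
    obtain ⟨y', rfl, g2⟩ := exists_red hL h2
    obtain ⟨d, hd, hd'⟩ := h x y y' g1 g2
    exact ⟨d.emb, Red.reduces hd, Red.reduces hd'⟩

end Hard

/-! ### The rewriting system of the reduction -/

namespace Hard

open Turing.ToPartrec (Code)

/-- Data: numerals, lists and programs are trees over `z`, `nil`, `s` and `p`. -/
inductive V
  | z | nil | s (x : V) | p (x y : V)

namespace V

/-- The term denoting a datum. -/
def toT : V → T
  | z => .z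
  | nil => .nil
  | s x => .s (toT x)
  | p x y => .bin .p (toT x) (toT y)

/-- The numeral of a natural number. -/
def num : ℕ → V
  | 0 => z
  | n + 1 => s (num n)

/-- The representation of a list of natural numbers. -/
def lst : List ℕ → V
  | [] => nil
  | a :: v => p (num a) (lst v)

/-- The representation of a program. The first components of pairs tell `comp`, `cons`, `case`
and `fix` apart. -/
def cod : Code → V
  | .zero' => z
  | .succ => nil
  | .tail => s z
  | .comp f g => p z (p (cod f) (cod g))
  | .cons f g => p (s z) (p (cod f) (cod g))
  | .case f g => p (s (s z)) (p (cod f) (cod g))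
  | .fix f => p nil (cod f)

end V

namespace T

/-! Binary symbols as operations on terms, and the constructors of represented programs as in
`V.cod`. -/

abbrev p (x y : T) : T := .bin .p x y
abbrev ev (x y : T) : T := .bin .ev x y
abbrev del (x y : T) : T := .bin .del x y
abbrev cs (x y : T) : T := .bin .cs x y
abbrev fx (x y : T) : T := .bin .fx x y
abbrev b (x y : T) : T := .bin .b x y

abbrev comp (x y : T) : T := p z (p x y)
abbrev cons (x y : T) : T := p (s z) (p x y)
abbrev case (x y : T) : T := p (s (s z)) (p x y)
abbrev fix (x : T) : T := p nil x

end T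

open T

/-- Defining equations of the evaluator. Both sides of every equation contain the same variables:
what the evaluation would discard is handed to the eraser `del`, which only consumes data. -/
def eqs : List (T × T) :=
  [(ev z (var 0), p z (var 0)),
   (ev nil (p (var 0) (var 1)), del (var 1) (p (s (var 0)) nil)),
   (ev nil nil, p (s z) nil),
   (ev (s z) (p (var 0) (var 1)), del (var 0) (var 1)),
   (ev (s z) nil, nil),
   (ev (comp (var 0) (var 1)) (var 2), ev (var 0) (ev (var 1) (var 2))),
   (ev (cons (var 0) (var 1)) (var 2), cs (ev (var 0) (var 2)) (ev (var 1) (var 2))),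
   (cs (p (var 0) (var 1)) (var 2), del (var 1) (p (var 0) (var 2))),
   (cs nil (var 0), p z (var 0)),
   (ev (case (var 0) (var 1)) nil, del (var 1) (ev (var 0) nil)),
   (ev (case (var 0) (var 1)) (p z (var 2)), del (var 1) (ev (var 0) (var 2))),
   (ev (case (var 0) (var 1)) (p (s (var 2)) (var 3)),
     del (var 0) (ev (var 1) (p (var 2) (var 3)))),
   (ev (fix (var 0)) (var 1), fx (var 0) (ev (var 0) (var 1))),
   (fx (var 0) (p z (var 1)), del (var 0) (var 1)),
   (fx (var 0) nil, del (var 0) nil),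
   (fx (var 0) (p (s (var 1)) (var 2)), del (var 1) (ev (fix (var 0)) (var 2))),
   (del z (p (var 0) (var 1)), p (var 0) (var 1)),
   (del z nil, nil),
   (del nil (p (var 0) (var 1)), p (var 0) (var 1)),
   (del nil nil, nil),
   (del (s (var 0)) (var 1), del (var 0) (var 1)),
   (del (p (var 0) (var 1)) (var 2), del (var 0) (del (var 1) (var 2)))]

/-- The walk, in both directions: `s` moves between the two arguments of `b`. -/
def walk : List (T × T) :=
  [(b (s (var 0)) (var 1), b (var 0) (s (var 1))), (b (var 0) (s (var 1)), b (s (var 0)) (var 1))]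

/-- The constant `bot` absorbs every context. -/
def zeros : List (T × T) :=
  [(s bot, bot), (h bot, bot)] ++ [Op.p, .ev, .del, .cs, .fx, .b].flatMap fun k =>
    [(bin k bot (var 0), bot), (bin k (var 0) bot, bot)]

/-- The rules that produce `bot` out of terms without `bot`. -/
def exits : List (T × T) := [(b (var 0) z, bot), (h nil, bot)]

/-- The part of the system that does not depend on the input. -/
def base : List (T × T) := eqs ++ eqs.map Prod.swap ++ walk ++ zeros ++ exits

/-- The term that runs the program `c` on the input `[n, y]`. -/
def start (c : Code) (n : ℕ) (y : T) : T :=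
  h (ev (V.cod c).toT (p (V.num n).toT (p y nil)))

/-- The rewriting system assigned to `n`, for a fixed program `c`. -/
def rules (c : Code) (n : ℕ) : List (T × T) := (b z (var 0), start c n (var 0)) :: base

/-- The term contains only `z`, `nil`, `s`, variables, and binary symbols other than `b`. -/
def T.clean : T → Bool
  | var _ => true
  | bot => false
  | z => true
  | nil => true
  | s x => clean x
  | h _ => false
  | bin .b _ _ => false
  | bin .p x y => clean x && clean y
  | bin .ev x y => clean x && clean y
  | bin .del x y => clean x && clean y
  | bin .cs x y => clean x && clean y
  | bin .fx x y => clean x && clean y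

theorem T.clean_bin {k : Op} {x y : T} : (bin k x y).clean = true ↔
    k ≠ .b ∧ x.clean = true ∧ y.clean = true := by
  cases k <;> simp [clean]

theorem T.vars_toT (v : V) : v.toT.vars = [] := by
  induction v <;> simp_all [V.toT, vars]

theorem T.clean_toT (v : V) : v.toT.clean = true := by
  induction v <;> simp_all [V.toT, clean]

theorem T.subst_toT (σ : ℕ → T) (v : V) : v.toT.subst σ = v.toT := by
  induction v <;> simp_all [V.toT, subst]

theorem start_subst (c : Code) (n : ℕ) (y : T) (σ : ℕ → T) :
    (start c n y).subst σ = start c n (y.subst σ) := by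
  simp [start, subst, subst_toT]

theorem good_rules (c : Code) (n : ℕ) : Good (rules c n) := by
  have hb : ∀ p ∈ base, p.1.isVar = false ∧ ∀ n ∈ p.2.vars, n ∈ p.1.vars := by decide
  intro p hp
  rcases List.mem_cons.1 hp with rfl | hp
  · simp [isVar, start, vars, vars_toT]
  · exact hb p hp

theorem eqs_clean : ∀ p ∈ eqs, p.1.clean = true ∧ p.2.clean = true := by decide

/-- The equations may be used as rewrite rules in both directions. -/
theorem eqs_vars : ∀ p ∈ eqs, (∀ n ∈ p.1.vars, n ∈ p.2.vars) ∧ ∀ n ∈ p.2.vars, n ∈ p.1.vars := by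
  decide

/-- The root of the term is `nil` or a binary symbol. -/
def T.inner : T → Bool
  | nil => true
  | bin _ _ _ => true
  | _ => false

theorem eqs_inner : ∀ p ∈ eqs, p.1.inner = true ∧ p.2.inner = true := by decide

theorem T.inner_subst {l : T} (h : l.inner = true) (σ : ℕ → T) : (l.subst σ).inner = true := by
  cases l <;> simp_all [inner, subst]

/-- The possible rules. -/
theorem mem_rules {c : Code} {n : ℕ} {l r : T} (h : (l, r) ∈ rules c n) :
    ((l, r) ∈ eqs ∨ (r, l) ∈ eqs) ∨
    (l = b z (var 0) ∧ r = start c n (var 0)) ∨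
    (l = b (s (var 0)) (var 1) ∧ r = b (var 0) (s (var 1))) ∨
    (l = b (var 0) (s (var 1)) ∧ r = b (s (var 0)) (var 1)) ∨
    (l = b (var 0) z ∧ r = bot) ∨ (l = T.h nil ∧ r = bot) ∨
    (l = s bot ∧ r = bot) ∨ (l = T.h bot ∧ r = bot) ∨
    (∃ k, l = bin k bot (var 0) ∧ r = bot) ∨ ∃ k, l = bin k (var 0) bot ∧ r = bot := by
  rcases List.mem_cons.1 h with h | h
  · cases h; tauto
  simp only [base, List.mem_append, List.mem_map] at h
  rcases h with (((h | ⟨⟨a, a'⟩, h, he⟩) | h) | h) | h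
  · tauto
  · cases he; tauto
  · simp only [walk, List.mem_cons, Prod.mk.injEq, List.not_mem_nil, or_false] at h; tauto
  · simp only [zeros, List.mem_append, List.mem_cons, Prod.mk.injEq, List.not_mem_nil, or_false,
      List.mem_flatMap] at h
    rcases h with (h | h) | ⟨k, -, h | h⟩
    · tauto
    · tauto
    · iterate 8 right
      exact .inl ⟨k, h⟩
    · iterate 9 right
      exact ⟨k, h⟩
  · simp only [exits, List.mem_cons, Prod.mk.injEq, List.not_mem_nil, or_false] at h; tauto

theorem eqs_subset (c : Code) (n : ℕ) {l r : T} (h : (l, r) ∈ eqs) : (l, r) ∈ rules c n := by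
  simp [rules, base, h]

theorem eqs_swap_subset (c : Code) (n : ℕ) {l r : T} (h : (l, r) ∈ eqs) :
    (r, l) ∈ rules c n := by
  refine List.mem_cons_of_mem _ ?_
  simp only [base, List.mem_append]
  exact .inl (.inl (.inl (.inr (List.mem_map.2 ⟨_, h, rfl⟩))))

theorem walk_subset (c : Code) (n : ℕ) {q : T × T} (h : q ∈ walk) : q ∈ rules c n := by
  refine List.mem_cons_of_mem _ ?_
  simp [base, h]

theorem zeros_subset (c : Code) (n : ℕ) {q : T × T} (h : q ∈ zeros) : q ∈ rules c n := by
  refine List.mem_cons_of_mem _ ?_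
  simp [base, h]

theorem exits_subset (c : Code) (n : ℕ) {q : T × T} (h : q ∈ exits) : q ∈ rules c n := by
  refine List.mem_cons_of_mem _ ?_
  simp [base, h]

end Hard

/-! ### Terminating evaluations -/

namespace Hard

open Turing.ToPartrec (Code)
open T

section

variable {L : List (T × T)}

theorem Red.s {x x' : T} (h : Red L x x') : Red L (.s x) (.s x') :=
  h.lift T.s fun _ _ => .s

theorem Red.h {x x' : T} (h : Red L x x') : Red L (.h x) (.h x') :=
  h.lift T.h fun _ _ => .h

theorem Red.bin (k : Op) {x x' y y' : T} (h : Red L x x') (h' : Red L y y') :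
    Red L (.bin k x y) (.bin k x' y') :=
  (h.lift (fun x => T.bin k x y) fun _ _ => .binL k y).trans
    (h'.lift (T.bin k x') fun _ _ => .binR k x')

end

/-- The substitution given by a finite list. -/
def sub (l : List T) (n : ℕ) : T := l.getD n bot

variable {c : Code} {n : ℕ}

/-- Application of the equation with index `i` in `eqs`. -/
theorem eqn (i : ℕ) (l : List T) (hi : i < eqs.length := by decide) :
    Red (rules c n) ((eqs[i]).1.subst (sub l)) ((eqs[i]).2.subst (sub l)) :=
  .single (.rule _ _ _ (eqs_subset c n (List.getElem_mem hi)))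

/-- The eraser consumes any datum. It does so only in front of a list, as required by the
equations for `del z` and `del nil`. -/
theorem del_red (v : V) {x : T} (hx : x = nil ∨ ∃ a d, x = p a d) :
    Red (rules c n) (del v.toT x) x := by
  induction v with
  | z =>
    rcases hx with rfl | ⟨a, d, rfl⟩
    · exact eqn 17 []
    · exact eqn 16 [a, d]
  | nil =>
    rcases hx with rfl | ⟨a, d, rfl⟩
    · exact eqn 19 []
    · exact eqn 18 [a, d]
  | s v ih => exact (eqn 20 [v.toT, x]).trans ih
  | p v w ihv ihw =>
    exact ((eqn 21 [v.toT, w.toT, x]).trans (Red.bin .del .refl ihw)).trans ihv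

theorem del_red' (v : V) (l : List ℕ) : Red (rules c n) (del v.toT (V.lst l).toT) (V.lst l).toT :=
  del_red v (by cases l <;> simp [V.lst, V.toT])

/-- If a program halts, then its evaluation can be carried out by rewriting. -/
theorem eval_red (e : Code) {v w : List ℕ} (h : w ∈ e.eval v) :
    Red (rules c n) (ev (V.cod e).toT (V.lst v).toT) (V.lst w).toT := by
  induction e generalizing v w with
  | zero' =>
    simp only [Code.zero'_eval, Part.pure_eq_some, Part.mem_some_iff] at h
    subst h
    exact eqn 0 [(V.lst v).toT]
  | succ =>
    simp only [Code.succ_eval, Part.pure_eq_some, Part.mem_some_iff] at h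
    subst h
    cases v with
    | nil => exact eqn 2 []
    | cons a v =>
      exact (eqn 1 [(V.num a).toT, (V.lst v).toT]).trans (del_red' _ [a + 1])
  | tail =>
    simp only [Code.tail_eval, Part.pure_eq_some, Part.mem_some_iff] at h
    subst h
    cases v with
    | nil => exact eqn 4 []
    | cons a v => exact (eqn 3 [(V.num a).toT, (V.lst v).toT]).trans (del_red' _ v)
  | comp f g ihf ihg =>
    rw [Code.comp_eval] at h
    obtain ⟨u, hu, hw⟩ := Part.mem_bind_iff.1 (show w ∈ (g.eval v).bind f.eval from h)
    exact ((eqn 5 [(V.cod f).toT, (V.cod g).toT, (V.lst v).toT]).trans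
      (Red.bin .ev .refl (ihg hu))).trans (ihf hw)
  | cons f g ihf ihg =>
    simp only [Code.cons_eval, Part.bind_eq_bind, Part.mem_bind_iff, Part.pure_eq_some,
      Part.mem_some_iff] at h
    obtain ⟨x, hx, y, hy, rfl⟩ := h
    refine ((eqn 6 [(V.cod f).toT, (V.cod g).toT, (V.lst v).toT]).trans
      (Red.bin .cs (ihf hx) (ihg hy))).trans ?_
    cases x with
    | nil => exact eqn 8 [(V.lst y).toT]
    | cons a x =>
      exact (eqn 7 [(V.num a).toT, (V.lst x).toT, (V.lst y).toT]).trans (del_red' _ (a :: y))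
  | case f g ihf ihg =>
    simp only [Code.case_eval] at h
    cases v with
    | nil =>
      exact ((eqn 9 [(V.cod f).toT, (V.cod g).toT]).trans (Red.bin .del .refl (ihf h))).trans
        (del_red' _ _)
    | cons a v =>
      cases a with
      | zero =>
        exact ((eqn 10 [(V.cod f).toT, (V.cod g).toT, (V.lst v).toT]).trans
          (Red.bin .del .refl (ihf h))).trans (del_red' _ _)
      | succ a =>
        exact ((eqn 11 [(V.cod f).toT, (V.cod g).toT, (V.num a).toT, (V.lst v).toT]).trans
          (Red.bin .del .refl (ihg (v := a :: v) h))).trans (del_red' _ _)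
  | fix f ihf =>
    rw [Code.fix_eval] at h
    refine PFun.fixInduction (C := fun v => Red (rules c n)
      (ev (V.cod f.fix).toT (V.lst v).toT) (V.lst w).toT) h fun v hv ih => ?_
    have key : ∀ u ∈ f.eval v, Red (rules c n) (ev (V.cod f.fix).toT (V.lst v).toT)
        (fx (V.cod f).toT (V.lst u).toT) := fun u hu =>
      (eqn 12 [(V.cod f).toT, (V.lst v).toT]).trans (Red.bin .fx .refl (ihf hu))
    have step : ∀ u ∈ f.eval v, (if u.headI = 0 then Sum.inl u.tail else Sum.inr u.tail) ∈
        (f.eval v).map fun v => if v.headI = 0 then Sum.inl v.tail else Sum.inr v.tail :=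
      fun u hu => (Part.mem_map_iff _).2 ⟨u, hu, rfl⟩
    have hfin : ∀ u ∈ f.eval v, u.headI = 0 → u.tail = w → Red (rules c n)
        (fx (V.cod f).toT (V.lst u).toT) (V.lst w).toT := by
      rintro (_ | ⟨a, u⟩) - h0 rfl
      · exact (eqn 14 [(V.cod f).toT]).trans (del_red' _ [])
      · obtain rfl : a = 0 := h0
        exact (eqn 13 [(V.cod f).toT, (V.lst u).toT]).trans (del_red' _ u)
    rcases PFun.mem_fix_iff.1 hv with h1 | ⟨v', h1, -⟩
    · obtain ⟨u, hu, he⟩ := (Part.mem_map_iff _).1 h1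
      split_ifs at he with h0
      exact (key u hu).trans (hfin u hu h0 (Sum.inl.inj he))
    · obtain ⟨u, hu, he⟩ := (Part.mem_map_iff _).1 h1
      split_ifs at he with h0
      obtain rfl := Sum.inr.inj he
      have := ih _ h1
      refine (key u hu).trans ?_
      rcases u with _ | ⟨_ | a, u⟩
      · exact absurd rfl h0
      · exact absurd rfl h0
      · exact ((eqn 15 [(V.cod f).toT, (V.num a).toT, (V.lst u).toT]).trans
          (Red.bin .del .refl this)).trans (del_red' _ w)

end Hard

/-! ### Confluence when all evaluations terminate -/

namespace Hard

open Turing.ToPartrec (Code)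
open T

/-- The value of a numeral. -/
def T.isNum : T → Option ℕ
  | z => some 0
  | s x => (isNum x).map (· + 1)
  | _ => none

/-- Iterated application of `s`. -/
def T.pow : ℕ → T → T
  | 0, t => t
  | i + 1, t => s (pow i t)

/-- Contraction of `bin k x y`, given the value of `x` if `x` is a numeral. -/
def contract (c : Code) (n : ℕ) (k : Op) (o : Option ℕ) (x y : T) : T :=
  match k, o with
  | .b, some i => start c n (pow i y)
  | k, _ => bin k x y

/-- Replace every subterm `b (s^i z) y` by the result of walking to the left and starting the
evaluation. -/
def norm (c : Code) (n : ℕ) : T → T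
  | var m => var m
  | bot => bot
  | z => z
  | nil => nil
  | s x => s (norm c n x)
  | h x => T.h (norm c n x)
  | bin k x y => contract c n k x.isNum (norm c n x) (norm c n y)

variable {c : Code} {n : ℕ}

theorem contract_none (k : Op) (x y : T) : contract c n k none x y = bin k x y := by
  cases k <;> rfl

theorem contract_b (i : ℕ) (x y : T) : contract c n .b (some i) x y = start c n (pow i y) := rfl

theorem contract_of_ne {k : Op} (hk : k ≠ .b) (o : Option ℕ) (x y : T) :
    contract c n k o x y = bin k x y := by
  cases k <;> first | rfl | exact absurd rfl hk

theorem T.pow_s (i : ℕ) (t : T) : pow i (s t) = pow (i + 1) t := by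
  induction i with
  | zero => rfl
  | succ i ih => exact congrArg T.s ih

theorem T.eq_pow_of_isNum {x : T} {i : ℕ} (h : x.isNum = some i) : x = pow i z := by
  induction x generalizing i with
  | z => cases h; rfl
  | s x ih =>
    simp only [isNum, Option.map_eq_some_iff] at h
    obtain ⟨j, hj, rfl⟩ := h
    rw [ih hj]; rfl
  | _ => cases h

theorem T.isNum_pow (i : ℕ) : (pow i z).isNum = some i := by
  induction i with
  | zero => rfl
  | succ i ih => simp [pow, isNum, ih]

theorem T.pow_z (i : ℕ) : pow i z = (V.num i).toT := by
  induction i with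
  | zero => rfl
  | succ i ih => simp [pow, V.num, V.toT, ih]

/-- Normalisation commutes with substitution into clean terms. -/
theorem norm_subst (σ : ℕ → T) {l : T} (hl : l.clean = true) :
    norm c n (l.subst σ) = l.subst fun m => norm c n (σ m) := by
  induction l with
  | bin k x y ihx ihy =>
    have := clean_bin.1 hl
    simp only [subst, norm]
    rw [contract_of_ne this.1, ihx this.2.1, ihy this.2.2]
  | _ => simp_all [clean, subst, norm]

/-- Either the terms reduce to each other, or both of them reduce to `bot`. -/
def Conv (c : Code) (n : ℕ) (x y : T) : Prop :=
  (Red (rules c n) x y ∧ Red (rules c n) y x) ∨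
    (Red (rules c n) x bot ∧ Red (rules c n) y bot)

theorem Conv.refl (x : T) : Conv c n x x := .inl ⟨.refl, .refl⟩

theorem Conv.trans {x y w : T} (h : Conv c n x y) (h' : Conv c n y w) : Conv c n x w := by
  rcases h with ⟨h1, h2⟩ | ⟨h1, h2⟩ <;> rcases h' with ⟨h3, h4⟩ | ⟨h3, h4⟩
  · exact .inl ⟨h1.trans h3, h4.trans h2⟩
  · exact .inr ⟨h1.trans h3, h4⟩
  · exact .inr ⟨h1, h4.trans h2⟩
  · exact .inr ⟨h1, h4⟩

theorem Conv.symm {x y : T} (h : Conv c n x y) : Conv c n y x := by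
  rcases h with ⟨h1, h2⟩ | ⟨h1, h2⟩
  · exact .inl ⟨h2, h1⟩
  · exact .inr ⟨h2, h1⟩

theorem red_s_bot {x : T} (h : Red (rules c n) x bot) : Red (rules c n) (s x) bot :=
  (Red.s h).trans (.single (.rule (s bot) bot (sub []) (zeros_subset c n (by simp [zeros]))))

theorem red_h_bot {x : T} (h : Red (rules c n) x bot) : Red (rules c n) (T.h x) bot :=
  (Red.h h).trans (.single (.rule (T.h bot) bot (sub []) (zeros_subset c n (by simp [zeros]))))

theorem red_left_bot (k : Op) {x : T} (y : T) (h : Red (rules c n) x bot) :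
    Red (rules c n) (bin k x y) bot :=
  (Red.bin k h .refl).trans (.single (.rule (bin k bot (var 0)) bot (sub [y])
    (zeros_subset c n (by cases k <;> simp [zeros]))))

theorem red_right_bot (k : Op) (x : T) {y : T} (h : Red (rules c n) y bot) :
    Red (rules c n) (bin k x y) bot :=
  (Red.bin k .refl h).trans (.single (.rule (bin k (var 0) bot) bot (sub [x])
    (zeros_subset c n (by cases k <;> simp [zeros]))))

theorem red_pow_bot (i : ℕ) {x : T} (h : Red (rules c n) x bot) :
    Red (rules c n) (pow i x) bot := by
  induction i with
  | zero => exact h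
  | succ i ih => exact red_s_bot ih

theorem red_start_bot {x : T} (h : Red (rules c n) x bot) : Red (rules c n) (start c n x) bot :=
  red_h_bot (red_right_bot _ _ (red_right_bot _ _ (red_left_bot _ _ h)))

theorem red_pow (i : ℕ) {x y : T} (h : Red (rules c n) x y) :
    Red (rules c n) (pow i x) (pow i y) := by
  induction i with
  | zero => exact h
  | succ i ih => exact Red.s ih

theorem red_start {x y : T} (h : Red (rules c n) x y) :
    Red (rules c n) (start c n x) (start c n y) :=
  Red.h (Red.bin _ .refl (Red.bin _ .refl (Red.bin _ h .refl)))

theorem Conv.s {x y : T} (h : Conv c n x y) : Conv c n (T.s x) (T.s y) :=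
  h.imp (fun h => ⟨Red.s h.1, Red.s h.2⟩) fun h => ⟨red_s_bot h.1, red_s_bot h.2⟩

theorem Conv.h {x y : T} (h : Conv c n x y) : Conv c n (T.h x) (T.h y) :=
  h.imp (fun h => ⟨Red.h h.1, Red.h h.2⟩) fun h => ⟨red_h_bot h.1, red_h_bot h.2⟩

theorem Conv.left (k : Op) {x y : T} (w : T) (h : Conv c n x y) :
    Conv c n (bin k x w) (bin k y w) :=
  h.imp (fun h => ⟨Red.bin k h.1 .refl, Red.bin k h.2 .refl⟩)
    fun h => ⟨red_left_bot k w h.1, red_left_bot k w h.2⟩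

theorem Conv.right (k : Op) (w : T) {x y : T} (h : Conv c n x y) :
    Conv c n (bin k w x) (bin k w y) :=
  h.imp (fun h => ⟨Red.bin k .refl h.1, Red.bin k .refl h.2⟩)
    fun h => ⟨red_right_bot k w h.1, red_right_bot k w h.2⟩

theorem Conv.start_pow (i : ℕ) {x y : T} (h : Conv c n x y) :
    Conv c n (start c n (pow i x)) (start c n (pow i y)) :=
  h.imp (fun h => ⟨red_start (red_pow i h.1), red_start (red_pow i h.2)⟩)
    fun h => ⟨red_start_bot (red_pow_bot i h.1), red_start_bot (red_pow_bot i h.2)⟩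

theorem red_walk (i : ℕ) (y : T) : Red (rules c n) (b (pow i z) y) (b z (pow i y)) := by
  induction i generalizing y with
  | zero => exact .refl
  | succ i ih =>
    refine .head (.rule (b (s (var 0)) (var 1)) (b (var 0) (s (var 1))) (sub [pow i z, y])
      (walk_subset c n (by simp [walk]))) ?_
    rw [← pow_s]
    exact ih (s y)

/-- Every term reduces to its normalisation. -/
theorem red_norm (t : T) : Red (rules c n) t (norm c n t) := by
  induction t with
  | s x ih => exact Red.s ih
  | h x ih => exact Red.h ih
  | bin k x y ihx ihy =>
    rw [norm]
    by_cases hk : k = .b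
    · subst hk
      rcases hi : x.isNum with _ | i
      · exact Red.bin _ ihx ihy
      · rw [contract_b, eq_pow_of_isNum hi]
        refine ((Red.bin _ .refl ihy).trans (red_walk i _)).tail ?_
        have := Step.rule (L := rules c n) _ _ (sub [pow i (norm c n y)]) (List.mem_cons_self)
        rwa [start_subst] at this
    · rw [contract_of_ne hk]
      exact Red.bin _ ihx ihy
  | _ => exact .refl

/-- Numerals are neither the source nor the target of a step. -/
theorem isNum_of_step {x y : T} (h : Step (rules c n) x y) : x.isNum = none ∧ y.isNum = none := by
  induction h with
  | rule l r σ h =>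
    have he : ∀ {t : T}, t.inner = true → (t.subst σ).isNum = none := fun {t} ht => by
      cases t <;> simp_all [T.inner, subst, isNum]
    rcases mem_rules h with (h | h) | ⟨rfl, rfl⟩ | ⟨rfl, rfl⟩ | ⟨rfl, rfl⟩ | ⟨rfl, rfl⟩ |
      ⟨rfl, rfl⟩ | ⟨rfl, rfl⟩ | ⟨rfl, rfl⟩ | ⟨k, rfl, rfl⟩ | ⟨k, rfl, rfl⟩
    · exact ⟨he (eqs_inner _ h).1, he (eqs_inner _ h).2⟩
    · exact ⟨he (eqs_inner _ h).2, he (eqs_inner _ h).1⟩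
    all_goals exact ⟨rfl, rfl⟩
  | s _ ih => simp [isNum, ih]
  | _ => exact ⟨rfl, rfl⟩

/-- If the program halts on all inputs `[n, i]`, a step does not change the normalised term up to
conversion. -/
theorem conv_norm_of_step (hc : ∀ i, [] ∈ c.eval [n, i]) {x y : T} (h : Step (rules c n) x y) :
    Conv c n (norm c n x) (norm c n y) := by
  induction h with
  | rule l r σ h =>
    have he : ∀ l r, (l, r) ∈ eqs → Conv c n (norm c n (l.subst σ)) (norm c n (r.subst σ)) := by
      intro l r h
      rw [norm_subst σ (eqs_clean _ h).1, norm_subst σ (eqs_clean _ h).2]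
      exact .inl ⟨.single (.rule _ _ _ (eqs_subset c n h)),
        .single (.rule _ _ _ (eqs_swap_subset c n h))⟩
    have hw : Conv c n (norm c n (b (s (σ 0)) (σ 1))) (norm c n (b (σ 0) (s (σ 1)))) := by
      rcases hi : (σ 0).isNum with _ | i
      · simp only [norm, isNum, hi, Option.map_none, contract_none]
        exact .inl ⟨.single (.rule (b (s (var 0)) (var 1)) (b (var 0) (s (var 1)))
            (sub [norm c n (σ 0), norm c n (σ 1)]) (walk_subset c n (by simp [walk]))),
          .single (.rule (b (var 0) (s (var 1))) (b (s (var 0)) (var 1))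
            (sub [norm c n (σ 0), norm c n (σ 1)]) (walk_subset c n (by simp [walk])))⟩
      · simp only [norm, isNum, hi, Option.map_some, contract_b, pow_s]
        exact .refl _
    rcases mem_rules h with (h | h) | ⟨rfl, rfl⟩ | ⟨rfl, rfl⟩ | ⟨rfl, rfl⟩ | ⟨rfl, rfl⟩ |
      ⟨rfl, rfl⟩ | ⟨rfl, rfl⟩ | ⟨rfl, rfl⟩ | ⟨k, rfl, rfl⟩ | ⟨k, rfl, rfl⟩
    · exact he _ _ h
    · exact (he _ _ h).symm
    · have : (start c n (var 0)).subst σ = start c n (σ 0) := start_subst c n (var 0) σ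
      rw [this]
      have hn : norm c n (start c n (σ 0)) = start c n (norm c n (σ 0)) := by
        have hcl : (ev (V.cod c).toT (p (V.num n).toT (p (var 0) nil))).clean = true := by
          simp [clean, clean_toT]
        have := norm_subst (c := c) (n := n) σ hcl
        simp only [subst, subst_toT] at this
        exact congrArg T.h this
      rw [hn]
      exact .refl _
    · exact hw
    · exact hw.symm
    -- the exit of the walk: on a numeral it is matched by a terminating evaluation
    · refine .inr ⟨?_, .refl⟩
      simp only [subst, norm]
      rcases hi : (σ 0).isNum with _ | i
      · rw [contract_none]
        exact .single (.rule (b (var 0) z) bot (sub [norm c n (σ 0)])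
          (exits_subset c n (by simp [exits])))
      · rw [contract_b, pow_z]
        refine (Red.h (eval_red (c := c) (n := n) c (hc i))).tail ?_
        exact .rule (T.h nil) bot (sub []) (exits_subset c n (by simp [exits]))
    · exact .inr ⟨.single (.rule (T.h nil) bot (sub []) (exits_subset c n (by simp [exits]))),
        .refl⟩
    · exact .inr ⟨red_s_bot .refl, .refl⟩
    · exact .inr ⟨red_h_bot .refl, .refl⟩
    · refine .inr ⟨?_, .refl⟩
      simp only [subst, norm, isNum, contract_none]
      exact red_left_bot _ _ .refl
    · refine .inr ⟨?_, .refl⟩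
      simp only [subst, norm]
      by_cases hk : k = .b
      · subst hk
        rcases hi : (σ 0).isNum with _ | i
        · exact red_right_bot _ _ .refl
        · exact red_start_bot (red_pow_bot i .refl)
      · rw [contract_of_ne hk]
        exact red_right_bot _ _ .refl
  | s _ ih => exact ih.s
  | h _ ih => exact ih.h
  | binL k y hx ih =>
    simp only [norm, (isNum_of_step hx).1, (isNum_of_step hx).2, contract_none]
    exact ih.left _ _
  | binR k x hy ih =>
    simp only [norm]
    by_cases hk : k = .b
    · subst hk
      rcases hi : x.isNum with _ | i
      · exact ih.right _ _
      · exact ih.start_pow i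
    · rw [contract_of_ne hk, contract_of_ne hk]
      exact ih.right _ _

/-- Two reducts of `x` have convertible normalisations, and `Conv` implies joinability. -/
theorem confluent_of_halts (hc : ∀ i, [] ∈ c.eval [n, i]) (x y y' : T)
    (hy : Red (rules c n) x y) (hy' : Red (rules c n) x y') :
    ∃ d, Red (rules c n) y d ∧ Red (rules c n) y' d := by
  have key : ∀ {y}, Red (rules c n) x y → Conv c n (norm c n x) (norm c n y) := by
    intro y h
    induction h with
    | refl => exact .refl _
    | tail _ h ih => exact ih.trans (conv_norm_of_step hc h)
  rcases (key hy).symm.trans (key hy') with h | h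
  · exact ⟨_, (red_norm y).trans h.1, red_norm y'⟩
  · exact ⟨bot, (red_norm y).trans h.1, (red_norm y').trans h.2⟩

end Hard

/-! ### Non-confluence when some evaluation diverges -/

namespace Hard

open Turing.ToPartrec (Code)
open T

/-- Big-step evaluation of programs on data: `Ev e v d` says that the program `e` turns `v`
into `d`. -/
inductive Ev : V → V → V → Prop
  | zero (v : V) : Ev .z v (.p .z v)
  | succ (a v : V) : Ev .nil (.p a v) (.p (.s a) .nil)
  | succ_nil : Ev .nil .nil (.p (.s .z) .nil)
  | tail (a v : V) : Ev (.s .z) (.p a v) v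
  | tail_nil : Ev (.s .z) .nil .nil
  | comp {f g v w d : V} : Ev g v w → Ev f w d → Ev (.p .z (.p f g)) v d
  | cons {f g v a u w : V} : Ev f v (.p a u) → Ev g v w → Ev (.p (.s .z) (.p f g)) v (.p a w)
  | cons_nil {f g v w : V} : Ev f v .nil → Ev g v w → Ev (.p (.s .z) (.p f g)) v (.p .z w)
  | case_nil {f d : V} (g : V) : Ev f .nil d → Ev (.p (.s (.s .z)) (.p f g)) .nil d
  | case_zero {f v d : V} (g : V) : Ev f v d → Ev (.p (.s (.s .z)) (.p f g)) (.p .z v) d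
  | case_succ {g a v d : V} (f : V) : Ev g (.p a v) d →
      Ev (.p (.s (.s .z)) (.p f g)) (.p (.s a) v) d
  | fix_nil {f v : V} : Ev f v .nil → Ev (.p .nil f) v .nil
  | fix_zero {f v w : V} : Ev f v (.p .z w) → Ev (.p .nil f) v w
  | fix_succ {f v a w d : V} : Ev f v (.p (.s a) w) → Ev (.p .nil f) w d → Ev (.p .nil f) v d

/-- The interpretation of the binary symbols as partial operations on data. -/
inductive Rel : Op → V → V → V → Prop
  | p (a d : V) : Rel .p a d (.p a d)
  | ev {e v d : V} : Ev e v d → Rel .ev e v d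
  | del (a d : V) : Rel .del a d d
  | cs (a u w : V) : Rel .cs (.p a u) w (.p a w)
  | cs_nil (w : V) : Rel .cs .nil w (.p .z w)
  | fx_nil (f : V) : Rel .fx f .nil .nil
  | fx_zero (f w : V) : Rel .fx f (.p .z w) w
  | fx_succ {f a w d : V} : Ev (.p .nil f) w d → Rel .fx f (.p (.s a) w) d

/-- The (partial, strict) value of a term. -/
def Val : T → V → Prop
  | var _, _ => False
  | bot, _ => False
  | z, d => d = .z
  | nil, d => d = .nil
  | s x, d => ∃ a, Val x a ∧ d = .s a
  | T.h _, _ => False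
  | bin k x y, d => ∃ a e, Val x a ∧ Val y e ∧ Rel k a e d

section inversion

variable {a e d f g v : V}

theorem rel_p : Rel .p a e d ↔ d = .p a e :=
  ⟨by rintro ⟨⟩; rfl, by rintro rfl; exact .p _ _⟩

theorem rel_ev : Rel .ev e v d ↔ Ev e v d :=
  ⟨by rintro ⟨⟩; assumption, .ev⟩

theorem rel_del : Rel .del a e d ↔ d = e :=
  ⟨by rintro ⟨⟩; rfl, by rintro rfl; exact .del _ _⟩

theorem rel_cs : Rel .cs a e d ↔ (∃ u w, a = .p u w ∧ d = .p u e) ∨ a = .nil ∧ d = .p .z e := by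
  constructor
  · rintro ⟨⟩ <;> simp
  · rintro (⟨u, w, rfl, rfl⟩ | ⟨rfl, rfl⟩)
    exacts [.cs _ _ _, .cs_nil _]

theorem rel_fx : Rel .fx f e d ↔ e = .nil ∧ d = .nil ∨ e = .p .z d ∨
    ∃ a w, e = .p (.s a) w ∧ Ev (.p .nil f) w d := by
  constructor
  · rintro ⟨⟩ <;> simp_all
  · rintro (⟨rfl, rfl⟩ | rfl | ⟨a, w, rfl, h⟩)
    exacts [.fx_nil _, .fx_zero _ _, .fx_succ h]

theorem ev_zero : Ev .z v d ↔ d = .p .z v :=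
  ⟨by rintro ⟨⟩; rfl, by rintro rfl; exact .zero _⟩

theorem ev_succ : Ev .nil v d ↔
    (∃ a u, v = .p a u ∧ d = .p (.s a) .nil) ∨ v = .nil ∧ d = .p (.s .z) .nil := by
  constructor
  · rintro ⟨⟩ <;> simp
  · rintro (⟨a, u, rfl, rfl⟩ | ⟨rfl, rfl⟩)
    exacts [.succ _ _, .succ_nil]

theorem ev_tail : Ev (.s .z) v d ↔ (∃ a, v = .p a d) ∨ v = .nil ∧ d = .nil := by
  constructor
  · rintro ⟨⟩ <;> simp
  · rintro (⟨a, rfl⟩ | ⟨rfl, rfl⟩)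
    exacts [.tail _ _, .tail_nil]

theorem ev_comp : Ev (.p .z (.p f g)) v d ↔ ∃ w, Ev g v w ∧ Ev f w d :=
  ⟨by rintro ⟨⟩; exact ⟨_, ‹_›, ‹_›⟩, fun ⟨_, hg, hf⟩ => .comp hg hf⟩

theorem ev_cons : Ev (.p (.s .z) (.p f g)) v d ↔ ∃ a w, Ev f v a ∧ Ev g v w ∧ Rel .cs a w d := by
  constructor
  · rintro (_ | _)
    exacts [⟨_, _, ‹_›, ‹_›, .cs _ _ _⟩, ⟨_, _, ‹_›, ‹_›, .cs_nil _⟩]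
  · rintro ⟨a, w, h, h', ⟨⟩⟩
    exacts [.cons h h', .cons_nil h h']

theorem ev_case : Ev (.p (.s (.s .z)) (.p f g)) v d ↔ v = .nil ∧ Ev f .nil d ∨
    (∃ w, v = .p .z w ∧ Ev f w d) ∨ ∃ a w, v = .p (.s a) w ∧ Ev g (.p a w) d := by
  constructor
  · rintro ⟨⟩ <;> simp_all
  · rintro (⟨rfl, h⟩ | ⟨w, rfl, h⟩ | ⟨a, w, rfl, h⟩)
    exacts [.case_nil _ h, .case_zero _ h, .case_succ _ h]

theorem ev_fix : Ev (.p .nil f) v d ↔ ∃ w, Ev f v w ∧ Rel .fx f w d := by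
  constructor
  · rintro (_ | _)
    exacts [⟨_, ‹_›, .fx_nil _⟩, ⟨_, ‹_›, .fx_zero _ _⟩, ⟨_, ‹_›, .fx_succ ‹_›⟩]
  · rintro ⟨w, h, h'⟩; cases h'
    exacts [.fix_nil h, .fix_zero h, .fix_succ h ‹_›]

end inversion

theorem Ev.unique {e v d d' : V} (h : Ev e v d) (h' : Ev e v d') : d = d' := by
  induction h generalizing d' with
  | fix_succ _ _ ih ih' => cases h' <;> grind
  | _ => cases h' <;> grind

theorem Rel.unique {k : Op} {a e d d' : V} (h : Rel k a e d) (h' : Rel k a e d') : d = d' := by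
  cases h with
  | ev h => cases h' with | ev h' => exact h.unique h'
  | fx_succ h => cases h' with | fx_succ h' => exact h.unique h'
  | _ => cases h'; rfl

theorem Val.unique {t : T} {d d' : V} (h : Val t d) (h' : Val t d') : d = d' := by
  induction t generalizing d d' with
  | bin k x y ihx ihy =>
    obtain ⟨a, e, ha, he, h⟩ := h
    obtain ⟨a', e', ha', he', h'⟩ := h'
    obtain rfl := ihx ha ha'
    obtain rfl := ihy he he'
    exact h.unique h'
  | s x ih =>
    obtain ⟨a, ha, rfl⟩ := h
    obtain ⟨a', ha', rfl⟩ := h'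
    rw [ih ha ha']
  | _ => simp_all [Val]

/-- Both sides of an equation have the same values. -/
theorem val_eqs {l r : T} (h : (l, r) ∈ eqs) (σ : ℕ → T) (d : V) :
    Val (l.subst σ) d ↔ Val (r.subst σ) d := by
  simp only [eqs, List.mem_cons, List.not_mem_nil, or_false, Prod.mk.injEq] at h
  rcases h with ⟨rfl, rfl⟩ | ⟨rfl, rfl⟩ | ⟨rfl, rfl⟩ | ⟨rfl, rfl⟩ | ⟨rfl, rfl⟩ | ⟨rfl, rfl⟩ |
    ⟨rfl, rfl⟩ | ⟨rfl, rfl⟩ | ⟨rfl, rfl⟩ | ⟨rfl, rfl⟩ | ⟨rfl, rfl⟩ | ⟨rfl, rfl⟩ | ⟨rfl, rfl⟩ |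
    ⟨rfl, rfl⟩ | ⟨rfl, rfl⟩ | ⟨rfl, rfl⟩ | ⟨rfl, rfl⟩ | ⟨rfl, rfl⟩ | ⟨rfl, rfl⟩ | ⟨rfl, rfl⟩ |
    ⟨rfl, rfl⟩ | ⟨rfl, rfl⟩ <;>
    simp only [subst, Val, rel_p, rel_ev, rel_del]
  all_goals constructor <;> grind [ev_zero, ev_succ, ev_tail, ev_comp, ev_cons, ev_case, ev_fix,
    rel_cs, rel_fx, Val.unique]

end Hard

namespace Hard

open Turing.ToPartrec (Code)
open T

theorem V.lst_eq_nil {v : List ℕ} (h : V.lst v = .nil) : v = [] := by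
  cases v <;> simp_all [lst]

theorem V.lst_eq_p {v : List ℕ} {x y : V} (h : V.lst v = .p x y) :
    ∃ a u, v = a :: u ∧ x = V.num a ∧ y = V.lst u := by
  cases v with
  | nil => simp [lst] at h
  | cons a u => exact ⟨a, u, rfl, by simp_all [lst]⟩

theorem V.num_eq_z {a : ℕ} (h : V.z = V.num a) : a = 0 := by
  cases a <;> simp_all [num]

theorem V.num_eq_s {a : ℕ} {x : V} (h : V.s x = V.num a) : ∃ i, a = i + 1 ∧ x = V.num i := by
  cases a with
  | zero => simp [num] at h
  | succ i => exact ⟨i, rfl, by simpa [num] using h⟩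

/-- The big-step semantics agrees with `Code.eval` on represented programs and lists. -/
theorem ev_sound (e : Code) {v : List ℕ} {d : V} (h : Ev (V.cod e) (V.lst v) d) :
    ∃ w ∈ e.eval v, d = V.lst w := by
  induction e generalizing v d with
  | zero' => exact ⟨0 :: v, by simp, ev_zero.1 h⟩
  | succ =>
    rcases ev_succ.1 h with ⟨a, u, hv, rfl⟩ | ⟨hv, rfl⟩
    · obtain ⟨a, u, rfl, rfl, rfl⟩ := V.lst_eq_p hv
      exact ⟨[a + 1], by simp, rfl⟩
    · obtain rfl := V.lst_eq_nil hv
      exact ⟨[1], by simp, rfl⟩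
  | tail =>
    rcases ev_tail.1 h with ⟨a, hv⟩ | ⟨hv, rfl⟩
    · obtain ⟨a, u, rfl, rfl, rfl⟩ := V.lst_eq_p hv
      exact ⟨u, by simp, rfl⟩
    · obtain rfl := V.lst_eq_nil hv
      exact ⟨[], by simp, rfl⟩
  | comp f g ihf ihg =>
    obtain ⟨w, hg, hf⟩ := ev_comp.1 h
    obtain ⟨u, hu, rfl⟩ := ihg hg
    obtain ⟨w, hw, rfl⟩ := ihf hf
    refine ⟨w, ?_, rfl⟩
    rw [Code.comp_eval]
    exact Part.mem_bind hu hw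
  | cons f g ihf ihg =>
    obtain ⟨a, w, hf, hg, hr⟩ := ev_cons.1 h
    obtain ⟨u, hu, rfl⟩ := ihf hf
    obtain ⟨w, hw, rfl⟩ := ihg hg
    refine ⟨u.headI :: w, ?_, ?_⟩
    · simp only [Code.cons_eval, Part.bind_eq_bind, Part.mem_bind_iff, Part.pure_eq_some,
        Part.mem_some_iff]
      exact ⟨u, hu, w, hw, rfl⟩
    · rcases rel_cs.1 hr with ⟨x, y, hv, rfl⟩ | ⟨hv, rfl⟩
      · obtain ⟨a, u, rfl, rfl, rfl⟩ := V.lst_eq_p hv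
        rfl
      · obtain rfl := V.lst_eq_nil hv
        rfl
  | case f g ihf ihg =>
    simp only [Code.case_eval]
    rcases ev_case.1 h with ⟨hv, hf⟩ | ⟨u, hv, hf⟩ | ⟨a, u, hv, hg⟩
    · obtain rfl := V.lst_eq_nil hv
      exact ihf (v := []) hf
    · obtain ⟨a, u, rfl, ha, rfl⟩ := V.lst_eq_p hv
      obtain rfl := V.num_eq_z ha
      exact ihf hf
    · obtain ⟨a, u, rfl, ha, rfl⟩ := V.lst_eq_p hv
      obtain ⟨a, rfl, rfl⟩ := V.num_eq_s ha
      exact ihg (v := a :: u) hg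
  | fix f ihf =>
    have step : ∀ v u, u ∈ f.eval v → (if u.headI = 0 then Sum.inl u.tail else Sum.inr u.tail) ∈
        (f.eval v).map fun v => if v.headI = 0 then Sum.inl v.tail else Sum.inr v.tail :=
      fun v u hu => (Part.mem_map_iff _).2 ⟨u, hu, rfl⟩
    -- induction on the derivation, that is, on the number of iterations
    have key : ∀ {E U d}, Ev E U d → E = .p .nil (V.cod f) → ∀ v, U = V.lst v →
        ∃ w ∈ f.fix.eval v, d = V.lst w := by
      intro E U d h
      rw [Code.fix_eval]
      induction h with
      | fix_nil h =>
        intro he v hv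
        cases he
        subst hv
        obtain ⟨u, hu, hd⟩ := ihf h
        obtain rfl := V.lst_eq_nil hd.symm
        exact ⟨[], PFun.mem_fix_iff.2 (.inl (step _ _ hu)), rfl⟩
      | fix_zero h =>
        intro he v hv
        cases he
        subst hv
        obtain ⟨u, hu, hd⟩ := ihf h
        obtain ⟨a, u, rfl, ha, rfl⟩ := V.lst_eq_p hd.symm
        obtain rfl := V.num_eq_z ha
        exact ⟨u, PFun.mem_fix_iff.2 (.inl (step _ _ hu)), rfl⟩
      | fix_succ h _ _ ih =>
        intro he v hv
        cases he
        subst hv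
        obtain ⟨u, hu, hd⟩ := ihf h
        obtain ⟨a, u, rfl, ha, rfl⟩ := V.lst_eq_p hd.symm
        obtain ⟨a, rfl, -⟩ := V.num_eq_s ha
        obtain ⟨w, hw, rfl⟩ := ih rfl u rfl
        exact ⟨w, PFun.mem_fix_iff.2 (.inr ⟨u, step _ _ hu, hw⟩), rfl⟩
      | _ => intro he; cases he
    exact key h rfl v rfl

theorem val_toT {v d : V} : Val v.toT d ↔ d = v := by
  induction v generalizing d with
  | z => rfl
  | nil => rfl
  | s v ih => simp [V.toT, Val, ih]
  | p v w ihv ihw => simp [V.toT, Val, ihv, ihw, rel_p]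

theorem T.clean_subst {σ : ℕ → T} {l : T} : (l.subst σ).clean = true ↔
    l.clean = true ∧ ∀ m ∈ l.vars, (σ m).clean = true := by
  induction l with
  | bin k x y ihx ihy =>
    simp only [subst, clean_bin, vars, List.mem_append, ihx, ihy]
    grind
  | _ => simp_all [subst, clean, vars]

variable {c : Code} {n : ℕ}

/-- Steps from clean terms are steps with the equations of the evaluator, hence lead to clean
terms and preserve values. -/
theorem step_clean {x y : T} (h : Step (rules c n) x y) (hx : x.clean = true) :
    y.clean = true ∧ ∀ d, Val x d ↔ Val y d := by
  induction h with
  | rule l r σ h =>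
    obtain ⟨hl, hσ⟩ := T.clean_subst.1 hx
    rcases mem_rules h with (h | h) | ⟨rfl, rfl⟩ | ⟨rfl, rfl⟩ | ⟨rfl, rfl⟩ | ⟨rfl, rfl⟩ |
      ⟨rfl, rfl⟩ | ⟨rfl, rfl⟩ | ⟨rfl, rfl⟩ | ⟨k, rfl, rfl⟩ | ⟨k, rfl, rfl⟩
    · exact ⟨T.clean_subst.2 ⟨(eqs_clean _ h).2, fun m hm => hσ m ((eqs_vars _ h).2 m hm)⟩,
        val_eqs h σ⟩
    · exact ⟨T.clean_subst.2 ⟨(eqs_clean _ h).1, fun m hm => hσ m ((eqs_vars _ h).1 m hm)⟩,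
        fun d => (val_eqs h σ d).symm⟩
    all_goals first | simp [clean] at hl | (cases k <;> simp [clean] at hl)
  | s _ ih =>
    obtain ⟨h1, h2⟩ := ih hx
    exact ⟨h1, fun d => by simp only [Val, h2]⟩
  | h _ ih => simp [clean] at hx
  | binL k y _ ih =>
    obtain ⟨hk, hl, hr⟩ := clean_bin.1 hx
    obtain ⟨h1, h2⟩ := ih hl
    exact ⟨clean_bin.2 ⟨hk, h1, hr⟩, fun d => by simp only [Val, h2]⟩
  | binR k x _ ih =>
    obtain ⟨hk, hl, hr⟩ := clean_bin.1 hx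
    obtain ⟨h1, h2⟩ := ih hr
    exact ⟨clean_bin.2 ⟨hk, hl, h1⟩, fun d => by simp only [Val, h2]⟩

theorem not_step_bot {y : T} : ¬ Step (rules c n) bot y := by
  intro h
  generalize hx : bot = x at h
  cases h with
  | rule l r σ h =>
    rcases mem_rules h with (h | h) | ⟨rfl, rfl⟩ | ⟨rfl, rfl⟩ | ⟨rfl, rfl⟩ | ⟨rfl, rfl⟩ |
      ⟨rfl, rfl⟩ | ⟨rfl, rfl⟩ | ⟨rfl, rfl⟩ | ⟨k, rfl, rfl⟩ | ⟨k, rfl, rfl⟩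
    · simpa [← hx, T.inner] using inner_subst (eqs_inner _ h).1 σ
    · simpa [← hx, T.inner] using inner_subst (eqs_inner _ h).2 σ
    all_goals cases hx
  | _ => cases hx

/-- Steps from `h x` with `x` clean and without value take place inside `x`. -/
theorem step_h {x y : T} (hx : x.clean = true) (hv : ∀ d, ¬ Val x d)
    (h : Step (rules c n) (T.h x) y) : ∃ x', y = T.h x' ∧ x'.clean = true ∧ ∀ d, ¬ Val x' d := by
  generalize hu : T.h x = u at h
  cases h with
  | rule l r σ h =>
    rcases mem_rules h with (h | h) | ⟨rfl, rfl⟩ | ⟨rfl, rfl⟩ | ⟨rfl, rfl⟩ | ⟨rfl, rfl⟩ |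
      ⟨rfl, rfl⟩ | ⟨rfl, rfl⟩ | ⟨rfl, rfl⟩ | ⟨k, rfl, rfl⟩ | ⟨k, rfl, rfl⟩
    · simpa [← hu, T.inner] using inner_subst (eqs_inner _ h).1 σ
    · simpa [← hu, T.inner] using inner_subst (eqs_inner _ h).2 σ
    · cases hu
    · cases hu
    · cases hu
    · cases hu
    · cases hu
      exact absurd rfl (hv .nil)
    · cases hu
    · cases hu
      simp [subst, clean] at hx
    · cases hu
    · cases hu
  | h h' =>
    cases hu
    obtain ⟨h1, h2⟩ := step_clean h' hx
    exact ⟨_, rfl, h1, fun d hd => hv d ((h2 d).2 hd)⟩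
  | _ => cases hu

/-- If `c` diverges on `[n, i]`, the two exits of the walk from `b (s^i z) z` lead to terms
without common reduct. -/
theorem not_confluent_of_diverges {i : ℕ} (hi : ∀ w, w ∉ c.eval [n, i]) :
    ∃ x y y' : T, Red (rules c n) x y ∧ Red (rules c n) x y' ∧
      ¬ ∃ d, Red (rules c n) y d ∧ Red (rules c n) y' d := by
  refine ⟨b (pow i z) z, bot, start c n (pow i z), ?_, ?_, ?_⟩
  · exact .single (.rule (b (var 0) z) bot (sub [pow i z]) (exits_subset c n (by simp [exits])))
  · have := Step.rule (L := rules c n) _ _ (sub [pow i z]) (List.mem_cons_self)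
    rw [start_subst] at this
    exact (red_walk i z).tail this
  · rintro ⟨d, h1, h2⟩
    have hd : d = bot := by
      rcases Relation.ReflTransGen.cases_head h1 with h | ⟨_, h, -⟩
      · exact h.symm
      · exact absurd h not_step_bot
    have key : ∀ y, Red (rules c n) (start c n (pow i z)) y →
        ∃ x', y = T.h x' ∧ x'.clean = true ∧ ∀ d, ¬ Val x' d := by
      intro y h
      induction h with
      | refl =>
        refine ⟨_, rfl, by simp [clean, pow_z, clean_toT], fun d hd => ?_⟩
        obtain ⟨a, e, ha, he, hr⟩ := hd
        obtain rfl := val_toT.1 ha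
        have hl : Val (V.lst [n, i]).toT e := by
          rw [pow_z] at he
          exact he
        obtain rfl := val_toT.1 hl
        obtain ⟨w, hw, -⟩ := ev_sound c (rel_ev.1 hr)
        exact hi w hw
      | tail _ h ih =>
        obtain ⟨x', rfl, hcl, hv⟩ := ih
        exact step_h hcl hv h
    obtain ⟨x', he, -⟩ := key d h2
    rw [hd] at he
    cases he

end Hard

/-! ### The reduction -/

namespace Hard

open Turing.ToPartrec (Code)
open T

theorem primrec_num : Primrec fun n => (V.num n).toT.emb := by
  refine (Primrec.nat_rec₁ (f := fun _ t => Term.app 3 [t]) (.app 1 []) ?_).of_eq fun n => ?_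
  · exact (Term.primrec_app.comp (.const 3) (Primrec.list_cons.comp .snd (.const []))).to₂
  · induction n with
    | zero => rfl
    | succ n ih => exact congrArg (fun t => Term.app 3 [t]) ih

theorem primrec_bin (k : ℕ) {f g : ℕ → Term} (hf : Primrec f) (hg : Primrec g) :
    Primrec fun n => Term.app k [f n, g n] :=
  Term.primrec_app.comp (.const k)
    (Primrec.list_cons.comp hf (Primrec.list_cons.comp hg (.const [])))

/-- Only the rule that starts the evaluation depends on `n`, and only through a numeral. -/
theorem primrec_rules (c : Code) : Primrec fun n => embRules (rules c n) := by
  have hs : Primrec fun n => (start c n (var 0)).emb :=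
    Term.primrec_app.comp (.const 9) (Primrec.list_cons.comp
      (primrec_bin 5 (.const (V.cod c).toT.emb)
        (primrec_bin 4 primrec_num (.const (p (var 0) nil).emb))) (.const []))
  exact Primrec.list_cons.comp (Primrec.pair (.const (b z (var 0)).emb) hs)
    (.const (embRules base))

theorem encode_mem_iff (c : Code) (n : ℕ) :
    Encodable.encode (sig, embRules (rules c n)) ∈ CRSet ↔
      ∀ t, WFTerm sig t → CRon (embRules (rules c n)) t := by
  constructor
  · rintro ⟨sig', R', -, he, h⟩
    rw [code_eq (sig', R')] at he
    obtain ⟨rfl, rfl⟩ := Prod.mk.inj (Encodable.encode_injective he)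
    exact h
  · intro h
    exact ⟨_, _, wftrs_embRules (good_rules c n), (code_eq (sig, _)).symm, h⟩

/-- Every `Π⁰₂` set is described by the termination of one program on all inputs `[n, x]`; the
program can be chosen to return the empty list whenever it halts. -/
theorem exists_program {B : Set ℕ} (hB : Pi02 B) : ∃ c : Code, ∀ n,
    (n ∈ B → ∀ x, [] ∈ c.eval [n, x]) ∧ (n ∉ B → ∃ x, ∀ w, w ∉ c.eval [n, x]) := by
  obtain ⟨p, hp, hB⟩ := hB
  let f : ℕ → ℕ → Part ℕ := fun n x => Nat.rfind fun y => Part.some (p n x y)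
  have hf : Partrec₂ f := by
    refine Partrec.rfind (p := fun (a : ℕ × ℕ) y => (Part.some (p a.1 a.2 y) : Part Bool)) ?_
    exact (hp.comp (Computable.pair (Computable.fst.comp .fst)
      (Computable.pair (Computable.snd.comp .fst) .snd))).partrec
  obtain ⟨c₀, hc₀⟩ := Code.exists_code (Nat.Partrec'.part_iff₂.2 hf)
  have he : ∀ n x, (Code.comp .tail c₀).eval [n, x] = (f n x).bind fun _ => Part.some [] := by
    intro n x
    have h0 : c₀.eval [n, x] = (f n x).map fun a => [a] := hc₀ ⟨[n, x], rfl⟩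
    rw [Code.comp_eval]
    change (c₀.eval [n, x]).bind _ = _
    rw [h0]
    refine (Part.bind_map _ _ _).trans ?_
    simp
  have hdom : ∀ n x, (f n x).Dom ↔ ∃ y, p n x y = true := by
    intro n x
    refine Nat.rfind_dom'.trans ?_
    constructor
    · rintro ⟨y, hy, -⟩
      exact ⟨y, (Part.mem_some_iff.1 hy).symm⟩
    · rintro ⟨y, hy⟩
      exact ⟨y, Part.mem_some_iff.2 hy.symm, fun _ => trivial⟩
  refine ⟨.comp .tail c₀, fun n => ⟨fun hn x => ?_, fun hn => ?_⟩⟩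
  · rw [he]
    exact Part.mem_bind (Part.get_mem ((hdom n x).2 ((hB n).1 hn x))) (Part.mem_some _)
  · rw [hB, not_forall] at hn
    obtain ⟨x, hx⟩ := hn
    refine ⟨x, fun w hw => hx ?_⟩
    rw [he] at hw
    obtain ⟨y, hy, -⟩ := Part.mem_bind_iff.1 hw
    exact (hdom n x).1 (Part.dom_iff_mem.2 ⟨y, hy⟩)

/-- The rewriting systems `rules c n`, for a program `c` describing `B`, reduce `B` to `CRSet`. -/
theorem reduction {B : Set ℕ} (hB : Pi02 B) : ManyOneRed B CRSet := by
  obtain ⟨c, hc⟩ := exists_program hB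
  refine ⟨fun n => Encodable.encode (sig, embRules (rules c n)), ?_, fun n => ?_⟩
  · exact (Primrec.encode.comp (Primrec.pair (.const sig) (primrec_rules c))).to_comp
  · rw [encode_mem_iff, cr_iff (good_rules c n)]
    constructor
    · exact fun hn => confluent_of_halts ((hc n).1 hn)
    · intro h
      by_contra hn
      obtain ⟨x, hx⟩ := (hc n).2 hn
      obtain ⟨t, y, y', hy, hy', hd⟩ := not_confluent_of_diverges hx
      exact hd (h t y y' hy hy')

end Hard

/-- Uniform confluence (on every term over the signature) of a finite TRS
is Π⁰₂-complete. -/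
theorem cr_uniform_Pi02Complete :
    Pi02Complete { n : ℕ | ∃ (sig : List (ℕ × ℕ)) (R : List (Term × Term)),
      WFTRS sig R ∧ n = Nat.pair (encodeSig sig) (encodeTRS R) ∧
      ∀ t : Term, WFTerm sig t → CRon R t } := by
  exact ⟨pi02_CRSet, fun _ hB => Hard.reduction hB⟩
end
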